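/- arXiv:1703.02848 — 2 statements merged into one kernel-verified Lean document; each statement's English description precedes it below -/
import Mathlib

section
/- Let n = 55 and let x, y ∈ S_55 be the permutations given in the context, with z = (x·y)⁻¹. Then (x, y, z) is a nice triple; the cycle types of x, y, z are 4^13, 2^25 and 6^8·3^1·2^2 respectively; and the subgroup ⟨x, y⟩ of S_55 has cardinality 1320 (the order of PGL(2,11)). -/
/-- `permInd s` = (sum of the cycle type of `s`) − (number of entries of the cycle type of `s`),
i.e. `n` minus the number of cycles of `s` when fixed points are counted as cycles. -/
def permInd {n : ℕ} (s : Equiv.Perm (Fin n)) : ℕ :=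
  s.cycleType.sum - Multiset.card s.cycleType

/-- A `MulAction` is preprimitive if it is pretransitive and every block is trivial. -/
def IsPreprimitive (G : Type*) (X : Type*) [Group G] [MulAction G X] : Prop :=
  MulAction.IsPretransitive G X ∧
    ∀ B : Set X, MulAction.IsBlock G B → MulAction.IsTrivialBlock B

/-- A triple `(x, y, z)` of permutations in `S_n` is *nice*:
(i) `x * y * z = 1`; (ii) `G = ⟨x, y⟩` is neither the alternating nor the symmetric group;
(iii) `G` acts primitively on `Fin n` and is almost simple; (iv) the triple has genus 0;
(v) the triple is rigid in `G`; (vi) `x`, `y`, `z` lie in rational conjugacy classes of `G`. -/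
def IsNice {n : ℕ} (x y z : Equiv.Perm (Fin n)) : Prop :=
  x * y * z = 1 ∧
  (Subgroup.closure {x, y} ≠ alternatingGroup (Fin n) ∧
    Subgroup.closure {x, y} ≠ ⊤) ∧
  IsPreprimitive (Subgroup.closure {x, y}) (Fin n) ∧
  (∃ S : Subgroup (Subgroup.closure {x, y}), S.Normal ∧ IsSimpleGroup S ∧
    (∃ a b : S, a * b ≠ b * a) ∧
    Subgroup.centralizer (S : Set (Subgroup.closure {x, y})) = ⊥) ∧
  permInd x + permInd y + permInd z = 2 * (n - 1) ∧
  (∀ x' y' z' : Equiv.Perm (Fin n),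
    x' * y' * z' = 1 →
    Subgroup.closure {x', y'} = Subgroup.closure {x, y} →
    (∃ g ∈ Subgroup.closure {x, y}, g * x * g⁻¹ = x') →
    (∃ g ∈ Subgroup.closure {x, y}, g * y * g⁻¹ = y') →
    (∃ g ∈ Subgroup.closure {x, y}, g * z * g⁻¹ = z') →
    ∃ g ∈ Subgroup.closure {x, y},
      g * x * g⁻¹ = x' ∧ g * y * g⁻¹ = y' ∧ g * z * g⁻¹ = z') ∧
  ∀ g ∈ ({x, y, z} : Set (Equiv.Perm (Fin n))), ∀ k : ℤ,
    Int.gcd k (orderOf g) = 1 →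
    ∃ h ∈ Subgroup.closure {x, y}, h * g * h⁻¹ = g ^ k

/-- The permutation given by a list of (disjoint) cycles, each written as a list of points. -/
def permOfCycles {n : ℕ} (cs : List (List (Fin n))) : Equiv.Perm (Fin n) :=
  (cs.map List.formPerm).prod

def x : Equiv.Perm (Fin 55) := permOfCycles [
  [2, 54, 55, 3],
  [4, 42, 33, 47],
  [5, 46, 48, 41],
  [6, 27, 49, 50],
  [7, 17, 38, 26],
  [8, 37, 36, 22],
  [9, 30, 32, 51],
  [10, 21, 19, 35],
  [11, 44, 39, 20],
  [12, 45, 31, 34],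
  [13, 52, 40, 53],
  [14, 23, 29, 28],
  [15, 16, 18, 25]]

def y : Equiv.Perm (Fin 55) := permOfCycles [
  [1, 22],
  [2, 34],
  [3, 41],
  [4, 39],
  [5, 50],
  [6, 52],
  [8, 42],
  [9, 54],
  [10, 27],
  [11, 23],
  [12, 24],
  [14, 44],
  [15, 49],
  [16, 33],
  [17, 35],
  [18, 37],
  [19, 32],
  [21, 40],
  [25, 46],
  [26, 47],
  [28, 48],
  [29, 45],
  [31, 38],
  [43, 53],
  [51, 55]]


/-! ### Codes for permutations of 55 points -/

namespace NT

open Equiv Equiv.Perm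

def dec (A i : ℕ) : ℕ := A / 64 ^ i % 64

def encL : List ℕ → ℕ
  | [] => 0
  | a :: l => a + 64 * encL l

def enc (p : Perm (Fin 55)) : ℕ := encL (List.ofFn fun i => (p i : ℕ))

def compA (A : ℕ) : ℕ → ℕ → ℕ
  | 0, _ => 0
  | n + 1, B => dec A (B % 64) + 64 * compA A n (B / 64)

def comp (A B : ℕ) : ℕ := compA A 55 B

theorem dec_encL (l : List ℕ) (hl : ∀ a ∈ l, a < 64) (i : ℕ) (hi : i < l.length) :
    dec (encL l) i = l[i] := by
  induction l generalizing i with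
  | nil => simp at hi
  | cons a l ih =>
    have ha : a < 64 := hl a (by simp)
    cases i with
    | zero => simp only [dec, encL]; simp; omega
    | succ i =>
      have h2 := ih (fun b hb => hl b (by simp [hb])) i (by simpa using hi)
      have h3 : (a + 64 * encL l) / 64 = encL l := by omega
      simp only [List.getElem_cons_succ]
      rw [← h2]
      simp only [dec, encL]
      rw [pow_succ', ← Nat.div_div_eq_div_mul, h3]

theorem dec_enc (p : Perm (Fin 55)) (i : Fin 55) : dec (enc p) i = p i := by
  unfold enc
  rw [dec_encL]
  · rw [List.getElem_ofFn]
  · intro a ha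
    rw [List.mem_ofFn] at ha
    obtain ⟨j, rfl⟩ := ha
    have := (p j).2
    omega
  · rw [List.length_ofFn]; exact i.2

theorem enc_inj {p q : Perm (Fin 55)} (h : enc p = enc q) : p = q := by
  ext i
  rw [← dec_enc, ← dec_enc, h]

theorem compA_encL (A : ℕ) (l : List ℕ) (hl : ∀ a ∈ l, a < 64) :
    compA A l.length (encL l) = encL (l.map (dec A)) := by
  induction l with
  | nil => rfl
  | cons a l ih =>
    have ha : a < 64 := hl a (by simp)
    have h3 : (a + 64 * encL l) / 64 = encL l := by omega
    have h4 : (a + 64 * encL l) % 64 = a := by omega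
    simp only [List.length_cons, compA, encL, List.map_cons, h3, h4]
    rw [ih fun b hb => hl b (by simp [hb])]

theorem enc_mul (p q : Perm (Fin 55)) : enc (p * q) = comp (enc p) (enc q) := by
  have h := compA_encL (enc p) (List.ofFn fun i => (q i : ℕ)) (by
    intro a ha
    rw [List.mem_ofFn] at ha
    obtain ⟨j, rfl⟩ := ha
    have := (q j).2
    omega)
  rw [List.length_ofFn] at h
  have h5 : (dec (enc p) ∘ fun i => (q i : ℕ)) = fun i => ((p * q) i : ℕ) := by
    funext i
    exact dec_enc p (q i)
  rw [List.map_ofFn, h5] at h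
  exact h.symm

def cX : ℕ := 7276893007905406539620278065607374024115276696194674982940864018958695652086392402520534659326019
def cY : ℕ := 330594066681655599267516109781060354150824624590184984411478362071403602488443067733279158198216115
def tws : List ℕ := [1, 5869, 7, 3, 1723, 13, 53, 955, 5819, 6, 181, 733, 27, 981, 221, 109, 237, 174, 493, 46, 1885, 437, 3821, 477, 43, 45, 443, 117, 93, 91, 14, 123, 30, 365, 11, 110, 1773, 749, 187, 861, 213, 5, 3771, 725, 349, 59, 29, 699, 61, 173, 21, 2, 85, 469, 15]
def tcs : List ℕ := [1874235251949363455477671976424043906164305677618497227584793608566452544791402750033552107597733952, 1404137580415415891221154923597274783560127420988898717616793362542231321467024956629092243044620737, 130741391560042089728134550352844363652446511040908535026329168915580979838820188209160238113751106, 7276893007905406539620278065607374024115276696194674982940864018958695652086392402520534659326019, 1341300977640779225656019607744546829612605811539723307013524017890031516670369989533997348530053188, 335508577874115609747255912390574454210756204199086850972998324356420503750613860778434084608270853, 14844653679672838067543071122611373864937245469108097199307672066092659879806401581984700650620998, 812109391372570911995574346939793640707850923907982503430761097786788301706381477174697114055778823, 701316922722487899428868217920483334980128800639019837629591311779179841088754946820347933384701320,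 1048461403091721563210650912704778394732509170665864280403481529967623738481328887179822976195674633, 1409671953517776436931582258085326900152535240101572397975504412508748828055440657053800886350907018, 951093770058836005721612086356181878195364700398673346449475892279928381487951647210074708979362443, 185659870342433111299630394410908115198528998466204171390822140762237079439801265865114722999243276, 1112766131444312643436061906924238725378098711603731968490611436504374250920775546380384206521455565, 1219525112458270052536251232448961905484339936320233789151475915601750004153113215603427124552676750, 1104089101292586246230610827571177739254689834026459818775883739893951750125265045453930725150701135, 1761878329433764153582442273530593866736548200458186653526232038060552025604272875582129674661700560, 1408362027193255842429860705959244330160683619794105539811383559476255125094790082080445645938946129, 312986852973499750801055541025931228560324346450277276724326689666003950733243317135610896736670738, 28344727653322245828632571790139687672906022226626636450019195519537586260276084107599805775243539, 916491855134642997320143262003016485733128383326616797841614692407064248827901475753340992471359572, 179427161784456558377262423102549571539079889177139038974998634998712694570739721004962966515495381, 129547381775018348463462697124331400627156919956568667639264567279601713959645031768352844563665174, 365142921230397916266273043108245677695628541788198565722459565133690415191260284040063970277335575, 1714574371604154374273823033700187074732250677104482689444305914668503769231282329388335295712946840, 1036634985740533848146069985237575544600768731299631252721895934921952970794024688548362617743553689,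 503133494121467060550502722097113176284624187365695294818511690997322301998138689957548886143677850, 128772295145783119428502554838557164121478894306015699658314343370121635332556741019569322757143515, 672531658631517294951541440237721935915021855439548654052763018451627447052782480240218254454819100, 862847048378136902593655722846311618408529683475624178619980075337386385332811231861746131291464861, 1116996423399070691515988269246521388594758638717818375306327482717016454397887785273683906181912926, 1667497905676004433051538195461265072197601031761121788163557155898725914063267774880309080564304159, 1766351591240812022836908393357950858038091545794127959177370588895801958761783949376185486469626144, 9473466352947091541731095281879150438846039594088858279606211100138521193655001783625203957480545, 1404774188349892971757372964213283346433686972166733052508763159862089509072226462065570018564191650, 109857062488072856387567455240677788663254382512419913011577608085392913201497106686832395637335459, 26309536733323431262689755836569630980207749006408452845859754240154341948187368915042418935684068, 1859972877187657603299334697922129140694129256928980994398958773610182799771772051670883456053577829, 960041467000691987184556550262439384085061669977000128074691716288773957205293026273720568660441382, 1305758759165921761158186262191282199628637162913099673991851167022877905347861536875541996839653479, 318821201701708423000256040802768261465096274768664060970034210951100819468677466706146377990550696, 1750089742947892887147087290571753071042596027509870808191281270971271714924401189278985931746481577, 692397484728126680990701020946772647241986031178410749456162463922696587898431475010483773859537002,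 1042650816151391579631628636790799598083898940689947532935362926883642363580373894389187631948348331, 609418599705422059514642164007146260613761481822739572231390226950798665094168676475765079559540844, 1598617767990005563076842553641831163201494771595552936172893306287132417522071150544486549711612269, 1046926177707348175565206276454541762362657406230238315680975700200371737229677114732153223100369262, 1517199972595597662929609927291183614356587455499326817736872672251709399128450684277907772718518383, 1122010916138442981305486263072142473226226028967262102323044631339055232386757954014741267195312432, 666693237781219388055346725695543901945331178615443719557318427100387873864134860207044105582222257, 1848970470445007062413310972592923878770032556174084824326247379805814656595437582891844115894495922, 330594066681655599267516109781060354150824624590184984411478362071403602488443067733279158198216115, 1748312495654471069913005684470086855339466814349195650200716220961664679600823980654404552832922676, 1035436812708740025244333558633581079145543186021532369117186032398161729981126275029079277560440437, 89824196147296939473471871033091694903643263424052842119165638516701092785171304010281673394499702]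
def hws : List ℕ := [1, 26, 182, 375, 727, 886, 3543, 2922, 5557, 15707, 15275, 13686, 30571, 28085, 89005, 93110, 241083, 220075, 240565, 187829, 374231, 372439, 357819, 382827]
def hcs : List ℕ := [1874235251949363455477671976424043906164305677618497227584793608566452544791402750033552107597733952, 1100743221867323531938840167879597089307609433707392377584432580717875579348401016401853201381951552, 926262900128301361602448600191151812258673739952400016629644205981193259603776091356021434100403264, 1313462118480444890584221501389510004085375720813355955109320605193939870742891866097200688838592768, 439076698660399708681234449022403079697480806038257899478675775805957818396803417624607837294732928, 1821866896282989213880428161911833461043060776614307490574899848326244640351205541591039352602020800, 1555384664856494144436323576595194246625161938546665402270760346125073187388267210073800956819080448, 180136386201230321580653038070679235667456967038997325061103640040526310567370920307808892651598016, 1694260329718899636018901178715125923111037677723273704661849218464610124617432174989471833932007104, 1421923045004455284291741362652338416946470294092659600490778070992133947271168215013624780716013376, 1393561384897561440519508219077623997468434575323440148500259183043541609900850392780155974254371200, 446215314738981657905668956361048922610703480133098044380803662112450889167676941702831288581801024, 916211937674407399920502331075359094939468581324477238289178970008833358224006970425363911762080512, 1606923044004777475161942575501034130368925487911057512526604466279228533187678103904115238105369920,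 226986753963621684955735171929232664524914446973301543244935859247327921687035121946787522045028864, 599000142271902898095495247702873479463743060858366884410087699898481392484065394247373331152249664, 1245848626676331048356475040769717935641461617514866309027251858248458033972928984536974398493886848, 1768504224291310098471696687611006631031441600065737226843120386374269275000682691920734877022749888, 1138740239113405764628708095213316715780974809478662919765517784038599747233243624510784390174648320, 48154061196834186391591935426259558985328648612040433325689528714268044818676389819305972985789824, 686513042033619768683285611349133477260674775102633050302513598375490941781100722882051277500021568, 655839939437752081089968013864994095003962611940170114479603046824763115856138850835363048797080768, 126820211813605363366418284643569276080016620120487205528256446677934639503352725385692432072819008, 1012770135718674872365912627878114418645054843183006748584437407121747989448093306876831144135457344]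
def ixx : List ℕ := [0, 5, 0, 0, 0, 0, 0, 4, 22, 0, 0, 23, 0, 0, 0, 0, 0, 5, 0, 0, 22, 8, 23, 10, 10, 0, 0, 12, 0, 9, 0, 0, 0, 20, 0, 20, 0, 0, 0, 0, 0, 0, 8, 5, 0, 0, 0, 0, 0, 12, 0, 0, 0, 0, 0]
def ixy : List ℕ := [0, 0, 0, 0, 22, 0, 0, 16, 0, 1, 0, 0, 0, 18, 0, 0, 0, 0, 0, 0, 16, 8, 0, 0, 0, 0, 0, 0, 0, 0, 2, 0, 0, 0, 0, 0, 18, 0, 0, 23, 20, 0, 0, 0, 0, 0, 0, 0, 0, 0, 0, 0, 0, 0, 3]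
def ycs : List ℕ := [6788944543542038815036253407587294193259611594988032949643767793922098793129759950082794615331446, 48154061196834186391591935426259558985328648612040433325689528714268044818676389819305972985789824, 73059604310294164506520521730111673159167353672452077052694219085835002976338047661072771262147598, 141879573392830125468529147909152757816262638214942986753570012709739580828306574934414270010077960, 145361222069279971190041249741568181607096171042825622839927547223878293957377190657201392531959877, 148865814699751433334857085696672788138164122061677409866057325101514325344794619425834552112193940, 172628589979625372774379176686381572011313328207412137493158083233820015792642530011252307887830363, 233404334773368979607614659655775675099064353935184309061808136893008207531099222509426020715500200, 260802242593227585197005976053940534611583363960387571607778607942718828395360467256548484077518923, 275790975254534595017694301074215281900808704852431911649299688284404462056835839909727195875841929, 312293085259900857499485383884408119380725047799588047690302113432837473413991608730049365855601860, 330594066681655599267516109781060354150824624590184984411478362071403602488443067733279158198216115, 349509433832867682609304875061995902119072326078777918359708240798718741621674575607470380708662490, 420693917913276029511402707146658196363106908110617852496559703716209614377154980333824301680841246, 465257934844171481365624945777445868376703866224202153623436943854716722796644694323953747433365734, 561961885789125587259674924975410914536511241827459069248540319325856411107157288605772424579196431, 574278745694002886758659794420460052503172373314255092814061746233056192766638745785204648929674147,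 582293022518576614778030429435092606582382116623427674180945450482533350392894399556830867837898753, 621255912517276276848242443284240059452361836473018589808106553426432780077208603323038441820592329, 629342007796329704867881124914213429598490090677316525005285392329714851298423504678090113784140511, 633952152920384511440918586715034703364510727765748005389417785521350635427244918331380237821994646, 649546930791386007356543968302111186690281862011382696114669569835934746298928880802844251103491893, 665604965216773115861303363034350298169817709705700569733584796477335935396736893527917718356930828, 692397484728126680990701020946772647241986031178410749456162463922696587898431475010483773859537002, 732168103912052493896802853164859830157502653157261122005318093819811125464108374620269849552395503, 760624196906602727720364304600661843462598443754032331430782218951934678195621911223349164712951908, 768593527599965911178755548566447527728325041296699697369878551474473617734100348486197220633933961, 798105662510047332475074870325309993184381649643519959476529040218673165068034102533468304763378382, 866916436973288296006834262344185032903627789337625462882223614467649810142301643790193848909624850, 926262900128301361602448600191151812258673739952400016629644205981193259603776091356021434100403264, 975338058744409763783444637230498419709372327093292164029935458157406499650335111386249165346978702, 976866274155323253553037227993459537403519325324524063305980834300926227334719849184347669812538077, 985530821988814243232836707242379039910939512784434486728245026167407145841538248686665460923617603, 1032053583389862873936953305976418814768866421473091360675637370408388438259944758231557236319068755, 1081421280491211317418234493718764420440988704371287201820239773675225245386670841362640325157858073,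 1088056824653680098827307495041974478600707844894850356413462476871021817085801668445907942780310157, 1122010916138442981305486263072142473226226028967262102323044631339055232386757954014741267195312432, 1138740239113405764628708095213316715780974809478662919765517784038599747233243624510784390174648320, 1166686194309262378104286650505031502911507787361732938063125684127631630987012170950193828414446550, 1238236849531088402788164491068071893555561012004183938055165186072647420882249029012857540601051239, 1245848626676331048356475040769717935641461617514866309027251858248458033972928984536974398493886848, 1277988974266702257849097668129136537464220735102098670487493075036735354089275940962952974161297480, 1323528727436569059836050598276602874305710590346342327359685402724559366111474795337216059007186981, 1335314957107131864496341862232083227649464184775591717247459376898529795087424862676572497903549617, 1393987697216523223982617283171749283684903846081337107961618864218768186009352291203907976660604769, 1408362027193255842429860705959244330160683619794105539811383559476255125094790082080445645938946129, 1448220042367560769376968966953479821262022313135820945108275719653117186069169380507461557334787538, 1495630344482256202738753783289533464661579976433292577916435077411599411862734606745839290760353006, 1532343820540628742645706213390038789806759862589608904673756818594386941817171975413999552433642147, 1555384664856494144436323576595194246625161938546665402270760346125073187388267210073800956819080448, 1598617767990005563076842553641831163201494771595552936172893306287132417522071150544486549711612269, 1627113519429595687979855783388551017931614643940673143054225644532250990431953497647005735935227234,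 1658178739590728844190634979648839570477052348166359710588767175055168427277464393308756608464986585, 1698210929876750125583532020920675564716007198230894434851507807313800391509946706107960146190011242, 1737446827122304677389776887025749806180571618906848333213494205751373509088023072196576704351183513, 1753919396439476462489058669505435348546443284472304816905360035522604488342754385656199722039658482, 1767344509800865421947895341643854007896503317492540306053855027662425877142750736654478418667987541, 1768504224291310098471696687611006631031441600065737226843120386374269275000682691920734877022749888, 1791477909978693996404378419840442103003089007683950016538117599571416726758999214238950367063910635, 1840245670848746760853609447501444330483826162363732815025856989813524521691261953669593120463575262, 1849508547221641648122374593114909048505285911825588177666791878552461016146097742405950004850878186, 1854896694472223886491948260980295207885905788834196647942149413265832970197975375124060821421688134, 1856852299868590343272570038240102759504504951243360728667106827629798379633346825489278387407866338, 1857781457058821401709369554182251640446911731115155451430880450251545393892038967984705444870885556, 1866208617229538689079595044632215351930653938101779604704535872815739484539469606598997621951342496, 1866500605205244425573148973823509863602346388810320846500691027001100879538846954614595929778312297]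
def xws : List ℕ := [1, 3, 7, 15, 46550, 43882, 93101, 87765, 186203, 175531, 372407, 351063]
def xcs : List ℕ := [1874235251949363455477671976424043906164305677618497227584793608566452544791402750033552107597733952, 7276893007905406539620278065607374024115276696194674982940864018958695652086392402520534659326019, 130741391560042089728134550352844363652446511040908535026329168915580979838820188209160238113751106, 89824196147296939473471871033091694903643263424052842119165638516701092785171304010281673394499702, 1370650265279339688364575236165067870449871265894719719874429960724105737224405677214856822381824757, 1675687203052705296024436980222709534980681404762051164750194557703140601238825582681425504223475250, 1826157298441964364270165077905012843702456996169101534482015200950893134472412921501949073319693005, 1737651243030457877513492651098584157724124478662583851281284527549391736164157371953128481437455878, 470503815998653702985799453428908223222534178798075896459242392496856105682185911736049039608863476, 205077523027669479995591329287262298464261525556863392772483985298367584399607793334610911176369691, 1804067771927760468271114785947656551935070701223106320514785626561310835242690143748311106622642920, 924805316576481978825155421594655358728588551648965603811042425029619368597035837028252609948444209]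

def c1 : ℕ := enc 1

theorem enc_x : enc x = cX := by decide +kernel
theorem enc_y : enc y = cY := by decide +kernel

def G : Subgroup (Perm (Fin 55)) := Subgroup.closure {x, y}

theorem x_mem : x ∈ G := Subgroup.subset_closure (by simp)
theorem y_mem : y ∈ G := Subgroup.subset_closure (by simp)

/-- Words: binary digits after the leading one, `1` for `x` and `0` for `y`. -/
def ev : ℕ → ℕ → Perm (Fin 55)
  | 0, _ => 1
  | n + 1, w => if w ≤ 1 then 1 else ev n (w / 2) * (if w % 2 = 1 then x else y)

def evC : ℕ → ℕ → ℕ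
  | 0, _ => c1
  | n + 1, w => if w ≤ 1 then c1 else comp (evC n (w / 2)) (if w % 2 = 1 then cX else cY)

def evS : ℕ → ℕ → Bool
  | 0, _ => false
  | n + 1, w => if w ≤ 1 then false else !(evS n (w / 2))

theorem enc_ev (n w : ℕ) : enc (ev n w) = evC n w := by
  induction n generalizing w with
  | zero => rfl
  | succ n ih =>
    simp only [ev, evC]
    split_ifs
    · rfl
    · rw [enc_mul, ih, enc_x]
    · rw [enc_mul, ih, enc_y]

theorem ev_mem (n w : ℕ) : ev n w ∈ G := by
  induction n generalizing w with
  | zero => exact G.one_mem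
  | succ n ih =>
    simp only [ev]
    split_ifs
    · exact G.one_mem
    · exact G.mul_mem (ih _) x_mem
    · exact G.mul_mem (ih _) y_mem

theorem x4 : x * x * x * x = 1 := by
  apply enc_inj; simp only [enc_mul, enc_x]; decide +kernel
theorem y2 : y * y = 1 := by
  apply enc_inj; simp only [enc_mul, enc_y]; decide +kernel
theorem x_inv : x⁻¹ = x * x * x := by
  rw [inv_eq_iff_mul_eq_one]; simpa [mul_assoc] using x4
theorem y_inv : y⁻¹ = y := by
  rw [inv_eq_iff_mul_eq_one]; exact y2

theorem G_ind {P : Perm (Fin 55) → Prop} (h1 : P 1) (hx : ∀ g, P g → P (x * g))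
    (hy : ∀ g, P g → P (y * g)) : ∀ g ∈ G, P g := by
  intro g hg
  refine Subgroup.closure_induction_left (p := fun g _ => P g) h1 ?_ ?_ hg
  · intro a ha b _ hb
    rcases ha with rfl | rfl
    · exact hx _ hb
    · exact hy _ hb
  · intro a ha b _ hb
    rcases ha with rfl | rfl
    · rw [x_inv, mul_assoc, mul_assoc]; exact hx _ (hx _ (hx _ hb))
    · rw [y_inv]; exact hy _ hb

/-! ### The order of the group -/

theorem tcs_eq : tws.map (evC 20) = tcs := by decide +kernel
theorem hcs_eq : hws.map (evC 20) = hcs := by decide +kernel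
theorem xcs_eq : xws.map (evC 20) = xcs := by decide +kernel

def T (i : ℕ) : Perm (Fin 55) := ev 20 (tws.getD i 1)
def H (i : ℕ) : Perm (Fin 55) := ev 20 (hws.getD i 1)

theorem encT (i : ℕ) (hi : i < 55) : enc (T i) = tcs.getD i 0 := by
  have h : i < tws.length := hi
  rw [T, enc_ev, ← tcs_eq]
  simp [List.getD_eq_getElem?_getD, h]

theorem encH (i : ℕ) (hi : i < 24) : enc (H i) = hcs.getD i 0 := by
  have h : i < hws.length := hi
  rw [H, enc_ev, ← hcs_eq]
  simp [List.getD_eq_getElem?_getD, h]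

theorem chk_T0 : ∀ i < 55, dec (tcs.getD i 0) 0 = i := by decide +kernel
theorem chk_H0 : ∀ i < 24, dec (hcs.getD i 0) 0 = 0 := by decide +kernel
theorem chk_Hinj : hcs.Nodup := by decide +kernel
theorem chk_x : ∀ i < 55, dec cX i < 55 ∧ ixx.getD i 0 < 24 ∧ comp cX (tcs.getD i 0) =
    comp (tcs.getD (dec cX i) 0) (hcs.getD (ixx.getD i 0) 0) := by decide +kernel
theorem chk_y : ∀ i < 55, dec cY i < 55 ∧ ixy.getD i 0 < 24 ∧ comp cY (tcs.getD i 0) =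
    comp (tcs.getD (dec cY i) 0) (hcs.getD (ixy.getD i 0) 0) := by decide +kernel
theorem chk_HH : ∀ i < 24, ∀ j < 24, comp (hcs.getD i 0) (hcs.getD j 0) ∈ hcs := by
  decide +kernel
theorem chk_1 : c1 = comp (tcs.getD 0 0) (hcs.getD 0 0) := by decide +kernel

theorem T0 (i : ℕ) (hi : i < 55) : T i 0 = ⟨i, hi⟩ := by
  apply Fin.ext
  have h := dec_enc (T i) 0
  rw [encT i hi] at h
  rw [← h]
  exact chk_T0 i hi

theorem H0 (i : ℕ) (hi : i < 24) : H i 0 = 0 := by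
  apply Fin.ext
  have h := dec_enc (H i) 0
  rw [encH i hi] at h
  rw [← h]
  exact chk_H0 i hi

theorem HH (i j : ℕ) (hi : i < 24) (hj : j < 24) : ∃ k < 24, H i * H j = H k := by
  have h := chk_HH i hi j hj
  obtain ⟨k, hk, e⟩ := List.getElem_of_mem h
  have hk' : k < 24 := hk
  refine ⟨k, hk', enc_inj ?_⟩
  rw [enc_mul, encH i hi, encH j hj, encH k hk', ← e]
  simp [List.getD_eq_getElem?_getD, hk]

theorem G_form : ∀ g ∈ G, ∃ i < 55, ∃ j < 24, g = T i * H j := by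
  apply G_ind
  · refine ⟨0, by norm_num, 0, by norm_num, enc_inj ?_⟩
    rw [enc_mul, encT _ (by norm_num), encH _ (by norm_num)]
    exact chk_1
  · rintro g ⟨i, hi, j, hj, rfl⟩
    obtain ⟨h1, h2, h3⟩ := chk_x i hi
    obtain ⟨k, hk, e⟩ := HH _ j h2 hj
    refine ⟨_, h1, k, hk, ?_⟩
    have h4 : x * T i = T (dec cX i) * H (ixx.getD i 0) := by
      apply enc_inj
      rw [enc_mul, enc_mul, enc_x, encT i hi, encT _ h1, encH _ h2, h3]
    rw [← e, ← mul_assoc, ← mul_assoc, h4]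
  · rintro g ⟨i, hi, j, hj, rfl⟩
    obtain ⟨h1, h2, h3⟩ := chk_y i hi
    obtain ⟨k, hk, e⟩ := HH _ j h2 hj
    refine ⟨_, h1, k, hk, ?_⟩
    have h4 : y * T i = T (dec cY i) * H (ixy.getD i 0) := by
      apply enc_inj
      rw [enc_mul, enc_mul, enc_y, encT i hi, encT _ h1, encH _ h2, h3]
    rw [← e, ← mul_assoc, ← mul_assoc, h4]

theorem H_inj (i j : ℕ) (hi : i < 24) (hj : j < 24) (h : H i = H j) : i = j := by
  have h2 := congrArg enc h
  rw [encH i hi, encH j hj] at h2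
  have hi' : i < hcs.length := hi
  have hj' : j < hcs.length := hj
  simp only [List.getD_eq_getElem?_getD, hi', hj', List.getElem?_eq_getElem, Option.getD_some] at h2
  exact (chk_Hinj.getElem_inj_iff).1 h2

theorem card_G : Nat.card G = 1320 := by
  let f : Fin 55 × Fin 24 → G := fun p => ⟨T p.1 * H p.2, G.mul_mem (ev_mem _ _) (ev_mem _ _)⟩
  have hf : Function.Bijective f := by
    constructor
    · rintro ⟨i, j⟩ ⟨i', j'⟩ h
      have h1 : T i * H j = T i' * H j' := congrArg Subtype.val h
      have h2 := congrArg (fun p : Perm (Fin 55) => p 0) h1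
      simp only [Perm.mul_apply, H0 j j.2, H0 j' j'.2, T0 i i.2, T0 i' i'.2] at h2
      have h3 : i = i' := h2
      subst h3
      have h4 := H_inj j j' j.2 j'.2 (mul_left_cancel h1)
      exact Prod.ext rfl (Fin.ext h4)
    · rintro ⟨g, hg⟩
      obtain ⟨i, hi, j, hj, rfl⟩ := G_form g hg
      exact ⟨(⟨i, hi⟩, ⟨j, hj⟩), rfl⟩
  rw [← Nat.card_congr (Equiv.ofBijective f hf)]
  simp


/-! ### Cycle types -/

theorem cycleType_permOfCycles (cs : List (List (Fin 55))) (h1 : ∀ c ∈ cs, c.Nodup ∧ 2 ≤ c.length)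
    (h2 : cs.Pairwise List.Disjoint) :
    (permOfCycles cs).cycleType = (cs.map List.length : List ℕ) := by
  unfold permOfCycles
  rw [Equiv.Perm.cycleType_eq (cs.map List.formPerm) rfl]
  · congr 1
    rw [List.map_map]
    apply List.map_congr_left
    intro c hc
    obtain ⟨hn, hl⟩ := h1 c hc
    simp only [Function.comp]
    rw [List.support_formPerm_of_nodup c hn (by rintro a rfl; simp at hl), List.toFinset_card_of_nodup hn]
  · intro σ hσ
    obtain ⟨c, hc, rfl⟩ := List.mem_map.1 hσ
    exact List.isCycle_formPerm (h1 c hc).1 (h1 c hc).2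
  · rw [List.pairwise_map]
    refine List.Pairwise.imp_of_mem ?_ h2
    intro a b ha hb hab
    exact (List.formPerm_disjoint_iff (h1 a ha).1 (h1 b hb).1 (h1 a ha).2 (h1 b hb).2).2 hab

def zcs : List (List (Fin 55)) := [[1, 22, 36, 18, 33, 8], [2, 41, 28, 45, 24, 12],
  [3, 51, 19, 40, 6, 5], [4, 26, 31, 29, 11, 20], [7, 47, 16, 49, 10, 17],
  [13, 43, 53, 21, 27, 52], [14, 48, 25, 37, 42, 39], [30, 54, 34, 38, 35, 32],
  [15, 46, 50], [0, 9], [23, 44]]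

def dsj (a b : List (Fin 55)) : Bool := a.all fun i => !(b.contains i)

theorem dsj_pw (cs : List (List (Fin 55))) (h : cs.Pairwise fun a b => dsj a b = true) :
    cs.Pairwise List.Disjoint := by
  refine h.imp ?_
  intro a b hab i hi hi'
  simp only [dsj, List.all_eq_true] at hab
  have := hab i hi
  simp [hi'] at this

theorem ct_x : x.cycleType = Multiset.replicate 13 4 := by
  unfold x
  rw [cycleType_permOfCycles _ (by decide +kernel) (dsj_pw _ (by decide +kernel))]
  rfl

theorem ct_y : y.cycleType = Multiset.replicate 25 2 := by
  unfold y
  rw [cycleType_permOfCycles _ (by decide +kernel) (dsj_pw _ (by decide +kernel))]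
  rfl

theorem z_mul : x * y * permOfCycles zcs = 1 := by
  apply enc_inj
  rw [enc_mul, enc_mul, enc_x, enc_y]
  decide +kernel

theorem z_eq : (x * y)⁻¹ = permOfCycles zcs := inv_eq_of_mul_eq_one_right z_mul

theorem ct_z : ((x * y)⁻¹).cycleType =
    Multiset.replicate 8 6 + Multiset.replicate 1 3 + Multiset.replicate 2 2 := by
  rw [z_eq, cycleType_permOfCycles _ (by decide +kernel) (dsj_pw _ (by decide +kernel))]
  rfl

theorem sgx : sign x = -1 := by
  rw [sign_of_cycleType, ct_x]; simp; decide
theorem sgy : sign y = -1 := by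
  rw [sign_of_cycleType, ct_y]; simp; decide

theorem sign_ev (n w : ℕ) : sign (ev n w) = if evS n w then -1 else 1 := by
  induction n generalizing w with
  | zero => simp [ev, evS]
  | succ n ih =>
    simp only [ev, evS]
    split_ifs <;> simp_all [sgx, sgy]

/-! ### Primitivity -/

open scoped Pointwise

theorem G_trans (i j : Fin 55) : ∃ g ∈ G, g i = j := by
  refine ⟨T j * (T i)⁻¹, G.mul_mem (ev_mem _ _) (G.inv_mem (ev_mem _ _)), ?_⟩
  have h : (T i)⁻¹ i = 0 := by
    rw [Perm.inv_eq_iff_eq, T0 i i.2]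
  rw [Perm.mul_apply, h, T0 j j.2]

def ps : Perm (Fin 55) := ev 20 26
def pt : Perm (Fin 55) := ev 20 182
def cs : ℕ := evC 20 26
def ct : ℕ := evC 20 182

def bpass (A B C : ℕ) : ℕ → ℕ → ℕ
  | 0, m => m
  | n + 1, m =>
    let m' := bpass A B C n m
    if m'.testBit n then
      m' ||| 2 ^ (dec A n) ||| 2 ^ (dec B n) ||| 2 ^ (dec C n) else m'

theorem bpass_sound (p q r : Perm (Fin 55)) (D : Set (Fin 55)) (hp : ∀ i ∈ D, p i ∈ D)
    (hq : ∀ i ∈ D, q i ∈ D) (hr : ∀ i ∈ D, r i ∈ D) (n : ℕ) (hn : n ≤ 55) (m : ℕ)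
    (hm : ∀ i : Fin 55, m.testBit i = true → i ∈ D) :
    ∀ i : Fin 55, (bpass (enc p) (enc q) (enc r) n m).testBit i = true → i ∈ D := by
  induction n with
  | zero => exact hm
  | succ n ih =>
    have ih := ih (by omega)
    intro i hi
    simp only [bpass] at hi
    split_ifs at hi with hb
    · have hnD := ih ⟨n, by omega⟩ hb
      have e1 := dec_enc p ⟨n, by omega⟩
      have e2 := dec_enc q ⟨n, by omega⟩
      have e3 := dec_enc r ⟨n, by omega⟩
      simp only at e1 e2 e3
      simp only [Nat.testBit_or, Bool.or_eq_true, Nat.testBit_two_pow, e1, e2, e3,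
        decide_eq_true_eq] at hi
      rcases hi with ((hi | hi) | hi) | hi
      · exact ih i hi
      · rw [← Fin.ext hi]; exact hp _ hnD
      · rw [← Fin.ext hi]; exact hq _ hnD
      · rw [← Fin.ext hi]; exact hr _ hnD
    · exact ih i hi

def bp (b m : ℕ) : ℕ := bpass cs ct (tcs.getD b 0) 55 m

theorem chk_prim : ∀ b < 55, b ≠ 0 → bp b (bp b (bp b (bp b (bp b 1)))) = 2 ^ 55 - 1 := by
  decide +kernel

theorem chk_s0 : dec cs 0 = 0 ∧ dec ct 0 = 0 := by decide +kernel

theorem ps0 : ps 0 = 0 := by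
  apply Fin.ext
  rw [← dec_enc, ps, enc_ev]; exact chk_s0.1
theorem pt0 : pt 0 = 0 := by
  apply Fin.ext
  rw [← dec_enc, pt, enc_ev]; exact chk_s0.2

theorem prim_aux (D : Set (Fin 55)) (hD : MulAction.IsBlock G D) (h0 : 0 ∈ D) (b : Fin 55)
    (hb : b ∈ D) (hb0 : b ≠ 0) : D = Set.univ := by
  have key : ∀ p ∈ G, p 0 ∈ D → ∀ i ∈ D, p i ∈ D := by
    intro p hp h i hi
    have e := MulAction.isBlock_iff_smul_eq_of_mem.1 hD (g := ⟨p, hp⟩) h0 h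
    rw [← e]
    exact Set.smul_mem_smul_set (a := (⟨p, hp⟩ : G)) hi
  have hs := key ps (ev_mem _ _) (by rw [ps0]; exact h0)
  have ht := key pt (ev_mem _ _) (by rw [pt0]; exact h0)
  have hT := key (T b) (ev_mem _ _) (by rw [T0 b b.2]; exact hb)
  have snd := bpass_sound ps pt (T b) D hs ht hT 55 le_rfl
  rw [encT b b.2, ps, pt, enc_ev, enc_ev] at snd
  have snd' : ∀ m, (∀ i : Fin 55, m.testBit i = true → i ∈ D) →
    ∀ i : Fin 55, (bp b m).testBit i = true → i ∈ D := snd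
  have h := snd' _ (snd' _ (snd' _ (snd' _ (snd' 1 (by
    intro i hi
    have : i = 0 := by
      apply Fin.ext
      have := Nat.testBit_one_eq_true_iff_self_eq_zero.1 hi
      simpa using this
    rw [this]; exact h0)))))
  rw [chk_prim b b.2 (fun h => hb0 (Fin.ext h))] at h
  ext i
  simp only [Set.mem_univ, iff_true]
  apply h
  rw [Nat.testBit_two_pow_sub_one]
  simp

theorem G_prim : IsPreprimitive G (Fin 55) := by
  constructor
  · constructor
    intro i j
    obtain ⟨g, hg, h⟩ := G_trans i j
    exact ⟨⟨g, hg⟩, h⟩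
  · intro B hB
    by_cases hs : B.Subsingleton
    · exact Or.inl hs
    · right
      rw [Set.not_subsingleton_iff] at hs
      obtain ⟨a, ha, b, hb, hab⟩ := hs
      obtain ⟨g, hg, h⟩ := G_trans a 0
      have h2 := prim_aux ((⟨g, hg⟩ : G) • B) (hB.translate _)
        ⟨a, ha, h⟩ (g b) ⟨b, hb, rfl⟩ (by rw [← h]; exact fun e => hab (g.injective e.symm))
      have h3 := congrArg (fun C => (⟨g, hg⟩ : G)⁻¹ • C) h2
      simpa using h3

/-! ### The simple normal subgroup -/

def sgn : G →* ℤˣ := sign.comp G.subtype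

def S : Subgroup G := sgn.ker

theorem mem_S (g : G) : g ∈ S ↔ sign (g : Perm (Fin 55)) = 1 := Iff.rfl

theorem card_S : Nat.card S = 660 := by
  have h := S.card_mul_index
  have hs : Function.Surjective sgn := by
    intro u
    rcases Int.units_eq_one_or u with rfl | rfl
    · exact ⟨1, map_one _⟩
    · refine ⟨⟨x, x_mem⟩, ?_⟩
      rw [sgn, MonoidHom.comp_apply]
      exact sgx
  have h2 : S.index = 2 := by
    rw [S, Subgroup.index_ker, MonoidHom.range_eq_top.2 hs]
    simp
  rw [h2, card_G] at h
  omega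

def se (w : ℕ) (h : evS 20 w = false) : S :=
  ⟨⟨ev 20 w, ev_mem _ _⟩, by rw [mem_S]; simp [sign_ev, h]⟩

theorem S_trans (j : Fin 55) : ∃ g : S, g • (0 : Fin 55) = j := by
  by_cases h : sign (T j) = 1
  · exact ⟨⟨⟨T j, ev_mem _ _⟩, h⟩, T0 j j.2⟩
  · have h' : sign (T j) = -1 := (Int.units_eq_one_or _).resolve_left h
    have h2 : sign pt = -1 := by
      rw [pt, sign_ev]; rfl
    refine ⟨⟨⟨T j * pt, G.mul_mem (ev_mem _ _) (ev_mem _ _)⟩, ?_⟩, ?_⟩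
    · rw [mem_S]; simp [h', h2]
    · show T j (pt 0) = j
      rw [pt0, T0 j j.2]

instance : MulAction.IsPretransitive S (Fin 55) := by
  constructor
  intro i j
  obtain ⟨g, hg⟩ := S_trans i
  obtain ⟨h, hh⟩ := S_trans j
  exact ⟨h * g⁻¹, by rw [mul_smul, ← hg, inv_smul_smul, hh]⟩

theorem gen_top (N : Subgroup S) (h1 : ∃ n ∈ N, ((n : G) : Perm (Fin 55)) = x * x)
    (h2 : ∃ n ∈ N, ((n : G) : Perm (Fin 55)) = x * y) : N = ⊤ := by
  let N' : Subgroup (Perm (Fin 55)) := (N.map S.subtype).map G.subtype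
  have m1 : x * x ∈ N' := by
    obtain ⟨n, hn, e⟩ := h1
    exact ⟨n, ⟨n, hn, rfl⟩, e⟩
  have m2 : x * y ∈ N' := by
    obtain ⟨n, hn, e⟩ := h2
    exact ⟨n, ⟨n, hn, rfl⟩, e⟩
  have hP : ∀ g ∈ G, g ∈ N' ∨ x⁻¹ * g ∈ N' := by
    apply G_ind
    · exact Or.inl N'.one_mem
    · rintro g (h | h)
      · right; simpa using h
      · left
        have := N'.mul_mem m1 h
        simpa [mul_assoc] using this
    · rintro g (h | h)
      · right
        have := N'.mul_mem (N'.mul_mem (N'.inv_mem m1) m2) h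
        simpa [mul_assoc] using this
      · left
        have := N'.mul_mem (N'.mul_mem (N'.inv_mem m2) m1) h
        simpa [mul_assoc, y_inv] using this
  have sN : ∀ g ∈ N', sign g = 1 := by
    rintro g ⟨g1, ⟨g2, _, rfl⟩, rfl⟩
    exact g2.2
  rw [eq_top_iff]
  rintro ⟨⟨g, hg⟩, hs⟩ -
  rw [mem_S] at hs
  simp only at hs
  rcases hP g hg with h | h
  · obtain ⟨g1, ⟨g2, hg2, rfl⟩, e⟩ := h
    have : g2 = ⟨⟨g, hg⟩, hs⟩ := by
      apply Subtype.ext; apply Subtype.ext; exact e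
    rw [← this]; exact hg2
  · have := sN _ h
    rw [map_mul, hs, sign_inv, sgx] at this
    exact absurd this (by decide)

theorem mem_of_coprime {M : Type*} [Group M] [Finite M] (N : Subgroup M) [N.Normal] (p : ℕ)
    (hp : Nat.Coprime p N.index) (u : M) (hu : u ^ p = 1) : u ∈ N := by
  rw [← QuotientGroup.eq_one_iff]
  have h1 : (u : M ⧸ N) ^ p = 1 := by
    rw [← QuotientGroup.mk_pow, hu]; rfl
  have h2 : (u : M ⧸ N) ^ N.index = 1 := by
    rw [Subgroup.index_eq_card]; exact pow_card_eq_one'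
  have h3 := Nat.dvd_gcd (orderOf_dvd_of_pow_eq_one h1) (orderOf_dvd_of_pow_eq_one h2)
  rw [hp.gcd_eq_one] at h3
  exact orderOf_eq_one_iff.1 (Nat.dvd_one.1 h3)

theorem pow5 (w : ℕ) (hw : evS 20 w = false)
    (h : (let c := evC 20 w; comp (comp (comp (comp c c) c) c) c) = c1) : se w hw ^ 5 = 1 := by
  apply Subtype.ext; apply Subtype.ext
  show ev 20 w ^ 5 = 1
  apply enc_inj
  simp only [pow_succ, pow_zero, one_mul, enc_mul, enc_ev]
  exact h

theorem pow11 (w : ℕ) (hw : evS 20 w = false)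
    (h : (let c := evC 20 w; let d := comp (comp (comp (comp c c) c) c) c; comp (comp d d) c)
      = c1) : se w hw ^ 11 = 1 := by
  apply Subtype.ext; apply Subtype.ext
  show ev 20 w ^ 11 = 1
  apply enc_inj
  rw [show ev 20 w ^ 11 = ev 20 w ^ 5 * ev 20 w ^ 5 * ev 20 w by group]
  simp only [pow_succ, pow_zero, one_mul, enc_mul, enc_ev]
  exact h

theorem pair_mem (N : Subgroup S) (w v : ℕ) (hw : evS 20 w = false) (hv : evS 20 v = false)
    (h1 : se w hw ∈ N) (h2 : se v hv ∈ N) (q : Perm (Fin 55))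
    (h : comp (evC 20 w) (evC 20 v) = enc q) :
    ∃ n ∈ N, ((n : G) : Perm (Fin 55)) = q := by
  refine ⟨_, N.mul_mem h1 h2, ?_⟩
  show ev 20 w * ev 20 v = q
  apply enc_inj
  rw [enc_mul, enc_ev, enc_ev, h]

theorem enc_xx : enc (x * x) = comp cX cX := by rw [enc_mul, enc_x]
theorem enc_xy : enc (x * y) = comp cX cY := by rw [enc_mul, enc_x, enc_y]

theorem top_of_5 (N : Subgroup S) (h : ∀ u : S, u ^ 5 = 1 → u ∈ N) : N = ⊤ := by
  apply gen_top
  · exact pair_mem N 438 365 rfl rfl (h _ (pow5 _ _ (by decide +kernel)))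
      (h _ (pow5 _ _ (by decide +kernel))) _ (by rw [enc_xx]; decide +kernel)
  · exact pair_mem N 91 474 rfl rfl (h _ (pow5 _ _ (by decide +kernel)))
      (h _ (pow5 _ _ (by decide +kernel))) _ (by rw [enc_xy]; decide +kernel)

theorem top_of_11 (N : Subgroup S) (h : ∀ u : S, u ^ 11 = 1 → u ∈ N) : N = ⊤ := by
  apply gen_top
  · exact pair_mem N 23469 23277 rfl rfl (h _ (pow11 _ _ (by decide +kernel)))
      (h _ (pow11 _ _ (by decide +kernel))) _ (by rw [enc_xx]; decide +kernel)
  · exact pair_mem N 5819 30170 rfl rfl (h _ (pow11 _ _ (by decide +kernel)))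
      (h _ (pow11 _ _ (by decide +kernel))) _ (by rw [enc_xy]; decide +kernel)

theorem S_normal_cases (N : Subgroup S) (hN : N.Normal) : N = ⊥ ∨ N = ⊤ := by
  by_cases hb : N = ⊥
  · exact Or.inl hb
  right
  have hex : ∃ n ∈ N, ∃ a : Fin 55, n • a ≠ a := by
    by_contra! hc
    apply hb
    rw [eq_bot_iff]
    intro n hn
    rw [Subgroup.mem_bot]
    apply Subtype.ext; apply Subtype.ext
    ext a
    exact congrArg Fin.val (hc n hn a)
  obtain ⟨n, hn, a, ha⟩ := hex
  have blk : MulAction.IsBlock S (MulAction.orbit N a) := MulAction.IsBlock.orbit_of_normal a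
  have d1 := blk.ncard_dvd_card ⟨a, MulAction.mem_orbit_self a⟩
  have d2 : (MulAction.orbit N a).ncard ∣ Nat.card N := by
    rw [← Nat.card_coe_set_eq]
    have e := Nat.card_congr (MulAction.orbitProdStabilizerEquivGroup N a)
    rw [Nat.card_prod] at e
    exact ⟨_, e.symm⟩
  have d3 : (MulAction.orbit N a).ncard ≠ 1 := by
    intro h1
    rw [Set.ncard_eq_one] at h1
    obtain ⟨c, hc⟩ := h1
    have m1 : a ∈ MulAction.orbit N a := MulAction.mem_orbit_self a
    have m2 : n • a ∈ MulAction.orbit N a := ⟨⟨n, hn⟩, rfl⟩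
    rw [hc] at m1 m2
    exact ha (m2.trans m1.symm)
  have ci := N.card_mul_index
  rw [card_S] at ci
  rw [Nat.card_fin] at d1
  have h55 : 5 ∣ (MulAction.orbit N a).ncard ∨ 11 ∣ (MulAction.orbit N a).ncard := by
    generalize (MulAction.orbit N a).ncard = k at d1 d3
    have hk : k ≤ 55 := Nat.le_of_dvd (by norm_num) d1
    interval_cases k <;> omega
  rcases h55 with h | h
  · obtain ⟨r, hr⟩ := h.trans d2
    refine top_of_5 N fun u hu => mem_of_coprime N 5 ?_ u hu
    rw [Nat.Prime.coprime_iff_not_dvd (by norm_num)]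
    rintro ⟨q, hq⟩
    rw [hr, hq] at ci
    have : 25 * (r * q) = 660 := by rw [← ci]; ring
    omega
  · obtain ⟨r, hr⟩ := h.trans d2
    refine top_of_11 N fun u hu => mem_of_coprime N 11 ?_ u hu
    rw [Nat.Prime.coprime_iff_not_dvd (by norm_num)]
    rintro ⟨q, hq⟩
    rw [hr, hq] at ci
    have : 121 * (r * q) = 660 := by rw [← ci]; ring
    omega

theorem S_noncomm : se 26 rfl * se 5557 rfl ≠ se 5557 rfl * se 26 rfl := by
  intro h
  have h1 : ev 20 26 * ev 20 5557 = ev 20 5557 * ev 20 26 := by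
    have h0 := congrArg (fun g : S => ((g : G) : Perm (Fin 55))) h
    simpa only [Subgroup.coe_mul, se] using h0
  have h2 := congrArg enc h1
  rw [enc_mul, enc_mul, enc_ev, enc_ev] at h2
  revert h2
  decide +kernel

theorem S_simple : IsSimpleGroup S where
  exists_pair_ne := ⟨_, _, S_noncomm⟩
  eq_bot_or_eq_top_of_normal := S_normal_cases

theorem chk_fix : ∀ i < 55, dec (evC 20 26) i = i → dec (evC 20 5557) i = i → i = 0 := by
  decide +kernel

theorem chk_b0 : dec (evC 20 5557) 0 = 0 := by decide +kernel

theorem pb0 : ev 20 5557 0 = 0 := by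
  apply Fin.ext
  rw [← dec_enc, enc_ev]; exact chk_b0

theorem S_cent : Subgroup.centralizer (S : Set G) = ⊥ := by
  rw [eq_bot_iff]
  intro c hc
  rw [Subgroup.mem_bot]
  rw [Subgroup.mem_centralizer_iff] at hc
  have hc' : ∀ g : S, ∀ i : Fin 55, g • ((c : Perm (Fin 55)) i) = (c : Perm (Fin 55)) (g • i) := by
    intro g i
    exact congrArg (fun h : G => (h : Perm (Fin 55)) i) (hc g g.2)
  have f0 : (c : Perm (Fin 55)) 0 = 0 := by
    apply Fin.ext
    apply chk_fix _ ((c : Perm (Fin 55)) 0).2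
    · rw [← enc_ev, dec_enc]
      have := hc' (se 26 rfl) 0
      rw [show (se 26 rfl) • (0 : Fin 55) = 0 from ps0] at this
      exact congrArg Fin.val this
    · rw [← enc_ev, dec_enc]
      have := hc' (se 5557 rfl) 0
      rw [show (se 5557 rfl) • (0 : Fin 55) = 0 from pb0] at this
      exact congrArg Fin.val this
  apply Subtype.ext
  ext i
  obtain ⟨g, rfl⟩ := S_trans i
  rw [← hc', f0]
  rfl

/-! ### Rigidity -/

def cX3 : ℕ := comp (comp cX cX) cX

theorem chk_cls : ∀ Y ∈ ycs, comp (comp cX Y) cX3 ∈ ycs ∧ comp (comp cY Y) cY ∈ ycs := by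
  decide +kernel
theorem chk_cls0 : cY ∈ ycs := by decide +kernel

theorem cls (g : Perm (Fin 55)) (hg : g ∈ G) : enc (g * y * g⁻¹) ∈ ycs := by
  refine G_ind (P := fun g => enc (g * y * g⁻¹) ∈ ycs) ?_ ?_ ?_ g hg
  · simp only [one_mul, inv_one, mul_one, enc_y]; exact chk_cls0
  · intro g h
    have := (chk_cls _ h).1
    rwa [cX3, ← enc_x, ← enc_mul, ← enc_mul, ← enc_mul, ← enc_mul, ← x_inv,
      show x * (g * y * g⁻¹) * x⁻¹ = x * g * y * (x * g)⁻¹ by group] at this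
  · intro g h
    have := (chk_cls _ h).2
    rwa [← enc_y, ← enc_mul, ← enc_mul,
      show y * (g * y * g⁻¹) * y = y * (g * y * g⁻¹) * y⁻¹ by rw [y_inv],
      show y * (g * y * g⁻¹) * y⁻¹ = y * g * y * (y * g)⁻¹ by group] at this

def rigOK (Y : ℕ) : Bool :=
  let u := comp cX Y
  let u2 := comp u u
  let u3 := comp u2 u
  u2 == c1 || u3 == c1 || !(comp u3 u3 == c1) || xcs.any fun c => comp c cY == comp Y c

theorem chk_rig : ∀ Y ∈ ycs, rigOK Y = true := by decide +kernel
theorem chk_cen : ∀ c ∈ xcs, comp c cX = comp cX c := by decide +kernel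

theorem xy6 : (x * y) ^ 6 = 1 ∧ (x * y) ^ 2 ≠ 1 ∧ (x * y) ^ 3 ≠ 1 := by
  refine ⟨?_, ?_, ?_⟩
  · apply enc_inj
    simp only [pow_succ, pow_zero, one_mul, enc_mul, enc_x, enc_y]
    decide +kernel
  · intro h
    have := congrArg enc h
    simp only [pow_succ, pow_zero, one_mul, enc_mul, enc_x, enc_y] at this
    revert this
    decide +kernel
  · intro h
    have := congrArg enc h
    simp only [pow_succ, pow_zero, one_mul, enc_mul, enc_x, enc_y] at this
    revert this
    decide +kernel

theorem rig_core (Y k : Perm (Fin 55)) (hY : enc Y ∈ ycs) (hk : x * Y = k * (x * y) * k⁻¹) :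
    ∃ c ∈ G, c * x = x * c ∧ c * y = Y * c := by
  have h := chk_rig _ hY
  have e : ∀ n : ℕ, (x * Y) ^ n = 1 ↔ (x * y) ^ n = 1 := by
    intro n
    rw [hk, conj_pow]
    simp
  have n2 : (x * Y) * (x * Y) ≠ 1 := by
    rw [← pow_two, Ne, e]; exact xy6.2.1
  have n3 : (x * Y) * (x * Y) * (x * Y) ≠ 1 := by
    rw [← pow_three', Ne, e]; exact xy6.2.2
  have n6 : (x * Y) * (x * Y) * (x * Y) * ((x * Y) * (x * Y) * (x * Y)) = 1 := by
    rw [← pow_three', ← pow_add, e]; exact xy6.1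
  simp only [rigOK, ← enc_x, ← enc_y, ← enc_mul, c1, Bool.or_eq_true, beq_iff_eq,
    Bool.not_eq_true', beq_eq_false_iff_ne, List.any_eq_true] at h
  rcases h with ((h | h) | h) | h
  · exact absurd (enc_inj h) n2
  · exact absurd (enc_inj h) n3
  · exact absurd (congrArg enc n6) h
  · obtain ⟨c, hc, h⟩ := h
    have hcx := chk_cen c hc
    rw [← xcs_eq] at hc
    obtain ⟨w, _, rfl⟩ := List.mem_map.1 hc
    rw [← enc_ev, ← enc_mul, ← enc_mul] at h
    rw [← enc_ev, ← enc_x, ← enc_mul, ← enc_mul] at hcx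
    exact ⟨_, ev_mem 20 w, enc_inj hcx, enc_inj h⟩

theorem rigid (x' y' z' : Perm (Fin 55)) (h1 : x' * y' * z' = 1)
    (hx : ∃ g ∈ G, g * x * g⁻¹ = x') (hy : ∃ g ∈ G, g * y * g⁻¹ = y')
    (hz : ∃ g ∈ G, g * (x * y)⁻¹ * g⁻¹ = z') :
    ∃ g ∈ G, g * x * g⁻¹ = x' ∧ g * y * g⁻¹ = y' ∧ g * (x * y)⁻¹ * g⁻¹ = z' := by
  obtain ⟨a, ha, rfl⟩ := hx
  obtain ⟨b, hb, rfl⟩ := hy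
  obtain ⟨d, hd, rfl⟩ := hz
  have hab : a⁻¹ * b ∈ G := G.mul_mem (G.inv_mem ha) hb
  have e1 : a * x * a⁻¹ * (b * y * b⁻¹) = d * (x * y) * d⁻¹ := by
    rw [mul_eq_one_iff_eq_inv] at h1
    rw [h1]; group
  obtain ⟨c, hc, c1, c2⟩ := rig_core _ (a⁻¹ * d) (cls _ hab) (by
    calc x * (a⁻¹ * b * y * (a⁻¹ * b)⁻¹) = a⁻¹ * (a * x * a⁻¹ * (b * y * b⁻¹)) * a := by group
      _ = _ := by rw [e1]; group)
  have r1 : a * c * x * (a * c)⁻¹ = a * x * a⁻¹ := by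
    rw [mul_assoc a c x, c1]; group
  have r2 : a * c * y * (a * c)⁻¹ = b * y * b⁻¹ := by
    rw [mul_assoc a c y, c2]; group
  refine ⟨a * c, G.mul_mem ha hc, r1, r2, ?_⟩
  have e2 : a * c * (x * y)⁻¹ * (a * c)⁻¹ =
    (a * c * x * (a * c)⁻¹ * (a * c * y * (a * c)⁻¹))⁻¹ := by group
  rw [e2, r1, r2, e1]; group

/-! ### Rationality -/

theorem rat_x : ev 20 11702 * x * (ev 20 11702)⁻¹ = x⁻¹ := by
  rw [mul_inv_eq_iff_eq_mul, x_inv]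
  apply enc_inj
  simp only [enc_mul, enc_ev, enc_x]
  decide +kernel

theorem rat_z : ev 20 30427 * (x * y)⁻¹ * (ev 20 30427)⁻¹ = ((x * y)⁻¹)⁻¹ := by
  have h : x * y * ev 20 30427 * (x * y) = ev 20 30427 := by
    apply enc_inj
    simp only [enc_mul, enc_ev, enc_x, enc_y]
    decide +kernel
  rw [inv_inv, mul_inv_eq_iff_eq_mul, mul_inv_eq_iff_eq_mul, h]

theorem rat_core (g h : Perm (Fin 55)) (hh : h ∈ G) (hg : h * g * h⁻¹ = g⁻¹) (k : ℤ)
    (hk : g ^ (k - 1) = 1 ∨ g ^ (k + 1) = 1) : ∃ h ∈ G, h * g * h⁻¹ = g ^ k := by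
  rcases hk with hk | hk
  · refine ⟨1, G.one_mem, ?_⟩
    rw [zpow_sub_one, mul_inv_eq_one] at hk
    simp [hk]
  · refine ⟨h, hh, ?_⟩
    rw [zpow_add_one, mul_eq_one_iff_eq_inv] at hk
    rw [hg, hk]

theorem ord_x : orderOf x = 4 := by
  rw [← lcm_cycleType, ct_x]; decide
theorem ord_y : orderOf y = 2 := by
  rw [← lcm_cycleType, ct_y]; decide
theorem ord_z : orderOf (x * y)⁻¹ = 6 := by
  rw [← lcm_cycleType, ct_z]; decide

theorem gcd_aux (k : ℤ) (n : ℕ) (hn : n = 2 ∨ n = 4 ∨ n = 6) (h : Int.gcd k n = 1) :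
    (n : ℤ) ∣ k - 1 ∨ (n : ℤ) ∣ k + 1 := by
  have h2 : ¬ (2 : ℤ) ∣ k := by
    intro hd
    have := Int.dvd_coe_gcd hd (show (2 : ℤ) ∣ (n : ℤ) by rcases hn with rfl | rfl | rfl <;> norm_num)
    rw [h] at this
    norm_num at this
  rcases hn with rfl | rfl | rfl
  · push_cast; omega
  · push_cast; omega
  · have h3 : ¬ (3 : ℤ) ∣ k := by
      intro hd
      have := Int.dvd_coe_gcd hd (show (3 : ℤ) ∣ ((6 : ℕ) : ℤ) by norm_num)
      rw [h] at this
      norm_num at this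
    have h6 : k % 6 = 0 ∨ k % 6 = 1 ∨ k % 6 = 2 ∨ k % 6 = 3 ∨ k % 6 = 4 ∨ k % 6 = 5 := by omega
    push_cast
    rcases h6 with h6 | h6 | h6 | h6 | h6 | h6 <;> omega

theorem rational (g h : Perm (Fin 55)) (hh : h ∈ G) (hg : h * g * h⁻¹ = g⁻¹)
    (hn : orderOf g = 2 ∨ orderOf g = 4 ∨ orderOf g = 6) (k : ℤ)
    (hk : Int.gcd k (orderOf g) = 1) : ∃ h ∈ G, h * g * h⁻¹ = g ^ k := by
  apply rat_core g h hh hg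
  rcases gcd_aux k _ hn hk with h | h
  · exact Or.inl (orderOf_dvd_iff_zpow_eq_one.1 h)
  · exact Or.inr (orderOf_dvd_iff_zpow_eq_one.1 h)

theorem fact_big : (1320 : ℕ) < Nat.factorial 55 / 2 := by
  decide +kernel

theorem nice_of {n : ℕ} (x y z : Perm (Fin n)) (K : Subgroup (Perm (Fin n)))
    (hK : K = Subgroup.closure {x, y}) (h1 : x * y * z = 1)
    (h2 : K ≠ alternatingGroup (Fin n) ∧ K ≠ ⊤) (h3 : IsPreprimitive K (Fin n))
    (h4 : ∃ S : Subgroup K, S.Normal ∧ IsSimpleGroup S ∧ (∃ a b : S, a * b ≠ b * a) ∧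
      Subgroup.centralizer (S : Set K) = ⊥)
    (h5 : permInd x + permInd y + permInd z = 2 * (n - 1))
    (h6 : ∀ x' y' z' : Perm (Fin n), x' * y' * z' = 1 →
      (∃ g ∈ K, g * x * g⁻¹ = x') → (∃ g ∈ K, g * y * g⁻¹ = y') →
      (∃ g ∈ K, g * z * g⁻¹ = z') →
      ∃ g ∈ K, g * x * g⁻¹ = x' ∧ g * y * g⁻¹ = y' ∧ g * z * g⁻¹ = z')
    (h7 : ∀ g : Perm (Fin n), g = x ∨ g = y ∨ g = z → ∀ k : ℤ, Int.gcd k (orderOf g) = 1 →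
      ∃ h ∈ K, h * g * h⁻¹ = g ^ k) : IsNice x y z := by
  subst hK
  exact ⟨h1, h2, h3, h4, h5, fun x' y' z' e _ => h6 x' y' z' e, h7⟩

theorem ne_of_card (K L : Subgroup (Perm (Fin 55))) (h : Nat.card K ≠ Nat.card L) : K ≠ L :=
  fun e => h (by rw [e])

theorem ne_alt : G ≠ alternatingGroup (Fin 55) := by
  apply ne_of_card
  rw [card_G, nat_card_alternatingGroup, Nat.card_fin]
  exact fact_big.ne

theorem ne_top : G ≠ ⊤ := by
  apply ne_of_card
  rw [card_G, Subgroup.card_top, Nat.card_perm, Nat.card_fin]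
  exact (fact_big.trans_le (Nat.div_le_self _ _)).ne

theorem permInd_eq {n : ℕ} (s : Perm (Fin n)) (m : Multiset ℕ) (k : ℕ) (h : s.cycleType = m)
    (hk : m.sum - Multiset.card m = k) : permInd s = k := by
  rw [← hk, ← h]; rfl

theorem ind_eq : permInd x + permInd y + permInd (x * y)⁻¹ = 2 * (55 - 1) := by
  rw [permInd_eq x _ 39 ct_x (by simp), permInd_eq y _ 25 ct_y (by simp),
    permInd_eq _ _ 44 ct_z (by simp)]

theorem nice : IsNice x y (x * y)⁻¹ := by
  refine nice_of x y (x * y)⁻¹ G rfl (mul_inv_cancel _) ⟨ne_alt, ne_top⟩ G_prim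
    ⟨S, MonoidHom.normal_ker _, S_simple, ⟨_, _, S_noncomm⟩, S_cent⟩ ind_eq rigid ?_
  intro g hg k hk
  rcases hg with h | h | h
  · rw [h] at hk ⊢
    exact rational x _ (ev_mem _ _) rat_x (by rw [ord_x]; simp) k hk
  · rw [h] at hk ⊢
    exact rational y 1 G.one_mem (by simp [y_inv]) (by rw [ord_y]; simp) k hk
  · rw [h] at hk ⊢
    exact rational _ _ (ev_mem _ _) rat_z (by rw [ord_z]; simp) k hk

end NT

theorem nice_triple_deg55_stmt4 :
    IsNice x y (x * y)⁻¹ ∧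
    x.cycleType = Multiset.replicate 13 4 ∧
    y.cycleType = Multiset.replicate 25 2 ∧
    ((x * y)⁻¹).cycleType = Multiset.replicate 8 6 + Multiset.replicate 1 3 + Multiset.replicate 2 2 ∧
    Nat.card ↥(Subgroup.closure {x, y} : Subgroup (Equiv.Perm (Fin 55))) = 1320 := by
  exact ⟨NT.nice, NT.ct_x, NT.ct_y, NT.ct_z, NT.card_G⟩
end

section
/- With p, q ∈ ℚ[X] as in the context (the Belyi map of degree 63 for Aut(PSU(3,3))), the polynomial F = p − t·q ∈ K[X] has degree 63, is irreducible over K = ℚ(t), and its Galois group Polynomial.Gal F (the Galois group of the splitting field of F over K) has cardinality 12096, the order of Aut(PSU(3,3)). -/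
open Polynomial

noncomputable section

def r : Polynomial ℚ :=
    -136048896 * (X ^ 2 - X + 2) ^ 7 * (X ^ 3 + 2 * X ^ 2 - X - 1) ^ 7 * (X ^ 3 + 9 * X ^ 2 -
    X - 1) ^ 7

def q : Polynomial ℚ :=
    (X ^ 3 + 30 * X ^ 2 + 27 * X + 6) * (X ^ 6 + 18 * X ^ 5 + 93 * X ^ 4 + 169 * X ^ 3 + 144 *
    X ^ 2 - 75 * X - 62) ^ 2 * (X ^ 12 + 15 * X ^ 11 - 15 * X ^ 10 - 332 * X ^ 9 - 2766 * X ^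
    8 + 4002 * X ^ 7 + 2002 * X ^ 6 - 2496 * X ^ 5 - 1215 * X ^ 4 + 1047 * X ^ 3 + 117 * X ^ 2
    - 108 * X + 36) ^ 4

def p : Polynomial ℚ := q + r

/-- `F = p − t·q ∈ K[X]` where `K = ℚ(t)` and `t = RatFunc.X`. -/
def F : Polynomial (RatFunc ℚ) :=
  p.map (algebraMap ℚ (RatFunc ℚ)) - Polynomial.C RatFunc.X * q.map (algebraMap ℚ (RatFunc ℚ))

end

set_option maxRecDepth 4000
namespace Bel


/-! Integer polynomials as coefficient lists. -/

def ladd : List Int → List Int → List Int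
  | [], b => b
  | a, [] => a
  | a :: as, b :: bs => Int.add a b :: ladd as bs
def lsc (c : Int) : List Int → List Int
  | [] => []
  | a :: as => Int.mul c a :: lsc c as
def lmul : List Int → List Int → List Int
  | [], _ => []
  | a :: as, b => ladd (lsc a b) (0 :: lmul as b)
def lpow (a : List Int) : Nat → List Int
  | 0 => [1]
  | n+1 => lmul a (lpow a n)
def badd : List (List Int) → List (List Int) → List (List Int)
  | [], b => b
  | a, [] => a
  | a :: as, b :: bs => ladd a b :: badd as bs
def bsc (c : List Int) : List (List Int) → List (List Int)
  | [] => []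
  | a :: as => lmul c a :: bsc c as
def bmul : List (List Int) → List (List Int) → List (List Int)
  | [], _ => []
  | a :: as, b => badd (bsc a b) ([] :: bmul as b)
def outer (a : List Int) : List Int → List (List Int)
  | [] => []
  | b :: bs => lsc b a :: outer a bs
def lder : Int → List Int → List Int
  | _, [] => []
  | n, a :: as => Int.mul n a :: lder (Int.add n 1) as
def allz : List Int → Bool
  | [] => true
  | a :: as => Nat.beq a.natAbs 0 && allz as

def ev1 {R : Type*} [CommRing R] : List Int → R → R
  | [], _ => 0
  | a :: as, x => (a : R) + x * ev1 as x
def ev2 {R : Type*} [CommRing R] : List (List Int) → R → R → R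
  | [], _, _ => 0
  | a :: as, x, y => ev1 a x + y * ev2 as x y

section
variable {R : Type*} [CommRing R]
theorem ev1_ladd (a b : List Int) (x : R) : ev1 (ladd a b) x = ev1 a x + ev1 b x := by
  induction a generalizing b with
  | nil => simp [ladd, ev1]
  | cons c a ih =>
    cases b with
    | nil => simp [ladd, ev1]
    | cons d b =>
      have : ((Int.add c d : Int) : R) = c + d := by exact_mod_cast Int.cast_add c d
      simp only [ladd, ev1, ih, this]; ring
theorem cast_imul (c d : Int) : ((Int.mul c d : Int) : R) = c * d := Int.cast_mul c d
theorem ev1_lsc (c : Int) (a : List Int) (x : R) : ev1 (lsc c a) x = c * ev1 a x := by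
  induction a with
  | nil => simp [lsc, ev1]
  | cons d a ih => simp only [lsc, ev1, ih, cast_imul]; ring
theorem ev1_lmul (a b : List Int) (x : R) : ev1 (lmul a b) x = ev1 a x * ev1 b x := by
  induction a with
  | nil => simp [lmul, ev1]
  | cons d a ih => simp only [lmul, ev1, ev1_ladd, ev1_lsc, ih]; push_cast; ring
theorem ev1_lpow (a : List Int) (n : Nat) (x : R) : ev1 (lpow a n) x = ev1 a x ^ n := by
  induction n with
  | zero => simp [lpow, ev1]
  | succ n ih => simp only [lpow, ev1_lmul, ih]; ring
theorem ev2_badd (a b : List (List Int)) (x y : R) :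
    ev2 (badd a b) x y = ev2 a x y + ev2 b x y := by
  induction a generalizing b with
  | nil => simp [badd, ev2]
  | cons c a ih =>
    cases b with
    | nil => simp [badd, ev2]
    | cons d b => simp only [badd, ev2, ih, ev1_ladd]; ring
theorem ev2_bsc (c : List Int) (a : List (List Int)) (x y : R) :
    ev2 (bsc c a) x y = ev1 c x * ev2 a x y := by
  induction a with
  | nil => simp [bsc, ev2]
  | cons d a ih => simp only [bsc, ev2, ih, ev1_lmul]; ring
theorem ev2_bmul (a b : List (List Int)) (x y : R) :
    ev2 (bmul a b) x y = ev2 a x y * ev2 b x y := by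
  induction a with
  | nil => simp [bmul, ev2]
  | cons d a ih => simp only [bmul, ev2, ev2_badd, ev2_bsc, ih, ev1]; ring
theorem ev2_outer (a b : List Int) (x y : R) :
    ev2 (outer a b) x y = ev1 a x * ev1 b y := by
  induction b with
  | nil => simp [outer, ev2, ev1]
  | cons d b ih => simp only [outer, ev2, ih, ev1_lsc, ev1]; ring
theorem map_ev1 {S : Type*} [CommRing S] (f : R →+* S) (a : List Int) (x : R) :
    f (ev1 a x) = ev1 a (f x) := by
  induction a with
  | nil => simp [ev1]
  | cons d a ih => simp [ev1, ih]
theorem map_ev2 {S : Type*} [CommRing S] (f : R →+* S) (a : List (List Int)) (x y : R) :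
    f (ev2 a x y) = ev2 a (f x) (f y) := by
  induction a with
  | nil => simp [ev2]
  | cons d a ih => simp [ev2, ih, map_ev1]
theorem ev1_lder (n : Int) (a : List Int) (x : R) :
    ev1 (lder n a) x = n * ev1 a x + x * Polynomial.eval x (Polynomial.derivative
      (ev1 a (Polynomial.X : Polynomial R))) := by
  induction a generalizing n with
  | nil => simp [lder, ev1]
  | cons d a ih =>
    have h : Polynomial.eval x (ev1 a (Polynomial.X : Polynomial R)) = ev1 a x := by
      simpa using map_ev1 (Polynomial.evalRingHom x) a (Polynomial.X : Polynomial R)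
    have h2 : ((Int.add n 1 : Int) : R) = n + 1 := by exact_mod_cast Int.cast_add n 1
    simp only [lder, ev1, ih, cast_imul, h2]
    simp [h]
    ring
end

/-! Kronecker substitution -/
def lnorm : List Int → Nat
  | [] => 0
  | a :: as => Nat.add a.natAbs (lnorm as)
def bnorm : List (List Int) → Nat
  | [] => 0
  | a :: as => Nat.add (lnorm a) (bnorm as)
def evZ (B : Int) : List Int → Int
  | [] => 0
  | a :: as => Int.add a (Int.mul B (evZ B as))
theorem evZ_eq (B : Int) (a : List Int) : evZ B a = ev1 a B := by
  induction a with
  | nil => rfl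
  | cons d a ih => simp only [evZ, ev1, ← ih]; rfl
theorem lnorm_ladd (a b : List Int) : lnorm (ladd a b) ≤ lnorm a + lnorm b := by
  induction a generalizing b with
  | nil => simp [ladd, lnorm]
  | cons c a ih =>
    cases b with
    | nil => simp [ladd, lnorm]
    | cons d b =>
      have := ih b
      have h2 : (Int.add c d).natAbs ≤ c.natAbs + d.natAbs := Int.natAbs_add_le c d
      simp only [ladd, lnorm, Nat.add_eq]; omega
theorem lnorm_lsc (c : Int) (a : List Int) : lnorm (lsc c a) = c.natAbs * lnorm a := by
  induction a with
  | nil => simp [lsc, lnorm]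
  | cons d a ih =>
    have : (Int.mul c d).natAbs = c.natAbs * d.natAbs := Int.natAbs_mul c d
    simp only [lsc, lnorm, ih, Nat.add_eq, this]; ring
theorem lnorm_lmul (a b : List Int) : lnorm (lmul a b) ≤ lnorm a * lnorm b := by
  induction a with
  | nil => simp [lmul, lnorm]
  | cons d a ih =>
    refine (lnorm_ladd _ _).trans ?_
    simp only [lnorm, lnorm_lsc, Nat.add_eq, Int.natAbs_zero]
    nlinarith
theorem bnorm_badd (a b : List (List Int)) : bnorm (badd a b) ≤ bnorm a + bnorm b := by
  induction a generalizing b with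
  | nil => simp [badd, bnorm]
  | cons c a ih =>
    cases b with
    | nil => simp [badd, bnorm]
    | cons d b =>
      have := ih b
      have h2 := lnorm_ladd c d
      simp only [badd, bnorm, Nat.add_eq]; omega
theorem bnorm_bsc (c : List Int) (a : List (List Int)) : bnorm (bsc c a) ≤ lnorm c * bnorm a := by
  induction a with
  | nil => simp [bsc, bnorm]
  | cons d a ih =>
    have := lnorm_lmul c d
    simp only [bsc, bnorm, Nat.add_eq]; nlinarith
theorem bnorm_bmul (a b : List (List Int)) : bnorm (bmul a b) ≤ bnorm a * bnorm b := by
  induction a with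
  | nil => simp [bmul, bnorm]
  | cons d a ih =>
    refine (bnorm_badd _ _).trans ?_
    have := bnorm_bsc d b
    simp only [bnorm, lnorm, Nat.add_eq]
    nlinarith
theorem map_badd (B : Int) (a b : List (List Int)) :
    (badd a b).map (evZ B) = ladd (a.map (evZ B)) (b.map (evZ B)) := by
  induction a generalizing b with
  | nil => simp [badd, ladd]
  | cons c a ih =>
    cases b with
    | nil => simp [badd, ladd]
    | cons d b =>
      simp only [badd, ladd, List.map_cons, ih, evZ_eq, ev1_ladd]; rfl
theorem map_bsc (B : Int) (c : List Int) (a : List (List Int)) :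
    (bsc c a).map (evZ B) = lsc (evZ B c) (a.map (evZ B)) := by
  induction a with
  | nil => simp [bsc, lsc]
  | cons d a ih => simp only [bsc, lsc, List.map_cons, ih, evZ_eq, ev1_lmul]; rfl
theorem map_bmul (B : Int) (a b : List (List Int)) :
    (bmul a b).map (evZ B) = lmul (a.map (evZ B)) (b.map (evZ B)) := by
  induction a with
  | nil => simp [bmul, lmul]
  | cons d a ih => simp only [bmul, lmul, List.map_cons, map_badd, map_bsc, ih]; rfl
theorem ev1_of_allz {R : Type*} [CommRing R] (a : List Int) (h : ∀ c ∈ a, c = 0) (x : R) :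
    ev1 a x = 0 := by
  induction a with
  | nil => rfl
  | cons c a ih =>
    simp only [List.mem_cons, forall_eq_or_imp] at h
    simp [ev1, h.1, ih h.2]
theorem vanish (B : Int) (a : List Int) (hn : (lnorm a : Int) < B) (h : evZ B a = 0) :
    ∀ c ∈ a, c = 0 := by
  induction a with
  | nil => simp
  | cons c a ih =>
    have hB : 0 < B := lt_of_le_of_lt (by positivity) hn
    simp only [lnorm, Nat.add_eq, Nat.cast_add, Int.natCast_natAbs] at hn
    have h' : c + B * evZ B a = 0 := h
    have hc : c = 0 := by
      apply Int.eq_zero_of_abs_lt_dvd (m := B)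
      · exact ⟨-evZ B a, by linarith⟩
      · have : (0:Int) ≤ lnorm a := by positivity
        linarith
    subst hc
    have h3 : evZ B a = 0 := by
      rcases mul_eq_zero.mp (by linarith : B * evZ B a = 0) with h | h
      · omega
      · exact h
    have := ih (by simpa using hn) h3
    simpa using this
theorem allz_iff (a : List Int) (h : allz a = true) : ∀ c ∈ a, c = 0 := by
  induction a with
  | nil => simp
  | cons c a ih =>
    simp only [allz, Bool.and_eq_true] at h
    have h1 : c = 0 := Int.natAbs_eq_zero.mp (Nat.eq_of_beq_eq_true h.1)
    simpa [h1] using ih h.2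
theorem bvanish (B : Int) (a : List (List Int)) (hn : (bnorm a : Int) < B)
    (h : allz (a.map (evZ B)) = true) : ∀ l ∈ a, ∀ c ∈ l, c = 0 := by
  have h := allz_iff _ h
  induction a with
  | nil => simp
  | cons c a ih =>
    simp only [bnorm, Nat.add_eq, Nat.cast_add] at hn
    simp only [List.map_cons, List.mem_cons, forall_eq_or_imp] at h ⊢
    refine ⟨vanish B c (by linarith [(by positivity : (0:Int) ≤ bnorm a)]) h.1, ?_⟩
    exact ih (by linarith [(by positivity : (0:Int) ≤ lnorm c)]) (by
      rename_i h0; simp only [allz, List.map_cons, Bool.and_eq_true] at h0; exact h0.2) h.2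
theorem ev2_of_allz {R : Type*} [CommRing R] (a : List (List Int)) (h : ∀ l ∈ a, ∀ c ∈ l, c = 0)
    (x y : R) : ev2 a x y = 0 := by
  induction a with
  | nil => rfl
  | cons c a ih =>
    simp only [List.mem_cons, forall_eq_or_imp] at h
    simp [ev2, ev1_of_allz c h.1, ih h.2]

theorem kron {R : Type*} [CommRing R] (B : Int) (N A Q : List (List Int))
    (h1 : allz (ladd (N.map (evZ B)) (lmul (A.map (evZ B)) (Q.map (evZ B)))) = true)
    (h2 : ((bnorm N + bnorm A * bnorm Q : Nat) : Int) < B) (x y : R) :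
    ev2 N x y = - (ev2 A x y * ev2 Q x y) := by
  have h := bvanish B (badd N (bmul A Q)) (by
    refine lt_of_le_of_lt ?_ h2
    exact_mod_cast (bnorm_badd _ _).trans (Nat.add_le_add_left (bnorm_bmul _ _) _))
    (by rw [map_badd, map_bmul]; exact h1)
  have := ev2_of_allz _ h x y
  rw [ev2_badd, ev2_bmul] at this
  linear_combination this

/-! The concrete polynomials -/
def gL : List Int := lmul [2,-1,1] (lmul [-1,-1,2,1] [-1,-1,9,1])
def rL : List Int := lsc (-136048896) (lpow gL 7)
def q1L : List Int := [6,27,30,1]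
def q2L : List Int := [-62,-75,144,169,93,18,1]
def q3L : List Int := [36,-108,117,1047,-1215,-2496,2002,4002,-2766,-332,-15,15,1]
def qL : List Int := lmul q1L (lmul (lpow q2L 2) (lpow q3L 4))
def AL : List (List Int) := [[69, 12, -109, 34, 33, 10, -1],
  [12, -424, -71, 173, -95, -1, -2], [-109, -71, 1762, 10, -267, 33, 10],
  [34, 173, 10, -2493, 215, 136, 13], [33, -95, -267, 215, 1074, -8, -16],
  [10, -1, 33, 136, -8, -135, -11], [-1, -2, 10, 13, -16, -11, -1]]
/-- `N(x,y) = q(x) r(y) - r(x) q(y)` -/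
def NL : List (List Int) := badd (outer qL rL) (outer (lsc (-1) rL) qL)
def BB : Nat := 2 ^ 192
def BI : Int := Int.ofNat BB
/-- offset making all balanced digits non-negative -/
def offs : Nat → Nat
  | 0 => 0
  | n+1 => Nat.add (BB / 2) (Nat.mul BB (offs n))
def digs : Nat → Nat → List Int
  | 0, _ => []
  | n+1, m => Int.sub (Int.ofNat (m % BB)) (Int.ofNat (BB / 2)) :: digs n (m / BB)
def decd (m : Int) : List Int := digs 58 (Int.toNat (Int.add m (Int.ofNat (offs 58))))
/-- quotient of integer lists (low order first); the sign is opposite -/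
def qdiv (a0 : Int) (at' : List Int) : Nat → List Int → List Int
  | 0, _ => []
  | _+1, [] => []
  | n+1, c :: cs =>
    let d := Int.ediv c a0
    Int.neg d :: qdiv a0 at' n (ladd cs (lsc (Int.neg d) at'))
def NB : List Int := NL.map (evZ BI)
def AB : List Int := AL.map (evZ BI)
def QB : List Int := qdiv AB.head! AB.tail 58 NB
def QL : List (List Int) := QB.map decd
set_option maxRecDepth 100000 in
theorem chk1 : allz (ladd (NL.map (evZ BI)) (lmul (AL.map (evZ BI)) (QL.map (evZ BI)))) = true := by
  decide +kernel
set_option maxRecDepth 100000 in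
theorem chk2 : Nat.blt (bnorm NL + bnorm AL * bnorm QL) BB = true := by
  decide +kernel
theorem kronN {R : Type*} [CommRing R] (B : Nat) (N A Q : List (List Int))
    (h1 : allz (ladd (N.map (evZ (Int.ofNat B))) (lmul (A.map (evZ (Int.ofNat B)))
      (Q.map (evZ (Int.ofNat B))))) = true)
    (h2 : Nat.blt (bnorm N + bnorm A * bnorm Q) B = true) (x y : R) :
    ev2 N x y = - (ev2 A x y * ev2 Q x y) :=
  kron (Int.ofNat B) N A Q h1 (Int.ofNat_lt.2 (Nat.le_of_ble_eq_true h2)) x y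
theorem ker2 {R : Type*} [CommRing R] (x y : R) : ev2 NL x y = -(ev2 AL x y * ev2 QL x y) :=
  kronN BB NL AL QL chk1 chk2 x y
theorem NL_eq {R : Type*} [CommRing R] (x y : R) :
    ev2 NL x y = ev1 qL x * ev1 rL y - ev1 rL x * ev1 qL y := by
  simp only [NL, ev2_badd, ev2_outer, ev1_lsc]; push_cast; ring
theorem qL_len : qL = qL.dropLast ++ [1] ∧ qL.dropLast.length = 63 := by decide +kernel
theorem rL_len : rL.length = 57 := by decide +kernel
theorem rL_fac {R : Type*} [CommRing R] (x : R) : ev1 rL x = -136048896 * ev1 gL x ^ 7 := by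
  rw [rL, ev1_lsc, ev1_lpow]; norm_num
theorem qL_fac {R : Type*} [CommRing R] (x : R) :
    ev1 qL x = ev1 q1L x * (ev1 q2L x ^ 2 * ev1 q3L x ^ 4) := by
  rw [qL, ev1_lmul, ev1_lmul, ev1_lpow, ev1_lpow]
attribute [irreducible] qL rL NL QL

/-! Abstract counting argument -/
section Count
variable {G V : Type*} [Group G] [MulAction G V] (adj : V → V → Prop)

/-- `c` continues the path `a - b` to a new line -/
def T3 (a b c : V) : Prop := adj b c ∧ c ≠ a ∧ ¬ adj a c

theorem cover [Finite V] (hs : ∀ a b, adj a b → adj b a) (hi : ∀ a, ¬ adj a a)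
    (h6 : ∀ a, Nat.card {b | adj a b} = 6)
    (hl : ∀ a b, adj a b → ∃! c, adj a c ∧ adj b c) (b x1 x2 x3 : V)
    (h1 : adj b x1) (h2 : adj b x2) (h3 : adj b x3)
    (n12 : x1 ≠ x2) (n13 : x1 ≠ x3) (n23 : x2 ≠ x3)
    (a12 : ¬ adj x1 x2) (a13 : ¬ adj x1 x3) (a23 : ¬ adj x2 x3) (y : V) (hy : adj b y) :
    (y = x1 ∨ adj x1 y) ∨ (y = x2 ∨ adj x2 y) ∨ (y = x3 ∨ adj x3 y) := by
  classical
  have := Fintype.ofFinite V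
  obtain ⟨m1, ⟨hm1, hm1'⟩, u1⟩ := hl b x1 h1
  obtain ⟨m2, ⟨hm2, hm2'⟩, u2⟩ := hl b x2 h2
  obtain ⟨m3, ⟨hm3, hm3'⟩, u3⟩ := hl b x3 h3
  have key : ∀ x x' m, adj b x → adj b x' → adj b m → adj x m → adj x' m → x = x' := by
    intro x x' m hx hx' hm h h'
    obtain ⟨c, _, u⟩ := hl b m hm
    rw [u x ⟨hx, hs _ _ h⟩, u x' ⟨hx', hs _ _ h'⟩]
  have hsub : ({x1, x2, x3, m1, m2, m3} : Finset V) ⊆ Finset.univ.filter (adj b) := by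
    intro z hz
    simp only [Finset.mem_insert, Finset.mem_singleton] at hz
    simp only [Finset.mem_filter, Finset.mem_univ, true_and]
    rcases hz with h | h | h | h | h | h <;> subst h <;> assumption
  have hc : ({x1, x2, x3, m1, m2, m3} : Finset V).card = 6 := by
    have e : ∀ x m, adj x m → x ≠ m := fun x m h e => hi m (e ▸ h)
    have k12 : m1 ≠ m2 := fun h => n12 (key x1 x2 m1 h1 h2 hm1 hm1' (h ▸ hm2'))
    have k13 : m1 ≠ m3 := fun h => n13 (key x1 x3 m1 h1 h3 hm1 hm1' (h ▸ hm3'))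
    have k23 : m2 ≠ m3 := fun h => n23 (key x2 x3 m2 h2 h3 hm2 hm2' (h ▸ hm3'))
    have l11 := e _ _ hm1'
    have l22 := e _ _ hm2'
    have l33 := e _ _ hm3'
    have l12 : x1 ≠ m2 := fun h => a12 (hs _ _ (h ▸ hm2'))
    have l13 : x1 ≠ m3 := fun h => a13 (hs _ _ (h ▸ hm3'))
    have l21 : x2 ≠ m1 := fun h => a12 (h ▸ hm1')
    have l23 : x2 ≠ m3 := fun h => a23 (hs _ _ (h ▸ hm3'))
    have l31 : x3 ≠ m1 := fun h => a13 (h ▸ hm1')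
    have l32 : x3 ≠ m2 := fun h => a23 (h ▸ hm2')
    rw [Finset.card_insert_of_notMem (by simp [*]), Finset.card_insert_of_notMem (by simp [*]),
      Finset.card_insert_of_notMem (by simp [*]), Finset.card_insert_of_notMem (by simp [*]),
      Finset.card_insert_of_notMem (by simp [*]), Finset.card_singleton]
  have heq := Finset.eq_of_subset_of_card_le hsub (by
    rw [hc, ← h6 b, Nat.card_eq_fintype_card, Fintype.card_subtype]
    simp)
  have : y ∈ ({x1, x2, x3, m1, m2, m3} : Finset V) := by rw [heq]; simpa using hy
  simp only [Finset.mem_insert, Finset.mem_singleton] at this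
  rcases this with h | h | h | h | h | h <;> subst h <;> tauto


theorem card4 [Finite V] (h6 : ∀ a, Nat.card {b | adj a b} = 6)
    (hs : ∀ a b, adj a b → adj b a) (hi : ∀ a, ¬ adj a a)
    (hl : ∀ a b, adj a b → ∃! c, adj a c ∧ adj b c) (b c : V) (h : adj b c) :
    Nat.card {d | T3 adj b c d} = 4 := by
  classical
  have := Fintype.ofFinite V
  obtain ⟨m, ⟨hm, hm'⟩, u⟩ := hl b c h
  have e : {d | adj c d} = insert b (insert m {d | T3 adj b c d}) := by
    ext d
    simp only [Set.mem_ofPred_eq, Set.mem_insert_iff, T3]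
    constructor
    · intro hd
      by_cases h1 : d = b
      · exact Or.inl h1
      by_cases h2 : adj b d
      · exact Or.inr (Or.inl (u d ⟨h2, hd⟩))
      · exact Or.inr (Or.inr ⟨hd, h1, h2⟩)
    · rintro (h1 | h1 | h1)
      · subst h1; exact hs _ _ h
      · subst h1; exact hm'
      · exact h1.1
  have h6 := h6 c
  rw [Nat.card_coe_set_eq] at h6 ⊢
  rw [e, Set.ncard_insert_of_notMem, Set.ncard_insert_of_notMem] at h6
  · omega
  · simp only [T3, Set.mem_ofPred_eq]; tauto
  · simp only [T3, Set.mem_ofPred_eq, Set.mem_insert_iff]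
    rintro (h1 | h1)
    · subst h1; exact hi _ hm
    · exact h1.2.1 rfl

theorem mate (hl : ∀ a b, adj a b → ∃! c, adj a c ∧ adj b c) {b x y z : V} (hx : adj b x)
    (hy : adj b y) (hz : adj b z) (h1 : adj x y) (h2 : adj x z) : y = z :=
  (hl b x hx).unique ⟨hy, h1⟩ ⟨hz, h2⟩

theorem pairs (hs : ∀ a b, adj a b → adj b a)
    (hl : ∀ a b, adj a b → ∃! c, adj a c ∧ adj b c)
    (hG : ∀ (g : G) a b, adj a b → adj (g • a) (g • b)) (b : V) (H : Subgroup G)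
    (E : Set V) (hE : ∀ x ∈ E, adj b x) (hHE : ∀ h ∈ H, ∀ x ∈ E, h • x ∈ E)
    (a : V) (ha : a ∈ E) (hc : ∀ y ∈ E, ∃ g ∈ H, y = g • a ∨ adj (g • a) y)
    (x0 : V) (hx0 : x0 ∈ E) (h0 : G) (hh0 : h0 ∈ H) (hsw : adj x0 (h0 • x0)) :
    ∀ x ∈ E, ∀ y ∈ E, ∃ h ∈ H, h • x = y := by
  have Pt : ∀ x ∈ E, ∀ y ∈ E, ∃ h ∈ H, y = h • x ∨ adj (h • x) y := by
    intro x hx y hy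
    obtain ⟨g1, hg1, h1⟩ := hc x hx
    obtain ⟨g2, hg2, h2⟩ := hc y hy
    refine ⟨g2 * g1⁻¹, H.mul_mem hg2 (H.inv_mem hg1), ?_⟩
    have h1' : (g2 * g1⁻¹) • x = g2 • a ∨ adj (g2 • a) ((g2 * g1⁻¹) • x) := by
      rcases h1 with h1 | h1
      · left; rw [h1, smul_smul]; simp
      · right
        have := hG (g2 * g1⁻¹) _ _ h1
        rw [smul_smul] at this; simpa using this
    have e1 := hE _ (hHE _ (H.mul_mem hg2 (H.inv_mem hg1)) x hx)
    have e2 := hE _ (hHE _ hg2 a ha)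
    have e3 := hE _ hy
    rcases h1' with h1' | h1'
    · rw [h1']; exact h2
    · rcases h2 with h2 | h2
      · right; rw [h2]; exact hs _ _ h1'
      · left; exact mate adj hl e2 e3 e1 h2 h1'
  have Sw : ∀ x ∈ E, ∃ h ∈ H, adj x (h • x) := by
    intro x hx
    obtain ⟨g, hg, h1⟩ := Pt x0 hx0 x hx
    have h2 := hG g _ _ hsw
    rcases h1 with h1 | h1
    · refine ⟨g * h0 * g⁻¹, H.mul_mem (H.mul_mem hg hh0) (H.inv_mem hg), ?_⟩
      rw [h1]; simpa [smul_smul] using h2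
    · have h3 : x = g • h0 • x0 := mate adj hl (hE _ (hHE _ hg _ hx0)) (hE _ hx)
        (hE _ (hHE _ hg _ (hHE _ hh0 _ hx0))) h1 h2
      refine ⟨g * h0⁻¹ * g⁻¹, H.mul_mem (H.mul_mem hg (H.inv_mem hh0)) (H.inv_mem hg), ?_⟩
      rw [h3]; simpa [smul_smul] using hs _ _ h2
  intro x hx y hy
  obtain ⟨g, hg, h1⟩ := Pt x hx y hy
  rcases h1 with h1 | h1
  · exact ⟨g, hg, h1.symm⟩
  · obtain ⟨h, hh, h2⟩ := Sw (g • x) (hHE _ hg _ hx)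
    refine ⟨h * g, H.mul_mem hh hg, ?_⟩
    rw [mul_smul]
    exact mate adj hl (hE _ (hHE _ hg _ hx)) (hE _ (hHE _ hh _ (hHE _ hg _ hx))) (hE _ hy) h2 h1

theorem T3_smul (hG : ∀ (g : G) a b, adj a b → adj (g • a) (g • b)) (g : G) {a b c : V}
    (h : T3 adj a b c) : T3 adj (g • a) (g • b) (g • c) := by
  refine ⟨hG _ _ _ h.1, fun e => h.2.1 (smul_left_cancel g e), fun e => h.2.2 ?_⟩
  simpa using hG g⁻¹ _ _ e

theorem stepT [Finite V] (hs : ∀ a b, adj a b → adj b a) (hi : ∀ a, ¬ adj a a)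
    (h6 : ∀ a, Nat.card {b | adj a b} = 6)
    (hl : ∀ a b, adj a b → ∃! c, adj a c ∧ adj b c)
    (hG : ∀ (g : G) a b, adj a b → adj (g • a) (g • b)) (b c : V) (hbc : adj b c) (H : Subgroup G)
    (hb : ∀ h ∈ H, h • b = b) (hc : ∀ h ∈ H, h • c = c)
    (l1 : ∃ x, T3 adj b c x ∧ ∃ g ∈ H, g • x ≠ x ∧ ¬ adj x (g • x))
    (s1 : ∃ x, T3 adj b c x ∧ ∃ g ∈ H, adj x (g • x)) :
    ∀ x, T3 adj b c x → ∀ y, T3 adj b c y → ∃ h ∈ H, h • x = y := by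
  obtain ⟨x, hx, g, hg, hn, ha⟩ := l1
  obtain ⟨x0, hx0, h0, hh0, hsw⟩ := s1
  have inv : ∀ h ∈ H, ∀ x ∈ {d | T3 adj b c d}, h • x ∈ {d | T3 adj b c d} := by
    intro h hh x hx
    have := T3_smul adj hG h hx
    rw [hb h hh, hc h hh] at this
    exact this
  refine pairs adj hs hl hG c H {d | T3 adj b c d} (fun x hx => hx.1) inv x hx ?_ x0 hx0 h0 hh0 hsw
  intro y hy
  have hgx : T3 adj b c (g • x) := inv g hg x hx
  rcases cover adj hs hi h6 hl c b x (g • x) (hs _ _ hbc) hx.1 hgx.1 hx.2.1.symm hgx.2.1.symm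
    hn.symm hx.2.2 hgx.2.2 ha y hy.1 with h | h | h
  · exact absurd h (by have := hy.2; tauto)
  · exact ⟨1, H.one_mem, by simpa using h⟩
  · exact ⟨g, hg, h⟩

theorem step2 [Finite V] (hs : ∀ a b, adj a b → adj b a) (hi : ∀ a, ¬ adj a a)
    (h6 : ∀ a, Nat.card {b | adj a b} = 6)
    (hl : ∀ a b, adj a b → ∃! c, adj a c ∧ adj b c)
    (hG : ∀ (g : G) a b, adj a b → adj (g • a) (g • b)) (b : V) (H : Subgroup G)
    (hb : ∀ h ∈ H, h • b = b)
    (l1 : ∃ x, adj b x ∧ ∃ g ∈ H, g • x ≠ x ∧ ¬ adj x (g • x) ∧ g • g • x ≠ x ∧ ¬ adj x (g • g • x))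
    (s1 : ∃ x, adj b x ∧ ∃ g ∈ H, adj x (g • x)) :
    ∀ x, adj b x → ∀ y, adj b y → ∃ h ∈ H, h • x = y := by
  obtain ⟨x, hx, g, hg, hn, ha, hn2, ha2⟩ := l1
  obtain ⟨x0, hx0, h0, hh0, hsw⟩ := s1
  have inv : ∀ h ∈ H, ∀ x ∈ {d | adj b d}, h • x ∈ {d | adj b d} := by
    intro h hh x hx
    have := hG h _ _ hx
    rw [hb h hh] at this
    exact this
  refine pairs adj hs hl hG b H {d | adj b d} (fun x hx => hx) inv x hx ?_ x0 hx0 h0 hh0 hsw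
  intro y hy
  have hgx : adj b (g • x) := inv g hg x hx
  rcases cover adj hs hi h6 hl b x (g • x) (g • g • x) hx hgx (inv g hg _ hgx) hn.symm hn2.symm
    (fun e => hn (smul_left_cancel g e).symm) ha ha2
    (fun e => ha (by simpa using hG g⁻¹ _ _ e)) y hy with h | h | h
  · exact ⟨1, H.one_mem, by simpa using h⟩
  · exact ⟨g, hg, h⟩
  · exact ⟨g * g, H.mul_mem hg hg, by simpa [smul_smul] using h⟩

theorem chain [Finite V] (H : Subgroup G) (x : V) (E : Set V) (hx : x ∈ E)
    (h1 : ∀ h ∈ H, ∀ x ∈ E, h • x ∈ E) (h2 : ∀ x ∈ E, ∀ y ∈ E, ∃ h ∈ H, h • x = y) :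
    Nat.card H = Nat.card E * Nat.card (H ⊓ MulAction.stabilizer G x : Subgroup G) := by
  have e : MulAction.orbit H x = E := by
    ext y
    constructor
    · rintro ⟨h, rfl⟩; exact h1 h h.2 x hx
    · intro hy
      obtain ⟨h, hh, e⟩ := h2 x hx y hy
      exact ⟨⟨h, hh⟩, e⟩
  have := Nat.card_congr (MulAction.orbitProdStabilizerEquivGroup H x)
  rw [← this, Nat.card_prod, e]
  congr 1
  refine Nat.card_congr ⟨fun y => ⟨y.1.1, y.1.2, y.2⟩, fun y => ⟨⟨y.1, y.2.1⟩, y.2.2⟩, ?_, ?_⟩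
  · intro y; rfl
  · intro y; rfl

theorem count [Finite V] (hs : ∀ a b, adj a b → adj b a) (hi : ∀ a, ¬ adj a a)
    (h6 : ∀ a, Nat.card {b | adj a b} = 6) (hV : Nat.card V = 63)
    (hl : ∀ a b, adj a b → ∃! c, adj a c ∧ adj b c)
    (hG : ∀ (g : G) a b, adj a b → adj (g • a) (g • b))
    (tr : ∀ a b : V, ∃ g : G, g • a = b)
    (d3 : ∃ (b x : V) (g : G), adj b x ∧ g • b = b ∧
      g • x ≠ x ∧ ¬ adj x (g • x) ∧ g • g • x ≠ x ∧ ¬ adj x (g • g • x))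
    (sw : ∃ (a b c d : V) (g : G), adj a b ∧ T3 adj a b c ∧ T3 adj b c d ∧
      g • a = a ∧ g • b = b ∧ g • c = c ∧ adj d (g • d))
    (ln : ∃ (a b c d e : V) (g : G), adj a b ∧ T3 adj a b c ∧ T3 adj b c d ∧ T3 adj c d e ∧
      g • a = a ∧ g • b = b ∧ g • c = c ∧ g • d = d ∧ g • e ≠ e ∧ ¬ adj e (g • e))
    (rg : ∃ (a b c d : V) (y z : V), adj a b ∧ T3 adj a b c ∧ T3 adj b c d ∧ 
      ∀ g h : G, g • a = a → g • b = b → g • c = c → g • d = d →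
        h • a = a → h • b = b → h • c = c → h • d = d → 
        (g • y = y ∨ g • y = z) ∧ (g • y = h • y → g = h)) :
    Nat.card G = 12096 := by
  have tr2 : ∀ a b a' b', adj a b → adj a' b' → ∃ g : G, g • a = a' ∧ g • b = b' := by
    intro a b a' b' h h'
    obtain ⟨g, hg⟩ := tr a a'
    have : ∀ x, adj a' x → ∀ y, adj a' y → ∃ h ∈ MulAction.stabilizer G a', h • x = y := by
      apply step2 adj hs hi h6 hl hG a' _ (fun h hh => hh)
      · obtain ⟨b0, x0, s, k1, k2, k3, k4, k5, k6⟩ := d3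
        obtain ⟨u, rfl⟩ := tr b0 a'
        refine ⟨u • x0, hG _ _ _ k1, u * s * u⁻¹, ?_, ?_, ?_, ?_, ?_⟩
        · simp [MulAction.mem_stabilizer_iff, mul_smul, k2]
        · simpa [mul_smul] using k3
        · intro e; apply k4; simpa [mul_smul] using hG u⁻¹ _ _ e
        · simpa [mul_smul] using k5
        · intro e; apply k6; simpa [mul_smul] using hG u⁻¹ _ _ e
      · obtain ⟨a0, b0, c0, d0, s, k0, k1, k2, k3, k4, k5, k6⟩ := sw
        obtain ⟨u, rfl⟩ := tr c0 a'
        refine ⟨u • d0, hG _ _ _ k2.1, u * s * u⁻¹, ?_, ?_⟩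
        · simp [MulAction.mem_stabilizer_iff, mul_smul, k5]
        · simpa [mul_smul] using hG u _ _ k6
    obtain ⟨k, hk, e⟩ := this (g • b) (by rw [← hg]; exact hG _ _ _ h) b' h'
    exact ⟨k * g, by rw [mul_smul, hg]; exact hk, by rw [mul_smul, e]⟩
  have st3 : ∀ a b, adj a b → ∀ x, T3 adj a b x → ∀ y, T3 adj a b y →
      ∃ h ∈ MulAction.stabilizer G a ⊓ MulAction.stabilizer G b, h • x = y := by
    intro a b hab
    apply stepT adj hs hi h6 hl hG a b hab (MulAction.stabilizer G a ⊓ MulAction.stabilizer G b) (fun h hh => hh.1) (fun h hh => hh.2)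
    · obtain ⟨a0, b0, c0, d0, e0, s, k0, k1, k2, k3, k4, k5, k6, k7, k8, k9⟩ := ln
      obtain ⟨u, rfl, rfl⟩ := tr2 c0 d0 a b k2.1 hab
      refine ⟨u • e0, T3_smul adj hG _ k3, u * s * u⁻¹, ⟨?_, ?_⟩, ?_, ?_⟩
      · simp [mul_smul, k6]
      · simp [mul_smul, k7]
      · simpa [mul_smul] using k8
      · intro e; apply k9; simpa [mul_smul] using hG u⁻¹ _ _ e
    · obtain ⟨a0, b0, c0, d0, s, k0, k1, k2, k3, k4, k5, k6⟩ := sw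
      obtain ⟨u, rfl, rfl⟩ := tr2 b0 c0 a b k1.1 hab
      refine ⟨u • d0, T3_smul adj hG _ k2, u * s * u⁻¹, ⟨?_, ?_⟩, ?_⟩
      · simp [mul_smul, k4]
      · simp [mul_smul, k5]
      · simpa [mul_smul] using hG u _ _ k6
  have tr3 : ∀ a b c a' b' c', adj a b → adj a' b' → T3 adj a b c → T3 adj a' b' c' →
      ∃ g : G, g • a = a' ∧ g • b = b' ∧ g • c = c' := by
    intro a b c a' b' c' h h' k k'
    obtain ⟨g, rfl, rfl⟩ := tr2 a b a' b' h h'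
    obtain ⟨u, hu, rfl⟩ := st3 _ _ h' (g • c) (T3_smul adj hG _ k) c' k'
    exact ⟨u * g, by rw [mul_smul]; exact hu.1, by rw [mul_smul]; exact hu.2, by rw [mul_smul]⟩
  have st4 : ∀ a b c, adj a b → T3 adj a b c → ∀ x, T3 adj b c x → ∀ y, T3 adj b c y →
      ∃ h ∈ MulAction.stabilizer G a ⊓ MulAction.stabilizer G b ⊓ MulAction.stabilizer G c,
        h • x = y := by
    intro a b c hab habc
    apply stepT adj hs hi h6 hl hG b c habc.1 (MulAction.stabilizer G a ⊓ MulAction.stabilizer G b ⊓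
      MulAction.stabilizer G c) (fun h hh => hh.1.2) (fun h hh => hh.2)
    · obtain ⟨a0, b0, c0, d0, e0, s, k0, k1, k2, k3, k4, k5, k6, k7, k8, k9⟩ := ln
      obtain ⟨u, rfl, rfl, rfl⟩ := tr3 b0 c0 d0 a b c k1.1 hab k2 habc
      refine ⟨u • e0, T3_smul adj hG _ k3, u * s * u⁻¹, ⟨⟨?_, ?_⟩, ?_⟩, ?_, ?_⟩
      · simp [mul_smul, k5]
      · simp [mul_smul, k6]
      · simp [mul_smul, k7]
      · simpa [mul_smul] using k8
      · intro e; apply k9; simpa [mul_smul] using hG u⁻¹ _ _ e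
    · obtain ⟨a0, b0, c0, d0, s, k0, k1, k2, k3, k4, k5, k6⟩ := sw
      obtain ⟨u, rfl, rfl, rfl⟩ := tr3 a0 b0 c0 a b c k0 hab k1 habc
      refine ⟨u • d0, T3_smul adj hG _ k2, u * s * u⁻¹, ⟨⟨?_, ?_⟩, ?_⟩, ?_⟩
      · simp [mul_smul, k3]
      · simp [mul_smul, k4]
      · simp [mul_smul, k5]
      · simpa [mul_smul] using hG u _ _ k6
  obtain ⟨a, b, c, d, y, z, hab, habc, hbcd, hr⟩ := rg
  have c1 := chain (⊤ : Subgroup G) a Set.univ trivial (fun _ _ _ _ => trivial) (fun x _ y _ => by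
    obtain ⟨g, hg⟩ := tr x y; exact ⟨g, trivial, hg⟩)
  have c2 := chain (⊤ ⊓ MulAction.stabilizer G a) b {b | adj a b} hab (fun h hh x hx => by
    have := hG h _ _ hx
    have hh' : h • a = a := hh.2
    rw [hh'] at this; exact this) (fun x hx y hy => by
    obtain ⟨g, hg, h2⟩ := tr2 a x a y hx hy
    exact ⟨g, ⟨trivial, hg⟩, h2⟩)
  have c3 := chain (⊤ ⊓ MulAction.stabilizer G a ⊓ MulAction.stabilizer G b) c {c | T3 adj a b c}
    habc (fun h hh x hx => by
    have := T3_smul adj hG h hx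
    have hh' : h • a = a := hh.1.2
    have hh'' : h • b = b := hh.2
    rw [hh', hh''] at this; exact this) (fun x hx y hy => by
    obtain ⟨g, hg, h2⟩ := st3 a b hab x hx y hy
    exact ⟨g, ⟨⟨trivial, hg.1⟩, hg.2⟩, h2⟩)
  have c4 := chain (⊤ ⊓ MulAction.stabilizer G a ⊓ MulAction.stabilizer G b ⊓
    MulAction.stabilizer G c) d {d | T3 adj b c d}
    hbcd (fun h hh x hx => by
    have := T3_smul adj hG h hx
    have hh' : h • b = b := hh.1.2
    have hh'' : h • c = c := hh.2
    rw [hh', hh''] at this; exact this) (fun x hx y hy => by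
    obtain ⟨g, hg, h2⟩ := st4 a b c hab habc x hx y hy
    exact ⟨g, ⟨⟨⟨trivial, hg.1.1⟩, hg.1.2⟩, hg.2⟩, h2⟩)
  have c5 : Nat.card (⊤ ⊓ MulAction.stabilizer G a ⊓ MulAction.stabilizer G b ⊓
    MulAction.stabilizer G c ⊓ MulAction.stabilizer G d : Subgroup G) = 2 := by
    obtain ⟨a0, b0, c0, d0, e0, s, k0, k1, k2, k3, k4, k5, k6, k7, k8, k9⟩ := ln
    obtain ⟨u, rfl, rfl, rfl⟩ := tr3 a0 b0 c0 a b c k0 hab k1 habc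
    obtain ⟨v, hv, rfl⟩ := st4 _ _ _ hab habc (u • d0) (T3_smul adj hG _ k2) d hbcd
    have v1 : v • u • a0 = u • a0 := hv.1.1
    have v2 : v • u • b0 = u • b0 := hv.1.2
    have v3 : v • u • c0 = u • c0 := hv.2
    have w1 : u⁻¹ • v⁻¹ • u • a0 = a0 := by rw [← v1]; simp
    have w2 : u⁻¹ • v⁻¹ • u • b0 = b0 := by rw [← v2]; simp
    have w3 : u⁻¹ • v⁻¹ • u • c0 = c0 := by rw [← v3]; simp
    have ms : v * u * s * u⁻¹ * v⁻¹ ∈ (⊤ ⊓ MulAction.stabilizer G (u • a0) ⊓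
      MulAction.stabilizer G (u • b0) ⊓ MulAction.stabilizer G (u • c0) ⊓
      MulAction.stabilizer G (v • u • d0) : Subgroup G) := by
      refine ⟨⟨⟨⟨trivial, ?_⟩, ?_⟩, ?_⟩, ?_⟩
      · simp [mul_smul, w1, k4, v1]
      · simp [mul_smul, w2, k5, v2]
      · simp [mul_smul, w3, k6, v3]
      · simp [mul_smul, k7]
    rw [Nat.card_eq_two_iff]
    refine ⟨1, ⟨_, ms⟩, ?_, ?_⟩
    · intro e
      have e : 1 = v * u * s * u⁻¹ * v⁻¹ := congrArg Subtype.val e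
      have : s = 1 := by
        calc s = u⁻¹ * v⁻¹ * (v * u * s * u⁻¹ * v⁻¹) * v * u := by group
          _ = 1 := by rw [← e]; group
      exact k8 (by simp [this])
    · rw [Set.eq_univ_iff_forall]
      rintro ⟨g, ⟨⟨⟨_, g1⟩, g2⟩, g3⟩, g4⟩
      have hms := ms
      obtain ⟨⟨⟨⟨_, s1⟩, s2⟩, s3⟩, s4⟩ := hms
      have r1 := hr g 1 g1 g2 g3 g4 (one_smul _ _) (one_smul _ _) (one_smul _ _) (one_smul _ _)
      have r2 := hr g _ g1 g2 g3 g4 s1 s2 s3 s4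
      have r3 := hr _ 1 s1 s2 s3 s4 (one_smul _ _) (one_smul _ _) (one_smul _ _) (one_smul _ _)
      simp only [Set.mem_insert_iff, Set.mem_singleton_iff, Subtype.ext_iff, Subgroup.coe_one]
      rcases r1.1 with h | h
      · left; exact r1.2 (by rw [h, one_smul])
      · right
        rcases r3.1 with h' | h'
        · exfalso
          have e := r3.2 (by rw [h', one_smul])
          have : s = 1 := by
            calc s = u⁻¹ * v⁻¹ * (v * u * s * u⁻¹ * v⁻¹) * v * u := by group
              _ = 1 := by rw [e]; group
          exact k8 (by simp [this])
        · exact r2.2 (by rw [h, h'])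
  rw [Subgroup.card_top, c2, c3, c4, c5, card4 adj h6 hs hi hl a b hab,
    card4 adj h6 hs hi hl b c habc.1, h6 a, Nat.card_coe_set_eq, Set.ncard_univ, hV] at c1
  exact c1
end Count

section Place
theorem placeA (R K : Type) (L : Type) [CommRing R] [IsDomain R] [IsIntegrallyClosed R]
    [IsNoetherianRing R] [Field K] [Field L] [Algebra R K] [IsFractionRing R K] [Algebra K L]
    [Algebra R L] [IsScalarTower R K L] [FiniteDimensional K L] [IsGalois K L]
    (p : ℕ) [Fact p.Prime] (ψ : R →+* ZMod p) :
    ∃ (k : Type) (_ : Field k) (_ : CharP k p) (σ : L ≃ₐ[K] L) (φ : integralClosure R L →+* k),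
      (∀ a : R, ψ a = 0 → φ (algebraMap _ _ a) = 0) ∧
      ∀ x y : integralClosure R L, (y : L) = σ x → φ y = φ x ^ p := by
  classical
  let act := IsIntegralClosure.MulSemiringAction R K L (integralClosure R L)
  have : IsFractionRing (integralClosure R L) L :=
    integralClosure.isFractionRing_of_finite_extension K L
  have := Algebra.isInvariant_of_isGalois R K L (integralClosure R L)
  have := IsIntegralClosure.finite R K L (integralClosure R L)
  have hψ : Function.Surjective ψ := ZMod.ringHom_surjective ψ
  let P : Ideal R := RingHom.ker ψ
  have hP : P.IsMaximal := RingHom.ker_isMaximal_of_surjective ψ hψ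
  let eP : R ⧸ P ≃+* ZMod p := RingHom.quotientKerEquivOfSurjective hψ
  have : Module.IsTorsionFree R L := by
    have : FaithfulSMul R K := inferInstance
    have := Module.IsTorsionFree.trans_faithfulSMul R K L
    infer_instance
  have hinj : Function.Injective (algebraMap R (integralClosure R L)) := by
    have : Function.Injective (algebraMap R L) := by
      rw [IsScalarTower.algebraMap_eq R K L]
      exact (algebraMap K L).injective.comp (IsFractionRing.injective R K)
    intro a b h
    exact this (congrArg Subtype.val h)
  obtain ⟨Q, hQ, hQP⟩ := Ideal.exists_ideal_over_maximal_of_isIntegral (S := integralClosure R L) P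
    (by rw [(RingHom.injective_iff_ker_eq_bot _).1 hinj]; exact bot_le)
  have hu : Q.under R = P := hQP
  have : Q.LiesOver P := ⟨hQP.symm⟩
  have : Finite (R ⧸ P) := Finite.of_equiv _ eP.symm.toEquiv
  have : Module.Finite (R ⧸ P) (integralClosure R L ⧸ Q) := inferInstance
  have : Finite (integralClosure R L ⧸ Q) := Module.finite_of_finite (R ⧸ P)
  let := Ideal.Quotient.field Q
  have : SMulCommClass (L ≃ₐ[K] L) R (integralClosure R L) :=
    ⟨fun g a x => (map_smul (galRestrict R K L (integralClosure R L) g) a x)⟩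
  obtain ⟨σ, hσ⟩ := IsArithFrobAt.exists_of_isInvariant R (L ≃ₐ[K] L) Q
  have hcard : Nat.card (R ⧸ Q.under R) = p := by
    rw [hu, Nat.card_congr eP.toEquiv, Nat.card_zmod]
  have hker : ∀ a : R, ψ a = 0 → Ideal.Quotient.mk Q (algebraMap R (integralClosure R L) a) = 0 := by
    intro a ha
    rw [Ideal.Quotient.eq_zero_iff_mem]
    have : a ∈ Q.under R := by rw [hu]; exact ha
    exact this
  refine ⟨integralClosure R L ⧸ Q, inferInstance, ?_, σ, Ideal.Quotient.mk Q, hker, ?_⟩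
  · have h0 : ((p : ℕ) : integralClosure R L ⧸ Q) = 0 := by
      have := hker (p : R) (by simp)
      simpa using this
    exact (CharP.charP_iff_prime_eq_zero (Fact.out : p.Prime)).2 h0
  · intro x y hxy
    have h := hσ x
    rw [hcard] at h
    have e : y = σ • x := by
      apply Subtype.ext
      rw [hxy]
      exact (algebraMap_galRestrict_apply R σ x).symm
    rw [e, ← map_pow, Ideal.Quotient.eq]
    exact h
end Place

section RRing
/-- The ring `ℤ[w]`, `w = 1 / (1 - t)`. -/
def RR : Type := Polynomial ℤ
noncomputable instance : CommRing RR := inferInstanceAs (CommRing (Polynomial ℤ))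
instance : IsDomain RR := inferInstanceAs (IsDomain (Polynomial ℤ))
instance : IsIntegrallyClosed RR := inferInstanceAs (IsIntegrallyClosed (Polynomial ℤ))
instance : IsNoetherianRing RR := inferInstanceAs (IsNoetherianRing (Polynomial ℤ))
noncomputable def ww : RatFunc ℚ := (1 - RatFunc.X)⁻¹
theorem X_tr : Transcendental ℚ (RatFunc.X : RatFunc ℚ) := by
  have := RatFunc.transcendental_X (K := ℚ)
  convert this
  exact Subsingleton.elim _ _
theorem one_sub_ne : (1 - RatFunc.X : RatFunc ℚ) ≠ 0 := by
  intro h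
  apply X_tr
  rw [← sub_eq_zero.1 h]
  exact isAlgebraic_one
theorem ww_ne : ww ≠ 0 := inv_ne_zero one_sub_ne
theorem X_eq : (RatFunc.X : RatFunc ℚ) = 1 - ww⁻¹ := by simp [ww]
theorem ww_tr : Transcendental ℤ ww := by
  intro h
  apply X_tr
  rw [X_eq]
  obtain ⟨P, hP, h⟩ := h
  have h : IsAlgebraic ℚ ww := by
    refine ⟨P.map (Int.castRingHom ℚ), ?_, ?_⟩
    · rwa [Ne, Polynomial.map_eq_zero_iff (by exact Int.cast_injective)]
    · rw [Polynomial.aeval_def, Polynomial.eval₂_map]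
      rw [Polynomial.aeval_def] at h
      have e : (algebraMap ℚ (RatFunc ℚ)).comp (Int.castRingHom ℚ) = algebraMap ℤ (RatFunc ℚ) :=
        RingHom.ext_int _ _
      rw [e]
      exact h
  exact isAlgebraic_one.sub h.inv
noncomputable def RRmap : RR →+* RatFunc ℚ := (Polynomial.aeval (R := ℤ) ww).toRingHom
noncomputable instance : Algebra RR (RatFunc ℚ) := RRmap.toAlgebra
noncomputable def RX : RR := (Polynomial.X : Polynomial ℤ)
theorem RRmap_X : algebraMap RR (RatFunc ℚ) RX = ww := Polynomial.aeval_X ww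
theorem RRmap_inj : Function.Injective (algebraMap RR (RatFunc ℚ)) :=
  transcendental_iff_injective.1 ww_tr
instance : IsFractionRing RR (RatFunc ℚ) := by
  have : FaithfulSMul RR (RatFunc ℚ) := (faithfulSMul_iff_algebraMap_injective _ _).2 RRmap_inj
  let f : FractionRing RR →+* RatFunc ℚ := IsFractionRing.lift RRmap_inj
  have hw : ww ∈ f.fieldRange :=
    ⟨algebraMap RR _ RX, by rw [← RRmap_X]; exact IsFractionRing.lift_algebraMap RRmap_inj RX⟩
  have hX : RatFunc.X ∈ f.fieldRange := by
    rw [X_eq]; exact sub_mem (one_mem _) (inv_mem hw)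
  have hp : ∀ P : Polynomial ℚ, algebraMap (Polynomial ℚ) (RatFunc ℚ) P ∈ f.fieldRange := by
    intro P
    induction P using Polynomial.induction_on' with
    | add a b ha hb => rw [map_add]; exact add_mem ha hb
    | monomial n a =>
      rw [← Polynomial.C_mul_X_pow_eq_monomial, map_mul, map_pow, RatFunc.algebraMap_X,
        RatFunc.algebraMap_C]
      refine mul_mem ?_ (pow_mem hX n)
      rw [eq_ratCast]
      exact SubfieldClass.ratCast_mem _ a
  refine IsFractionRing.of_field RR _ ?_
  intro z
  have hz : z ∈ f.fieldRange := by
    rw [← RatFunc.num_div_denom z]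
    exact div_mem (hp _) (hp _)
  obtain ⟨y, rfl⟩ := hz
  obtain ⟨a, b, hb, rfl⟩ := IsFractionRing.div_surjective (A := RR) y
  exact ⟨a, b, by rw [map_div₀]; simp only [f, IsFractionRing.lift_algebraMap]⟩

noncomputable def RRz (p : ℕ) (w0 : ℤ) : RR →+* ZMod p :=
  (Polynomial.eval₂RingHom (Int.castRingHom (ZMod p)) (w0 : ZMod p) : Polynomial ℤ →+* ZMod p)
theorem RRz_X (p : ℕ) (w0 : ℤ) : RRz p w0 RX = w0 :=
  Polynomial.eval₂_X (Int.castRingHom (ZMod p)) (w0 : ZMod p)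

theorem placeB (L : Type) [Field L] [Algebra (RatFunc ℚ) L] [FiniteDimensional (RatFunc ℚ) L]
    [IsGalois (RatFunc ℚ) L] (p : ℕ) [Fact p.Prime] (w0 : ℤ) :
    ∃ (k : Type) (_ : Field k) (_ : CharP k p) (σ : L ≃ₐ[RatFunc ℚ] L) (S : Subring L)
      (φ : S →+* k) (W : S), (W : L) = algebraMap (RatFunc ℚ) L ww ∧ φ W = w0 ∧
      (∀ (x : L) (P : Polynomial S), P.Monic → Polynomial.eval₂ S.subtype x P = 0 → x ∈ S) ∧
      (∀ x y : S, (y : L) = σ x → φ y = φ x ^ p) := by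
  let _ : Algebra RR L := ((algebraMap (RatFunc ℚ) L).comp (algebraMap RR (RatFunc ℚ))).toAlgebra
  have : IsScalarTower RR (RatFunc ℚ) L := IsScalarTower.of_algebraMap_eq fun _ => rfl
  obtain ⟨k, hk, hc, σ, φ, h1, h2⟩ := placeA RR (RatFunc ℚ) L p (RRz p w0)
  refine ⟨k, hk, hc, σ, (integralClosure RR L).toSubring, φ,
    algebraMap RR (integralClosure RR L) RX, ?_, ?_, ?_, h2⟩
  · exact congrArg (algebraMap (RatFunc ℚ) L) RRmap_X
  · have := h1 (RX - ((w0 : ℤ) : RR)) ?_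
    · rw [map_sub, map_sub, sub_eq_zero, map_intCast, map_intCast] at this
      exact this
    · rw [map_sub, map_intCast, RRz_X, sub_self]
  · intro x P hP hx
    have : IsIntegral (integralClosure RR L) x := ⟨P, hP, hx⟩
    exact isIntegral_trans (R := RR) x this
end RRing

section Vsec
/-- `q + w r` -/
noncomputable def fX {R : Type*} [CommRing R] (w : R) : Polynomial R :=
  ev1 qL (Polynomial.X : Polynomial R) + Polynomial.C w * ev1 rL (Polynomial.X : Polynomial R)
theorem ev1_append {R : Type*} [CommRing R] (a b : List Int) (x : R) :
    ev1 (a ++ b) x = ev1 a x + x ^ a.length * ev1 b x := by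
  induction a with
  | nil => simp [ev1]
  | cons c a ih => simp only [List.cons_append, ev1, ih, List.length_cons, pow_succ]; ring
theorem ev1_deg {R : Type*} [CommRing R] [Nontrivial R] (a : List Int) :
    (ev1 a (Polynomial.X : Polynomial R)).degree < a.length := by
  induction a with
  | nil => simp [ev1]
  | cons c a ih =>
    simp only [ev1, List.length_cons]
    refine (Polynomial.degree_add_le _ _).trans_lt (max_lt ?_ ?_)
    · refine lt_of_le_of_lt (b := 0) ?_ (by exact_mod_cast Nat.succ_pos _)
      rw [← map_intCast (Polynomial.C : R →+* Polynomial R)]; exact Polynomial.degree_C_le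
    · by_cases h : ev1 a (Polynomial.X : Polynomial R) = 0
      · simp [h]
      · rw [Polynomial.degree_eq_natDegree h] at ih
        rw [mul_comm, Polynomial.degree_mul_X, Polynomial.degree_eq_natDegree h]
        exact_mod_cast Nat.succ_lt_succ (by exact_mod_cast ih)
theorem ev1_monic {R : Type*} [CommRing R] [Nontrivial R] (a : List Int) :
    (ev1 (a ++ [1]) (Polynomial.X : Polynomial R)).Monic ∧
    (ev1 (a ++ [1]) (Polynomial.X : Polynomial R)).natDegree = a.length := by
  have e : ev1 (a ++ [1]) (Polynomial.X : Polynomial R) = Polynomial.X ^ a.length + ev1 a Polynomial.X := by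
    rw [ev1_append]; simp [ev1]; ring
  rw [e]
  exact ⟨Polynomial.monic_X_pow_add (ev1_deg a), by
    rw [Polynomial.natDegree_add_eq_left_of_degree_lt, Polynomial.natDegree_X_pow]
    simpa using ev1_deg a⟩
theorem qL_monic {R : Type*} [CommRing R] [Nontrivial R] :
    (ev1 qL (Polynomial.X : Polynomial R)).Monic ∧
    (ev1 qL (Polynomial.X : Polynomial R)).natDegree = 63 := by
  rw [qL_len.1]
  have := ev1_monic (R := R) qL.dropLast
  rw [qL_len.2] at this
  exact this
theorem fX_deg_lt {R : Type*} [CommRing R] [Nontrivial R] (w : R) :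
    (Polynomial.C w * ev1 rL (Polynomial.X : Polynomial R)).degree <
      (ev1 qL (Polynomial.X : Polynomial R)).degree := by
  rw [Polynomial.degree_eq_natDegree qL_monic.1.ne_zero, qL_monic.2]
  refine (Polynomial.degree_mul_le _ _).trans_lt ?_
  refine (add_le_add_left Polynomial.degree_C_le _).trans_lt ?_
  rw [zero_add]
  refine (ev1_deg rL).trans ?_
  rw [rL_len]; norm_num
theorem fX_monic {R : Type*} [CommRing R] [Nontrivial R] (w : R) :
    (fX w).Monic ∧ (fX w).natDegree = 63 := by
  refine ⟨qL_monic.1.add_of_left (fX_deg_lt w), ?_⟩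
  rw [fX, Polynomial.natDegree_add_eq_left_of_degree_lt (fX_deg_lt w), qL_monic.2]
theorem fX_map {R S : Type*} [CommRing R] [CommRing S] (f : R →+* S) (w : R) :
    (fX w).map f = fX (f w) := by
  rw [fX, Polynomial.map_add, Polynomial.map_mul, Polynomial.map_C,
    ← Polynomial.coe_mapRingHom, map_ev1, map_ev1]
  simp [fX]
theorem fX_eval {R : Type*} [CommRing R] (w x : R) :
    (fX w).eval x = ev1 qL x + w * ev1 rL x := by
  have := map_ev1 (Polynomial.evalRingHom x) qL Polynomial.X
  have h2 := map_ev1 (Polynomial.evalRingHom x) rL Polynomial.X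
  simp at this h2
  simp [fX, this, h2]
theorem fX_der {R : Type*} [CommRing R] (w : ℤ) (x : R) :
    ev1 (lder 0 (ladd qL (lsc w rL))) x = x * (fX (w : R)).derivative.eval x := by
  rw [ev1_lder]
  simp only [ev1_ladd, ev1_lsc]
  simp [fX]

attribute [irreducible] fX
variable (L : Type) [Field L] [Algebra (RatFunc ℚ) L]
/-- the set of roots -/
def Vt : Type := {x : L // (fX (algebraMap (RatFunc ℚ) L ww)).eval x = 0}
variable {L}
noncomputable instance : MulAction (L ≃ₐ[RatFunc ℚ] L) (Vt L) where
  smul g x := ⟨g x.1, by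
    have h := x.2
    rw [fX_eval] at h ⊢
    have := congrArg g h
    have e1 := map_ev1 (g : L →+* L) qL x.1
    have e2 := map_ev1 (g : L →+* L) rL x.1
    simp only [RingHom.coe_coe] at e1 e2
    rw [map_add, map_mul, e1, e2] at this
    simpa using this⟩
  one_smul x := rfl
  mul_smul a b x := rfl
theorem smul_val (g : L ≃ₐ[RatFunc ℚ] L) (x : Vt L) : (g • x).1 = g x.1 := rfl
/-- collinearity -/
def ad (x y : Vt L) : Prop := ev2 AL x.1 y.1 = 0
theorem ad_smul (g : L ≃ₐ[RatFunc ℚ] L) (x y : Vt L) (h : ad x y) : ad (g • x) (g • y) := by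
  unfold ad at *
  have := map_ev2 (g : L →+* L) AL x.1 y.1
  simp only [RingHom.coe_coe] at this
  rw [smul_val, smul_val, ← this, h, map_zero]
theorem AL_symm {R : Type*} [CommRing R] (x y : R) : ev2 AL x y = ev2 AL y x := by
  simp only [AL, ev2, ev1]; push_cast; ring
theorem ad_symm (x y : Vt L) (h : ad x y) : ad y x := by
  unfold ad at *; rw [AL_symm]; exact h
theorem AQ (x y : Vt L) : ev2 AL x.1 y.1 = 0 ∨ ev2 QL x.1 y.1 = 0 := by
  have h1 := x.2
  have h2 := y.2
  rw [fX_eval] at h1 h2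
  have h3 := ker2 x.1 y.1
  rw [NL_eq] at h3
  rw [← mul_eq_zero]
  linear_combination h3 - h1 * ev1 rL y.1 + h2 * ev1 rL x.1

/-- a place above `(p, w - w0)` together with a Frobenius element -/
structure Pl (L : Type) [Field L] [Algebra (RatFunc ℚ) L] [Fintype (Vt L)] (p : ℕ) (w0 : ℤ) where
  k : Type
  fk : Field k
  ck : CharP k p
  σ : L ≃ₐ[RatFunc ℚ] L
  φ : Vt L → k
  h2 : ∀ P v u, ev2 P v.1 u.1 = 0 → ev2 P (φ v) (φ u) = 0
  hf : fX (w0 : k) = ∏ v, (Polynomial.X - Polynomial.C (φ v))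
  hσ : ∀ v, φ (σ • v) = φ v ^ p

theorem exPl [Fintype (Vt L)] [FiniteDimensional (RatFunc ℚ) L] [IsGalois (RatFunc ℚ) L]
    (hp : fX (algebraMap (RatFunc ℚ) L ww) = ∏ v : Vt L, (Polynomial.X - Polynomial.C v.1))
    (p : ℕ) [Fact p.Prime] (w0 : ℤ) : Nonempty (Pl L p w0) := by
  obtain ⟨k, hk, hc, σ, S, φ, W, h1, h2, h3, h4⟩ := placeB L p w0
  have hm : ∀ v : Vt L, v.1 ∈ S := fun v => h3 v.1 (fX W) (fX_monic W).1 (by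
    rw [← Polynomial.eval_map, fX_map]
    have : S.subtype W = algebraMap (RatFunc ℚ) L ww := h1
    rw [this]
    exact v.2)
  refine ⟨⟨k, hk, hc, σ, fun v => φ ⟨v.1, hm v⟩, ?_, ?_, fun v => h4 _ _ rfl⟩⟩
  · intro P v u h
    rw [← map_ev2]
    have : ev2 P (⟨v.1, hm v⟩ : S) ⟨u.1, hm u⟩ = 0 := by
      apply S.subtype_injective
      rw [map_ev2, map_zero]; exact h
    rw [this, map_zero]
  · have e : fX W = ∏ v : Vt L, (Polynomial.X - Polynomial.C (⟨v.1, hm v⟩ : S)) := by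
      apply Polynomial.map_injective S.subtype S.subtype_injective
      have h1 : S.subtype W = algebraMap (RatFunc ℚ) L ww := h1
      have h5 := fX_map S.subtype W
      rw [h1] at h5
      refine h5.trans (hp.trans ?_)
      rw [Polynomial.map_prod]
      simp
    rw [← h2, ← fX_map φ W, e, Polynomial.map_prod]
    simp
end Vsec

section Tsec
theorem nbq (a b : Nat) : (Nat.beq a b = true) = (a = b) :=
  propext ⟨Nat.eq_of_beq_eq_true, fun h => h ▸ Nat.beq_refl a⟩
/-- small algebra elements `a + b z + c y` -/
structure Tri where
  a : Nat
  b : Nat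
  c : Nat
/-- multiplication table -/
structure Tb where
  p : Nat
  x1 : Tri
  x2 : Tri
  x3 : Tri
def tmul (T : Tb) (t u : Tri) : Tri :=
  ⟨(t.a*u.a + (t.b*u.b)*T.x1.a + (t.b*u.c+t.c*u.b)*T.x2.a + (t.c*u.c)*T.x3.a) % T.p,
   (t.a*u.b + t.b*u.a + (t.b*u.b)*T.x1.b + (t.b*u.c+t.c*u.b)*T.x2.b + (t.c*u.c)*T.x3.b) % T.p,
   (t.a*u.c + t.c*u.a + (t.b*u.b)*T.x1.c + (t.b*u.c+t.c*u.b)*T.x2.c + (t.c*u.c)*T.x3.c) % T.p⟩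
def tadd (T : Tb) (t u : Tri) : Tri := ⟨(t.a+u.a) % T.p, (t.b+u.b) % T.p, (t.c+u.c) % T.p⟩
def tev (T : Tb) : List Int → Tri → Tri
  | [], _ => ⟨0,0,0⟩
  | a :: as, t => tadd T ⟨(a % (T.p : Int)).toNat, 0, 0⟩ (tmul T t (tev T as t))
def tev2 (T : Tb) : List (List Int) → Tri → Tri → Tri
  | [], _, _ => ⟨0,0,0⟩
  | a :: as, t, u => tadd T (tev T a t) (tmul T u (tev2 T as t u))
def tpw (T : Tb) (t : Tri) : List Bool → Tri
  | [] => ⟨1,0,0⟩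
  | b :: l => bif b then tmul T t (tmul T (tpw T t l) (tpw T t l)) else tmul T (tpw T t l) (tpw T t l)
def bv : List Bool → Nat
  | [] => 0
  | b :: l => (bif b then 1 else 0) + (bv l + bv l)
def tisz (t : Tri) : Bool := Nat.beq t.a 0 && Nat.beq t.b 0 && Nat.beq t.c 0
def tis1 (t : Tri) : Bool := Nat.beq t.a 1 && Nat.beq t.b 0 && Nat.beq t.c 0
def teq (t u : Tri) : Bool := Nat.beq t.a u.a && Nat.beq t.b u.b && Nat.beq t.c u.c
def tisU (T : Tb) (n : List Bool) (t : Tri) : Bool := tis1 (tmul T t (tpw T t n))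
def fl (w0 : Int) : List Int := ladd qL (lsc w0 rL)
def tgood (T : Tb) (n : List Bool) (w0 : Int) (t : Tri) : Bool :=
  tisz (tev T (fl w0) t) && (tisU T n (tev T (lder 0 (fl w0)) t) && tisU T n (tev T rL t))
def alld (p : Nat) : List Int → Bool
  | [] => true
  | a :: as => Nat.beq (a.natAbs % p) 0 && alld p as

variable {k : Type} [Field k]
def tv (z y : k) (t : Tri) : k := t.a + t.b * z + t.c * y
structure TbOk (T : Tb) (z y : k) : Prop where
  c : CharP k T.p
  h1 : z * z = tv z y T.x1
  h2 : z * y = tv z y T.x2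
  h3 : y * y = tv z y T.x3
theorem cmod (p : Nat) [CharP k p] (n : Nat) : ((n % p : Nat) : k) = n := by
  conv_rhs => rw [← Nat.div_add_mod n p]
  push_cast
  rw [CharP.cast_eq_zero k p]; ring
theorem alld_ev {R : Type*} [CommRing R] (p : Nat) [CharP R p] (l : List Int) (h : alld p l = true) (x : R) :
    ev1 l x = 0 := by
  induction l with
  | nil => rfl
  | cons a l ih =>
    simp only [alld, Bool.and_eq_true, nbq] at h
    have : (a : R) = 0 := by
      rw [CharP.intCast_eq_zero_iff R p]
      exact Int.natCast_dvd.2 (Nat.dvd_of_mod_eq_zero h.1)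
    simp [ev1, ih h.2, this]
section
variable {T : Tb} {z y : k}
theorem tv_mul (hT : TbOk T z y) (t u : Tri) : tv z y (tmul T t u) = tv z y t * tv z y u := by
  have := hT.c
  have h1 := hT.h1
  have h2 := hT.h2
  have h3 := hT.h3
  simp only [tv, tmul, cmod T.p] at *
  push_cast
  linear_combination -(t.b * u.b : k) * h1 - (t.b*u.c+t.c*u.b : k) * h2 - (t.c*u.c : k) * h3
theorem tv_add (hT : TbOk T z y) (t u : Tri) : tv z y (tadd T t u) = tv z y t + tv z y u := by
  have := hT.c
  simp only [tv, tadd, cmod T.p]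
  push_cast; ring
theorem tv_int (hT : TbOk T z y) (n : Int) (hp : T.p ≠ 0) : tv z y ⟨(n % (T.p : Int)).toNat, 0, 0⟩ = n := by
  have := hT.c
  have h : (((n % (T.p : Int)).toNat : Nat) : k) = ((n % (T.p : Int) : Int) : k) := by
    rw [← Int.cast_natCast, Int.toNat_of_nonneg (Int.emod_nonneg _ (by exact_mod_cast hp))]
  simp only [tv, h]
  have e := congrArg (Int.cast : Int → k) (Int.mul_ediv_add_emod n T.p)
  push_cast at e
  rw [CharP.cast_eq_zero k T.p] at e
  simp only [Nat.cast_zero]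
  linear_combination e
theorem tv_ev (hT : TbOk T z y) (hp : T.p ≠ 0) (l : List Int) (t : Tri) : tv z y (tev T l t) = ev1 l (tv z y t) := by
  induction l with
  | nil => simp [tev, tv, ev1]
  | cons a l ih => rw [tev, tv_add hT, tv_int hT _ hp, tv_mul hT, ih]; rfl
theorem tv_ev2 (hT : TbOk T z y) (hp : T.p ≠ 0) (l : List (List Int)) (t u : Tri) :
    tv z y (tev2 T l t u) = ev2 l (tv z y t) (tv z y u) := by
  induction l with
  | nil => simp [tev2, tv, ev2]
  | cons a l ih => rw [tev2, tv_add hT, tv_ev hT hp, tv_mul hT, ih]; rfl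
theorem tv_pw (hT : TbOk T z y) (t : Tri) (l : List Bool) : tv z y (tpw T t l) = tv z y t ^ bv l := by
  induction l with
  | nil => simp [tpw, tv, bv]
  | cons b l ih =>
    cases b
    · simp only [tpw, bv, cond_false, tv_mul hT, ih]; ring
    · simp only [tpw, bv, cond_true, tv_mul hT, ih]; ring
theorem tv_isz (t : Tri) (h : tisz t = true) : tv z y t = 0 := by
  simp only [tisz, Bool.and_eq_true, nbq] at h
  simp [tv, h]
theorem tv_isU (hT : TbOk T z y) (n : List Bool) (t : Tri) (h : tisU T n t = true) : tv z y t ≠ 0 := by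
  simp only [tisU, tis1, Bool.and_eq_true, nbq] at h
  have := tv_mul hT t (tpw T t n)
  intro h0
  rw [h0, zero_mul] at this
  simp [tv, h] at this
theorem tv_eq (t u : Tri) (h : teq t u = true) : tv z y t = tv z y u := by
  simp only [teq, Bool.and_eq_true, nbq] at h
  simp [tv, h]
/-- a good point -/
structure Gd (w0 : Int) (s : k) : Prop where
  h1 : (fX (w0 : k)).eval s = 0
  h2 : (fX (w0 : k)).derivative.eval s ≠ 0
  h3 : ev1 rL s ≠ 0
theorem tv_good (hT : TbOk T z y) (hp : T.p ≠ 0) (n : List Bool) (w0 : Int) (t : Tri) (h : tgood T n w0 t = true) :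
    Gd w0 (tv z y t) := by
  simp only [tgood, Bool.and_eq_true] at h
  refine ⟨?_, ?_, ?_⟩
  · have := tv_isz (z := z) (y := y) _ h.1
    rw [tv_ev hT hp, fl, ev1_ladd, ev1_lsc] at this
    rw [fX_eval, this]
  · have := tv_isU hT _ _ h.2.1
    rw [tv_ev hT hp, fl, fX_der] at this
    exact right_ne_zero_of_mul this
  · have := tv_isU hT _ _ h.2.2
    rw [tv_ev hT hp] at this
    exact this
end

theorem L3 (w0 : Int) (a b : k) (ha : Gd w0 a) (hb : Gd w0 b) (hA : ev2 AL a b = 0) (hQ : ev2 QL a b = 0) : False := by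
  have e := ker2 (Polynomial.C a) (Polynomial.X : Polynomial k)
  rw [NL_eq] at e
  have c1 := map_ev1 (Polynomial.C : k →+* Polynomial k) qL a
  have c2 := map_ev1 (Polynomial.C : k →+* Polynomial k) rL a
  rw [← c1, ← c2] at e
  have h1 := ha.h1
  rw [fX_eval] at h1
  have hq : ev1 qL a = - ((w0 : k) * ev1 rL a) := by linear_combination h1
  rw [hq] at e
  have e1 : Polynomial.C (ev1 rL a) * fX (w0 : k) = ev2 AL (Polynomial.C a) (Polynomial.X : Polynomial k) *
      ev2 QL (Polynomial.C a) (Polynomial.X : Polynomial k) := by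
    unfold fX
    simp only [map_neg, map_mul] at e
    linear_combination -e
  have d := congrArg (fun f => (Polynomial.derivative f).eval b) e1
  have k1 := map_ev2 (Polynomial.evalRingHom b) AL (Polynomial.C a) Polynomial.X
  have k2 := map_ev2 (Polynomial.evalRingHom b) QL (Polynomial.C a) Polynomial.X
  simp only [Polynomial.coe_evalRingHom, Polynomial.eval_C, Polynomial.eval_X] at k1 k2
  rw [hA] at k1
  rw [hQ] at k2
  simp only [Polynomial.derivative_mul, Polynomial.derivative_C, Polynomial.eval_add, Polynomial.eval_mul,
    k1, k2, Polynomial.eval_C, zero_mul, mul_zero, zero_add] at d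
  exact (mul_ne_zero ha.h3 hb.h2) d

variable {L : Type} [Field L] [Algebra (RatFunc ℚ) L] [Fintype (Vt L)]
instance (p : ℕ) (w0 : ℤ) (D : Pl L p w0) : Field D.k := D.fk
instance (p : ℕ) (w0 : ℤ) (D : Pl L p w0) : CharP D.k p := D.ck
variable {p : ℕ} {w0 : ℤ} (D : Pl L p w0)
theorem Pl.ex (z : D.k) (h : (fX (w0 : D.k)).eval z = 0) : ∃ v, D.φ v = z := by
  rw [D.hf, Polynomial.eval_prod, Finset.prod_eq_zero_iff] at h
  obtain ⟨v, -, h⟩ := h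
  refine ⟨v, ?_⟩
  simp only [Polynomial.eval_sub, Polynomial.eval_X, Polynomial.eval_C] at h
  exact (sub_eq_zero.1 h).symm
theorem Pl.un {z : D.k} (h : Gd w0 z) {v u : Vt L} (hv : D.φ v = z) (hu : D.φ u = z) : v = u := by
  classical
  by_contra hn
  apply h.h2
  rw [D.hf, ← Finset.mul_prod_erase _ _ (Finset.mem_univ v),
    ← Finset.mul_prod_erase _ _ (Finset.mem_erase.2 ⟨Ne.symm hn, Finset.mem_univ u⟩), hv, hu]
  simp [Polynomial.derivative_mul]
theorem Pl.pt {z : D.k} (h : Gd w0 z) : ∃ v, D.φ v = z := D.ex z h.h1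
theorem Pl.ad {a b : D.k} (ha : Gd w0 a) (hb : Gd w0 b) (hA : ev2 AL a b = 0) {v u : Vt L}
    (hv : D.φ v = a) (hu : D.φ u = b) : ad v u := by
  rcases AQ v u with h | h
  · exact h
  · have := D.h2 _ _ _ h
    rw [hv, hu] at this
    exact (L3 w0 a b ha hb hA this).elim
theorem Pl.nad {a b : D.k} (hA : ev2 AL a b ≠ 0) {v u : Vt L}
    (hv : D.φ v = a) (hu : D.φ u = b) : ¬ Bel.ad v u := fun h => hA (by
    rw [← hv, ← hu]; exact D.h2 _ _ _ h)
theorem Pl.rt [Fact p.Prime] (h m : List Int) (hd : (h ++ [1] : List Int).length ≥ 2)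
    (hc : alld p (ladd (fl w0) (lsc (-1) (lmul (h ++ [1]) m))) = true) :
    ∃ z : D.k, ev1 (h ++ [1]) z = 0 := by
  have e := alld_ev (R := Polynomial D.k) p _ hc Polynomial.X
  rw [ev1_ladd, ev1_lsc, ev1_lmul, fl, ev1_ladd, ev1_lsc] at e
  have e2 : fX (w0 : D.k) = ev1 (h ++ [1]) Polynomial.X * ev1 m Polynomial.X := by
    unfold fX
    rw [map_intCast (Polynomial.C : D.k →+* Polynomial D.k)]
    push_cast at e
    linear_combination e
  have hs : (fX (w0 : D.k)).Splits := by
    rw [D.hf]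
    exact Polynomial.Splits.prod fun i _ => Polynomial.Splits.X_sub_C _
  have hs2 := Polynomial.Splits.of_dvd hs (fX_monic _).1.ne_zero ⟨_, e2⟩
  have hm := ev1_monic (R := D.k) h
  obtain ⟨z, hz⟩ := hs2.exists_eval_eq_zero (by
    rw [Polynomial.degree_eq_natDegree hm.1.ne_zero, hm.2]
    simp at hd
    intro h0
    have : h.length = 0 := by exact_mod_cast h0
    omega)
  refine ⟨z, ?_⟩
  have := map_ev1 (Polynomial.evalRingHom z) (h ++ [1]) Polynomial.X
  simp only [Polynomial.coe_evalRingHom, Polynomial.eval_X] at this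
  rw [← this, hz]
end Tsec

section Wsec
variable {L : Type} [Field L] [Algebra (RatFunc ℚ) L] [Fintype (Vt L)]
def kk (n : Nat) : Tri := ⟨n, 0, 0⟩
def zz : Tri := ⟨0, 1, 0⟩
/-- all witnesses at once: good points, adjacent, non adjacent, Frobenius images -/
theorem kf {k : Type} [Field k] {T : Tb} {z y : k} (hT : TbOk T z y) (hp : T.p ≠ 0) (n : List Bool) (t u : Tri)
    (h : tisU T n (tev2 T AL t u) = true) : ev2 AL (tv z y t) (tv z y u) ≠ 0 := by
  rw [← tv_ev2 hT hp]; exact tv_isU hT n _ h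
theorem kt {k : Type} [Field k] {T : Tb} {z y : k} (hT : TbOk T z y) (hp : T.p ≠ 0) (t u : Tri)
    (h : tisz (tev2 T AL t u) = true) : ev2 AL (tv z y t) (tv z y u) = 0 := by
  rw [← tv_ev2 hT hp]; exact tv_isz _ h
def tneg (T : Tb) (t : Tri) : Tri := tmul T ⟨T.p - 1, 0, 0⟩ t
theorem kne {k : Type} [Field k] {T : Tb} {z y : k} (hT : TbOk T z y) (hp : T.p ≠ 0) (n : List Bool) (t u : Tri)
    (h : tisU T n (tadd T t (tneg T u)) = true) : tv z y t ≠ tv z y u := by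
  have h1 := tv_isU hT n _ h
  rw [tv_add hT, tneg, tv_mul hT] at h1
  have := hT.c
  have e : tv z y ⟨T.p - 1, 0, 0⟩ = -1 := by
    simp only [tv]
    rw [Nat.cast_sub (by omega), CharP.cast_eq_zero k T.p]; simp
  rw [e] at h1
  intro h2
  apply h1
  rw [h2]; ring

def T11 : Tb := ⟨11, ⟨0,0,1⟩, ⟨4,7,8⟩, ⟨10,5,5⟩⟩
def b11 : List Bool := [true, true, false, true]
/-- bits of `11^3-2 = 1329` -/
def n11 : List Bool := [true,false,false,false,true,true,false,false,true,false,true]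
def h11 : List Int := [7,4,3]
def m11 : List Int := [0, 4, 1, 2, 0, 10, 9, 6, 3, 10, 7, 1, 2, 4, 8, 0, 9, 8, 3, 4, 8, 0, 7, 1, 5, 8, 8, 4, 7, 5, 4, 3, 8, 9, 6, 6, 9, 2, 10, 1, 9, 9, 9, 8, 9, 8, 1, 6, 4, 7, 7, 5, 7, 9, 4, 3, 6, 6, 4, 2, 1]
theorem wd3 (D : Pl L 11 5) [Fact (Nat.Prime 11)] : ∃ (b x : Vt L) (g : L ≃ₐ[RatFunc ℚ] L), ad b x ∧ g • b = b ∧ g • x ≠ x ∧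
    ¬ ad x (g • x) ∧ g • g • x ≠ x ∧ ¬ ad x (g • g • x) := by
  obtain ⟨z, hz⟩ := D.rt h11 m11 (by decide) (by decide +kernel)
  have hz : z * (z * z) = 4 + 7 * z + 8 * (z * z) := by
    have h0 : (11 : D.k) = 0 := by exact_mod_cast CharP.cast_eq_zero D.k 11
    simp [ev1, h11] at hz
    linear_combination hz - (1 + z + z * z) * h0
  have hT : TbOk T11 z (z * z) := by
    have h0 : (11 : D.k) = 0 := by exact_mod_cast CharP.cast_eq_zero D.k 11
    refine ⟨D.ck, ?_, ?_, ?_⟩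
    · simp [tv, T11]
    · simp [tv, T11]; exact hz
    · simp [tv, T11]; linear_combination (z + 8) * hz + (2 + 5 * z + 6 * (z * z)) * h0
  have hp : T11.p ≠ 0 := by decide
  have g1 := tv_good hT hp n11 5 (kk 2) (by decide +kernel)
  have g2 := tv_good hT hp n11 5 zz (by decide +kernel)
  obtain ⟨b, hb⟩ := D.pt g1
  obtain ⟨x, hx⟩ := D.pt g2
  have s1 : D.φ (D.σ • x) = tv z (z*z) (tpw T11 zz b11) := by
    rw [D.hσ, hx, tv_pw hT]; rfl
  have s2 : D.φ (D.σ • D.σ • x) = tv z (z*z) (tpw T11 (tpw T11 zz b11) b11) := by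
    rw [D.hσ, s1, tv_pw hT (tpw T11 zz b11)]; rfl
  have s3 : D.φ (D.σ • b) = tv z (z*z) (kk 2) := by
    rw [D.hσ, hb]; exact (tv_pw hT _ _).symm.trans (tv_eq (tpw T11 (kk 2) b11) (kk 2) (by decide +kernel))
  refine ⟨b, x, D.σ, D.ad g1 g2 (kt hT hp _ _ (by decide +kernel)) hb hx, D.un g1 s3 hb, ?_, ?_, ?_, ?_⟩
  · intro h; rw [h, hx] at s1
    exact kne hT hp n11 _ _ (by decide +kernel) s1
  · exact D.nad (kf hT hp n11 _ _ (by decide +kernel)) hx s1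
  · intro h; rw [h, hx] at s2
    exact kne hT hp n11 _ _ (by decide +kernel) s2
  · exact D.nad (kf hT hp n11 _ _ (by decide +kernel)) hx s2

def T37 : Tb := ⟨37, ⟨24,0,0⟩, ⟨0,0,0⟩, ⟨0,0,0⟩⟩
def b37 : List Bool := [true, false, true, false, false, true]
/-- bits of `37^2-2 = 1367` -/
def n37 : List Bool := [true,true,true,false,true,false,true,false,true,false,true]
def h37 : List Int := [13,0]
def m37 : List Int := [4, 30, 23, 9, 1, 26, 24, 26, 1, 3, 6, 32, 15, 9, 26, 9, 24, 23, 19, 8, 7, 26, 16, 24, 16, 3, 18, 21, 31, 4, 33, 0, 33, 5, 9, 3, 21, 16, 17, 25, 8, 18, 24, 12, 14, 36, 12, 24, 27, 33, 1, 12, 2, 14, 2, 18, 4, 36, 20, 9, 15, 1]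
theorem wsw (D : Pl L 37 9) [Fact (Nat.Prime 37)] : ∃ (a b c d : Vt L) (g : L ≃ₐ[RatFunc ℚ] L), ad a b ∧ T3 ad a b c ∧ T3 ad b c d ∧
    g • a = a ∧ g • b = b ∧ g • c = c ∧ ad d (g • d) := by
  obtain ⟨z, hz⟩ := D.rt h37 m37 (by decide) (by decide +kernel)
  have hT : TbOk T37 z 0 := by
    have h0 : (37 : D.k) = 0 := by exact_mod_cast CharP.cast_eq_zero D.k 37
    simp [ev1, h37] at hz
    refine ⟨D.ck, ?_, ?_, ?_⟩
    · simp [tv, T37]; linear_combination hz - h0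
    · simp [tv, T37]
    · simp [tv, T37]
  have hp : T37.p ≠ 0 := by decide
  have ga := tv_good hT hp n37 9 (kk 4) (by decide +kernel)
  have gb := tv_good hT hp n37 9 (kk 27) (by decide +kernel)
  have gc := tv_good hT hp n37 9 (kk 7) (by decide +kernel)
  have gd := tv_good hT hp n37 9 zz (by decide +kernel)
  have ge := tv_good hT hp n37 9 (tpw T37 zz b37) (by decide +kernel)
  obtain ⟨a, ha⟩ := D.pt ga
  obtain ⟨b, hb⟩ := D.pt gb
  obtain ⟨c, hc⟩ := D.pt gc
  obtain ⟨d, hd⟩ := D.pt gd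
  have sa : D.φ (D.σ • a) = tv z 0 (kk 4) := by
    rw [D.hσ, ha]; exact (tv_pw hT _ _).symm.trans (tv_eq (tpw T37 (kk 4) b37) (kk 4) (by decide +kernel))
  have sb : D.φ (D.σ • b) = tv z 0 (kk 27) := by
    rw [D.hσ, hb]; exact (tv_pw hT _ _).symm.trans (tv_eq (tpw T37 (kk 27) b37) (kk 27) (by decide +kernel))
  have sc : D.φ (D.σ • c) = tv z 0 (kk 7) := by
    rw [D.hσ, hc]; exact (tv_pw hT _ _).symm.trans (tv_eq (tpw T37 (kk 7) b37) (kk 7) (by decide +kernel))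
  have sd : D.φ (D.σ • d) = tv z 0 (tpw T37 zz b37) := by
    rw [D.hσ, hd, tv_pw hT]; rfl
  refine ⟨a, b, c, d, D.σ, D.ad ga gb (kt hT hp _ _ (by decide +kernel)) ha hb,
    ⟨D.ad gb gc (kt hT hp _ _ (by decide +kernel)) hb hc, ?_, D.nad (kf hT hp n37 _ _ (by decide +kernel)) ha hc⟩,
    ⟨D.ad gc gd (kt hT hp _ _ (by decide +kernel)) hc hd, ?_, D.nad (kf hT hp n37 _ _ (by decide +kernel)) hb hd⟩,
    D.un ga sa ha, D.un gb sb hb, D.un gc sc hc, D.ad gd ge (kt hT hp _ _ (by decide +kernel)) hd sd⟩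
  · intro h; rw [h, ha] at hc
    exact kne hT hp n37 _ _ (by decide +kernel) hc
  · intro h; rw [h, hb] at hd
    exact kne hT hp n37 _ _ (by decide +kernel) hd

def T89 : Tb := ⟨89, ⟨4,36,0⟩, ⟨0,0,0⟩, ⟨0,0,0⟩⟩
def b89 : List Bool := [true, false, false, true, true, false, true]
/-- bits of `89^2-2 = 7919` -/
def n89 : List Bool := [true,true,true,true,false,true,true,true,false,true,true,true,true]
def h89 : List Int := [85,53]
def m89 : List Int := [30, 74, 84, 27, 86, 4, 48, 37, 8, 86, 59, 49, 74, 11, 80, 38, 50, 37, 5, 56, 67, 38, 57, 56, 22, 48, 11, 75, 80, 81, 24, 69, 80, 14, 38, 43, 71, 9, 75, 13, 56, 10, 86, 38, 36, 30, 63, 16, 69, 42, 82, 33, 42, 88, 74, 82, 79, 86, 5, 65, 73, 1]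
theorem wln (D : Pl L 89 33) [Fact (Nat.Prime 89)] : ∃ (a b c d e : Vt L) (g : L ≃ₐ[RatFunc ℚ] L), ad a b ∧ T3 ad a b c ∧ T3 ad b c d ∧
    T3 ad c d e ∧ g • a = a ∧ g • b = b ∧ g • c = c ∧ g • d = d ∧ g • e ≠ e ∧ ¬ ad e (g • e) := by
  obtain ⟨z, hz⟩ := D.rt h89 m89 (by decide) (by decide +kernel)
  have hT : TbOk T89 z 0 := by
    have h0 : (89 : D.k) = 0 := by exact_mod_cast CharP.cast_eq_zero D.k 89
    simp [ev1, h89] at hz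
    refine ⟨D.ck, ?_, ?_, ?_⟩
    · simp [tv, T89]; linear_combination hz - (1 + z) * h0
    · simp [tv, T89]
    · simp [tv, T89]
  have hp : T89.p ≠ 0 := by decide
  have ga := tv_good hT hp n89 33 (kk 7) (by decide +kernel)
  have gb := tv_good hT hp n89 33 (kk 30) (by decide +kernel)
  have gc := tv_good hT hp n89 33 (kk 61) (by decide +kernel)
  have gd := tv_good hT hp n89 33 (kk 22) (by decide +kernel)
  have ge := tv_good hT hp n89 33 zz (by decide +kernel)
  obtain ⟨a, ha⟩ := D.pt ga
  obtain ⟨b, hb⟩ := D.pt gb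
  obtain ⟨c, hc⟩ := D.pt gc
  obtain ⟨d, hd⟩ := D.pt gd
  obtain ⟨e, he⟩ := D.pt ge
  have sa : D.φ (D.σ • a) = tv z 0 (kk 7) := by
    rw [D.hσ, ha]; exact (tv_pw hT _ _).symm.trans (tv_eq (tpw T89 (kk 7) b89) (kk 7) (by decide +kernel))
  have sb : D.φ (D.σ • b) = tv z 0 (kk 30) := by
    rw [D.hσ, hb]; exact (tv_pw hT _ _).symm.trans (tv_eq (tpw T89 (kk 30) b89) (kk 30) (by decide +kernel))
  have sc : D.φ (D.σ • c) = tv z 0 (kk 61) := by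
    rw [D.hσ, hc]; exact (tv_pw hT _ _).symm.trans (tv_eq (tpw T89 (kk 61) b89) (kk 61) (by decide +kernel))
  have sd : D.φ (D.σ • d) = tv z 0 (kk 22) := by
    rw [D.hσ, hd]; exact (tv_pw hT _ _).symm.trans (tv_eq (tpw T89 (kk 22) b89) (kk 22) (by decide +kernel))
  have se : D.φ (D.σ • e) = tv z 0 (tpw T89 zz b89) := by
    rw [D.hσ, he, tv_pw hT]; rfl
  refine ⟨a, b, c, d, e, D.σ, D.ad ga gb (kt hT hp _ _ (by decide +kernel)) ha hb,
    ⟨D.ad gb gc (kt hT hp _ _ (by decide +kernel)) hb hc, ?_, D.nad (kf hT hp n89 _ _ (by decide +kernel)) ha hc⟩,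
    ⟨D.ad gc gd (kt hT hp _ _ (by decide +kernel)) hc hd, ?_, D.nad (kf hT hp n89 _ _ (by decide +kernel)) hb hd⟩,
    ⟨D.ad gd ge (kt hT hp _ _ (by decide +kernel)) hd he, ?_, D.nad (kf hT hp n89 _ _ (by decide +kernel)) hc he⟩,
    D.un ga sa ha, D.un gb sb hb, D.un gc sc hc, D.un gd sd hd, ?_,
    D.nad (kf hT hp n89 _ _ (by decide +kernel)) he se⟩
  · intro h; rw [h, ha] at hc
    exact kne hT hp n89 _ _ (by decide +kernel) hc
  · intro h; rw [h, hb] at hd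
    exact kne hT hp n89 _ _ (by decide +kernel) hd
  · intro h; rw [h, hc] at he
    exact kne hT hp n89 _ _ (by decide +kernel) he
  · intro h; rw [h, he] at se
    exact kne hT hp n89 _ _ (by decide +kernel) se
end Wsec

section Ssec
def rtL : List Nat := [35, 229, 621, 666, 873, 1159, 1220, 1280, 1285, 1579, 1608, 1654, 1762, 1880, 1993, 2488,
  3058, 3060, 3297, 3528, 3644, 3700, 3816, 3824, 3922, 4012, 4483, 4965, 5014, 5208, 5321,
  5351, 5484, 5602, 5640, 5676, 5747, 6011, 6246, 6350, 6403, 6606, 6612, 6860, 6957, 6963,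
  6964, 6974, 7347, 7366, 7491, 7526, 7544, 7565, 7757, 7952, 8231, 8456, 8565, 8638, 9265,
  9301, 9519]
def rowL : List Nat := [17731781394434, 2271599615016961, 96758365422080, 4611692685291421696, 2449969192540307456,
  4644371481759744, 4620702014314184704, 18296217352028160, 18159193032704, 576460757672141828,
  8162774324617728, 297523448433869056, 76561193934913568, 19327682048, 144116287889539200,
  1155243707574779904, 17215545408, 1161928708165996544, 2666130981550825488,
  612489962176118785, 36031013222223880, 140746078355554, 720575974739020064, 9571250867404801,
  74872894097752064, 1152926040092426240, 8071594024340816128, 22527481424642064,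
  72075186223992964, 5260204364786040896, 708085488288268, 103087874049, 1747396664009818624,
  306279963330347010, 36029346775900416, 70439615365152, 4629700453444092040, 4507997842178049,
  2342294018698248320, 18577365793767680, 145839222316613632, 146366987890589722,
  288230514697963528, 9077568133136468, 335544583, 325456549923258368, 36072811843846148,
  2306406235120861216, 11259273946336384, 142387854704640, 4616225902005584896, 283674016777218,
  1126037480018976, 290271078254656, 631494410368, 105845175615488, 288230376974061568,
  576464050842517520, 72097185046726656, 144115192912413184, 2305843013609488384,
  1153062517040480272, 1125969230299208]
def ordL : List Nat := [22, 31, 33, 36, 44, 47, 54, 7, 8, 11, 14, 16, 18, 23, 25, 26, 27, 28, 30, 32, 34, 37, 38, 39,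
  40, 42, 43, 45, 46, 48, 49, 50, 51, 52, 53, 55, 56, 57, 58, 59, 60, 61, 62, 2, 3, 4, 6, 9, 10,
  12, 13, 15, 17, 19, 20, 24, 29, 41]
def rt (i : Nat) : Nat := rtL.getD i 0
def row (i : Nat) : Nat := rowL.getD i 0
def B (i j : Nat) : Bool := Nat.testBit (row i) j
def allN (f : Nat → Bool) : Nat → Bool
  | 0 => true
  | n+1 => f n && allN f n
theorem allN_iff (f : Nat → Bool) (n : Nat) (h : allN f n = true) : ∀ i < n, f i = true := by
  induction n with
  | zero => intro i hi; omega
  | succ n ih =>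
    simp only [allN, Bool.and_eq_true] at h
    intro i hi
    rcases Nat.lt_succ_iff_lt_or_eq.1 hi with h1 | h1
    · exact ih h.2 i h1
    · rw [h1]; exact h.1
def me (p : Nat) : List Int → Nat → Nat
  | [], _ => 0
  | a :: as, x => ((a % (p : Int)).toNat + x * me p as x) % p
def men (p : Nat) : List Nat → Nat → Nat
  | [], _ => 0
  | a :: as, x => (a + x * men p as x) % p
def gds (p : Nat) (w0 : Int) (x : Nat) : Bool :=
  Nat.beq (me p (fl w0) x) 0 && (!Nat.beq (me p (lder 0 (fl w0)) x) 0 && !Nat.beq (me p rL x) 0)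
variable {k : Type} [Field k]
theorem me_lt (p : Nat) (hp : 0 < p) (l : List Int) (x : Nat) : me p l x < p := by
  cases l with
  | nil => exact hp
  | cons a l => exact Nat.mod_lt _ hp
theorem men_lt (p : Nat) (hp : 0 < p) (l : List Nat) (x : Nat) : men p l x < p := by
  cases l with
  | nil => exact hp
  | cons a l => exact Nat.mod_lt _ hp
theorem cimod (p : Nat) (hp : 0 < p) [CharP k p] (n : Int) : (((n % (p : Int)).toNat : Nat) : k) = n := by
  have h : (((n % (p : Int)).toNat : Nat) : k) = ((n % (p : Int) : Int) : k) := by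
    rw [← Int.cast_natCast, Int.toNat_of_nonneg (Int.emod_nonneg _ (by omega))]
  rw [h]
  have e := congrArg (Int.cast : Int → k) (Int.mul_ediv_add_emod n p)
  push_cast at e
  rw [CharP.cast_eq_zero k p] at e
  linear_combination e
theorem me_ev (p : Nat) (hp : 0 < p) [CharP k p] (l : List Int) (x : Nat) : (me p l x : k) = ev1 l (x : k) := by
  induction l with
  | nil => simp [me, ev1]
  | cons a l ih =>
    simp only [me, ev1, cmod p]
    push_cast
    rw [cimod p hp, ih]
theorem men_ev (p : Nat) (hp : 0 < p) [CharP k p] (P : List (List Int)) (x y : Nat) :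
    (men p (P.map fun a => me p a x) y : k) = ev2 P (x : k) (y : k) := by
  induction P with
  | nil => simp [men, ev2]
  | cons a l ih =>
    simp only [men, ev2, List.map_cons, cmod p]
    push_cast
    rw [me_ev p hp, ih]
theorem czero (p : Nat) [CharP k p] (n : Nat) (hn : n < p) : (n : k) = 0 ↔ Nat.beq n 0 = true := by
  rw [CharP.cast_eq_zero_iff k p, nbq]
  exact ⟨fun h => Nat.eq_zero_of_dvd_of_lt h hn, fun h => h ▸ dvd_zero p⟩
theorem gds_gd (p : Nat) (hp : 0 < p) [CharP k p] (w0 : Int) (x : Nat) (h : gds p w0 x = true) :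
    Gd w0 (x : k) := by
  simp only [gds, Bool.and_eq_true, Bool.not_eq_true'] at h
  obtain ⟨h1, h2, h3⟩ := h
  rw [← czero (k := k) p _ (me_lt p hp _ _), me_ev p hp] at h1
  rw [← Bool.not_eq_true, ← czero (k := k) p _ (me_lt p hp _ _), me_ev p hp] at h2 h3
  refine ⟨?_, ?_, h3⟩
  · rw [fl, ev1_ladd, ev1_lsc] at h1
    rw [fX_eval, h1]
  · rw [fl, fX_der] at h2
    exact right_ne_zero_of_mul h2
def rig : Nat → List Nat → Bool
  | _, [] => true
  | K, c :: cs => allN (fun d => Nat.beq d c || !Nat.beq (Nat.land (row c) K) (Nat.land (row d) K)) 63 &&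
      rig (Nat.lor K (2 ^ c)) cs

theorem chk_good : allN (fun i => gds 10009 4504 (rt i)) 63 = true := by decide +kernel
theorem chk_lt : allN (fun i => Nat.blt (rt i) 10009) 63 = true := by decide +kernel
theorem chk_ne : allN (fun i => allN (fun j => Nat.beq i j || !Nat.beq (rt i) (rt j)) 63) 63 = true := by
  decide +kernel
theorem chk_ad : allN (fun i => allN (fun j => B i j ==
    Nat.beq (men 10009 (AL.map fun a => me 10009 a (rt i)) (rt j)) 0) 63) 63 = true := by decide +kernel
theorem chk_irr : allN (fun i => !B i i) 63 = true := by decide +kernel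
theorem chk_6 : allN (fun i => Nat.beq ((List.range 63).filter (B i)).length 6) 63 = true := by decide +kernel
theorem chk_line : allN (fun i => allN (fun j => !B i j ||
    (Nat.blt (Nat.log2 (Nat.land (row i) (row j))) 63 &&
      Nat.beq (Nat.land (row i) (row j)) (2 ^ (Nat.log2 (Nat.land (row i) (row j)))))) 63) 63 = true := by
  decide +kernel
theorem chk_yz : allN (fun j => Nat.beq j 21 || !B 5 j || Nat.beq (Nat.land (row 0) (row j)) 0 || Nat.beq j 35 ||
    Nat.beq j 52) 63 = true := by decide +kernel
theorem chk_rig : rig 34361835555 ordL = true := by decide +kernel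
theorem chk_all : allN (fun i => Nat.testBit 34361835555 i || ordL.contains i) 63 = true := by decide +kernel
theorem chk_K0 : allN (fun i => !Nat.testBit 34361835555 i || Nat.beq i 0 || Nat.beq i 1 || Nat.beq i 21 || Nat.beq i 5 ||
    Nat.beq i 35) 63 = true := by decide +kernel
end Ssec

section Gsec
/-- combinatorial data of a labelled graph -/
structure Lb {V : Type*} (adj : V → V → Prop) (v : ℕ → V) : Prop where
  sur : ∀ x, ∃ i < 63, v i = x
  inj : ∀ i < 63, ∀ j < 63, v i = v j → i = j
  a : ∀ i < 63, ∀ j < 63, (adj (v i) (v j) ↔ B i j = true)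
variable {V : Type*} {adj : V → V → Prop} {v : ℕ → V} (h : Lb adj v)
theorem Lb.irr (h : Lb adj v) (x : V) : ¬ adj x x := by
  obtain ⟨i, hi, rfl⟩ := h.sur x
  rw [h.a i hi i hi]
  simpa using allN_iff _ _ chk_irr i hi
theorem Lb.c6 (h : Lb adj v) (x : V) : Nat.card {b | adj x b} = 6 := by
  obtain ⟨i, hi, rfl⟩ := h.sur x
  have h6 := allN_iff _ _ chk_6 i hi
  rw [nbq] at h6
  have hs : {b | adj (v i) b} = v '' (((Finset.range 63).filter (fun j => B i j = true) : Finset ℕ) : Set ℕ) := by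
    ext b
    simp only [Set.mem_ofPred_eq, Set.mem_image, Finset.mem_coe, Finset.mem_filter, Finset.mem_range]
    constructor
    · intro hb
      obtain ⟨j, hj, rfl⟩ := h.sur b
      exact ⟨j, ⟨hj, (h.a i hi j hj).1 hb⟩, rfl⟩
    · rintro ⟨j, ⟨hj, hb⟩, rfl⟩
      exact (h.a i hi j hj).2 hb
  have : Nat.card {b | adj (v i) b} = Set.ncard {b | adj (v i) b} := rfl
  rw [this, hs, Set.InjOn.ncard_image, Set.ncard_coe_finset]
  · rw [← h6, ← List.toFinset_card_of_nodup (List.Nodup.filter _ List.nodup_range)]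
    congr 1
    ext j
    simp
  · intro a ha b hb hab
    simp only [Finset.mem_coe, Finset.mem_filter, Finset.mem_range] at ha hb
    exact h.inj a ha.1 b hb.1 hab
theorem Lb.li (h : Lb adj v) (x y : V) (hxy : adj x y) : ∃! c, adj x c ∧ adj y c := by
  obtain ⟨i, hi, rfl⟩ := h.sur x
  obtain ⟨j, hj, rfl⟩ := h.sur y
  have hl := allN_iff _ _ (allN_iff _ _ chk_line i hi) j hj
  rw [(h.a i hi j hj).1 hxy] at hl
  simp only [Bool.not_true, Bool.false_or, Bool.and_eq_true, nbq, Nat.blt_eq] at hl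
  obtain ⟨h1, h2⟩ := hl
  generalize Nat.log2 (Nat.land (row i) (row j)) = c at h1 h2
  have key : ∀ d, (B i d = true ∧ B j d = true) ↔ d = c := by
    intro d
    have := congrArg (fun n => Nat.testBit n d) h2
    have e : (Nat.land (row i) (row j)).testBit d = ((row i).testBit d && (row j).testBit d) := Nat.testBit_and _ _ _
    simp only [e, Nat.testBit_two_pow] at this
    rw [← Bool.and_eq_true]
    unfold B
    rw [this]
    simp [eq_comm]
  have kc := (key c).2 rfl
  refine ⟨v c, ⟨(h.a i hi c h1).2 kc.1, (h.a j hj c h1).2 kc.2⟩, ?_⟩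
  rintro z ⟨z1, z2⟩
  obtain ⟨d, hd, rfl⟩ := h.sur z
  rw [(key d).1 ⟨(h.a i hi d hd).1 z1, (h.a j hj d hd).1 z2⟩]
variable {G : Type*} [Group G] [MulAction G V]
theorem Lb.rigid (h : Lb adj v) (hG : ∀ (g : G) a b, adj a b → adj (g • a) (g • b)) (u : G) (K : Nat)
    (cs : List Nat) (hr : rig K cs = true) (hK : ∀ i < 63, K.testBit i = true → u • v i = v i) :
    ∀ c ∈ cs, c < 63 → u • v c = v c := by
  induction cs generalizing K with
  | nil => simp
  | cons c cs ih =>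
    simp only [rig, Bool.and_eq_true] at hr
    have hc : c < 63 → u • v c = v c := by
      intro hc
      obtain ⟨d, hd, hd2⟩ := h.sur (u • v c)
      have h1 := allN_iff _ _ hr.1 d hd
      simp only [Bool.or_eq_true, nbq, Bool.not_eq_true'] at h1
      rcases h1 with h1 | h1
      · rw [← hd2, h1]
      · rw [← Bool.not_eq_true, nbq] at h1
        refine (h1 ?_).elim
        apply Nat.eq_of_testBit_eq
        intro i
        have e : ∀ x, (Nat.land x K).testBit i = (x.testBit i && K.testBit i) := fun x => Nat.testBit_and _ _ _
        rw [e, e]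
        by_cases hKi : K.testBit i = true
        · rw [hKi]
          simp only [Bool.and_true]
          by_cases hi : i < 63
          · have f := hK i hi hKi
            have iff1 : adj (v c) (v i) ↔ adj (v d) (v i) := by
              constructor
              · intro hh; have := hG u _ _ hh; rwa [f, ← hd2] at this
              · intro hh
                have := hG u⁻¹ _ _ hh
                rw [hd2, inv_smul_smul] at this
                rwa [show u⁻¹ • v i = v i by rw [inv_smul_eq_iff, f]] at this
            rw [h.a c hc i hi, h.a d hd i hi] at iff1
            exact Bool.eq_iff_iff.2 iff1
          · have big : ∀ j < 63, (row j).testBit i = false := by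
              intro j hj
              apply Nat.testBit_lt_two_pow
              have h63 : row j < 2 ^ 63 := by
                have := allN_iff (fun j => Nat.blt (row j) (2 ^ 63)) 63 (by decide +kernel) j hj
                simpa [Nat.blt_eq] using this
              exact lt_of_lt_of_le h63 (Nat.pow_le_pow_right (by norm_num) (by omega))
            rw [big c hc, big d hd]
        · simp [hKi]
    intro c' hc' hlt
    rcases List.mem_cons.1 hc' with rfl | hm
    · exact hc hlt
    · refine ih _ hr.2 ?_ c' hm hlt
      intro i hi hb
      have e : (Nat.lor K (2 ^ c)).testBit i = (K.testBit i || (2 ^ c).testBit i) := Nat.testBit_or _ _ _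
      rw [e, Bool.or_eq_true] at hb
      rcases hb with hb | hb
      · exact hK i hi hb
      · rw [Nat.testBit_two_pow] at hb
        simp only [decide_eq_true_eq] at hb
        subst hb; exact hc hi
theorem Lb.rg (h : Lb adj v) (hG : ∀ (g : G) a b, adj a b → adj (g • a) (g • b))
    (hF : ∀ u : G, (∀ x : V, u • x = x) → u = 1) :
    ∃ a b c d y z : V, adj a b ∧ T3 adj a b c ∧ T3 adj b c d ∧ ∀ g h : G,
      g • a = a → g • b = b → g • c = c → g • d = d → h • a = a → h • b = b → h • c = c → h • d = d →
      (g • y = y ∨ g • y = z) ∧ (g • y = h • y → g = h) := by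
  have A : ∀ i j, i < 63 → j < 63 → B i j = true → adj (v i) (v j) := fun i j hi hj => (h.a i hi j hj).2
  have nA : ∀ i j, i < 63 → j < 63 → B i j = false → ¬ adj (v i) (v j) := fun i j hi hj hb hh => by
    rw [(h.a i hi j hj).1 hh] at hb; exact Bool.noConfusion hb
  have nE : ∀ i j, i < 63 → j < 63 → i ≠ j → v i ≠ v j := fun i j hi hj hn he => hn (h.inj i hi j hj he)
  refine ⟨v 0, v 1, v 21, v 5, v 35, v 52, A _ _ (by norm_num) (by norm_num) (by decide +kernel),
    ⟨A _ _ (by norm_num) (by norm_num) (by decide +kernel), nE _ _ (by norm_num) (by norm_num) (by norm_num),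
      nA _ _ (by norm_num) (by norm_num) (by decide +kernel)⟩,
    ⟨A _ _ (by norm_num) (by norm_num) (by decide +kernel), nE _ _ (by norm_num) (by norm_num) (by norm_num),
      nA _ _ (by norm_num) (by norm_num) (by decide +kernel)⟩, ?_⟩
  intro g g' k1 k2 k3 k4 l1 l2 l3 l4
  have hg : g • v 0 = v 0 ∧ g • v 1 = v 1 ∧ g • v 21 = v 21 ∧ g • v 5 = v 5 := ⟨k1, k2, k3, k4⟩
  have hg' : g' • v 0 = v 0 ∧ g' • v 1 = v 1 ∧ g' • v 21 = v 21 ∧ g' • v 5 = v 5 := ⟨l1, l2, l3, l4⟩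
  constructor
  · obtain ⟨j, hj, hj2⟩ := h.sur (g • v 35)
    have h1 := allN_iff _ _ chk_yz j hj
    simp only [Bool.or_eq_true, nbq, Bool.not_eq_true'] at h1
    rcases h1 with (((h1 | h1) | h1) | h1) | h1
    · exfalso
      rw [h1, ← hg.2.2.1] at hj2
      exact nE 21 35 (by norm_num) (by norm_num) (by norm_num) (MulAction.injective g hj2)
    · exfalso
      have := hG g _ _ (A 5 35 (by norm_num) (by norm_num) (by decide +kernel))
      rw [hg.2.2.2, ← hj2, h.a 5 (by norm_num) j hj, h1] at this
      exact Bool.noConfusion this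
    · exfalso
      have hm : ∃ m < 63, B 0 m = true ∧ B 35 m = true := by decide +kernel
      obtain ⟨m, hm, m1, m2⟩ := hm
      have a1 := hG g _ _ (A 0 m (by norm_num) hm m1)
      have a2 := hG g _ _ (A 35 m (by norm_num) hm m2)
      obtain ⟨n, hn, hn2⟩ := h.sur (g • v m)
      rw [hg.1, ← hn2, h.a 0 (by norm_num) n hn] at a1
      rw [← hj2, ← hn2, h.a j hj n hn] at a2
      have e : (Nat.land (row 0) (row j)).testBit n = ((row 0).testBit n && (row j).testBit n) := Nat.testBit_and _ _ _
      unfold B at a1 a2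
      rw [a1, a2, h1] at e
      simp at e
    · left; rw [← hj2, h1]
    · right; rw [← hj2, h1]
  · intro hy
    have hu : g'⁻¹ * g = 1 := by
      apply hF
      have f1 : ∀ x : V, g • x = g' • x → (g'⁻¹ * g) • x = x := fun x hx => by
        rw [mul_smul, hx, inv_smul_smul]
      have hK : ∀ i < 63, Nat.testBit 34361835555 i = true → (g'⁻¹ * g) • v i = v i := by
        intro i hi hb
        have h1 := allN_iff _ _ chk_K0 i hi
        simp only [Bool.or_eq_true, nbq, Bool.not_eq_true', hb] at h1
        apply f1
        rcases h1 with ((((h1 | h1) | h1) | h1) | h1) | h1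
        · exact Bool.noConfusion h1
        · rw [h1, hg.1, hg'.1]
        · rw [h1, hg.2.1, hg'.2.1]
        · rw [h1, hg.2.2.1, hg'.2.2.1]
        · rw [h1, hg.2.2.2, hg'.2.2.2]
        · rw [h1, hy]
      intro x
      obtain ⟨i, hi, rfl⟩ := h.sur x
      have h1 := allN_iff _ _ chk_all i hi
      simp only [Bool.or_eq_true, List.contains_iff_mem] at h1
      rcases h1 with h1 | h1
      · exact hK i hi h1
      · exact h.rigid hG _ _ _ chk_rig hK i h1 hi
    rw [inv_mul_eq_one] at hu
    exact hu.symm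
end Gsec
section Hsec
variable {L : Type} [Field L] [Algebra (RatFunc ℚ) L] [Fintype (Vt L)]
theorem Pl.card63 {p : ℕ} {w0 : ℤ} (D : Pl L p w0) : Fintype.card (Vt L) = 63 := by
  have := (fX_monic (w0 : D.k)).2
  rw [D.hf, Polynomial.natDegree_prod_of_monic _ _ fun i _ => Polynomial.monic_X_sub_C _] at this
  simpa using this
theorem exLb (D : Pl L 10009 4504) : ∃ v : ℕ → Vt L, Lb ad v := by
  have hp : 0 < 10009 := by norm_num
  have g : ∀ i < 63, Gd (4504 : ℤ) ((rt i : ℕ) : D.k) := fun i hi =>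
    gds_gd 10009 hp _ _ (allN_iff _ _ chk_good i hi)
  have hex : ∀ i, ∃ x : Vt L, i < 63 → D.φ x = ((rt i : ℕ) : D.k) := by
    intro i
    by_cases hi : i < 63
    · obtain ⟨x, hx⟩ := D.pt (g i hi)
      exact ⟨x, fun _ => hx⟩
    · obtain ⟨x, hx⟩ := D.pt (g 0 (by norm_num))
      exact ⟨x, fun h => (hi h).elim⟩
  choose v hv using hex
  have hlt : ∀ i < 63, rt i < 10009 := fun i hi => by
    have := allN_iff _ _ chk_lt i hi
    rwa [Nat.blt_eq] at this
  have inj : ∀ i < 63, ∀ j < 63, v i = v j → i = j := by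
    intro i hi j hj hij
    have h1 := hv i hi
    rw [hij, hv j hj] at h1
    have h2 := (CharP.natCast_eq_natCast D.k 10009).1 h1
    rw [Nat.ModEq, Nat.mod_eq_of_lt (hlt i hi), Nat.mod_eq_of_lt (hlt j hj)] at h2
    have h3 := allN_iff _ _ (allN_iff _ _ chk_ne i hi) j hj
    rw [h2] at h3
    simpa [nbq] using h3
  refine ⟨v, ?_, inj, ?_⟩
  · have hb : Function.Bijective (fun i : Fin 63 => v i) := by
      rw [Fintype.bijective_iff_injective_and_card]
      exact ⟨fun i j hij => Fin.ext (inj i i.2 j j.2 hij), by rw [D.card63]; simp⟩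
    intro x
    obtain ⟨i, hi⟩ := hb.2 x
    exact ⟨i, i.2, hi⟩
  · intro i hi j hj
    have hc := allN_iff _ _ (allN_iff _ _ chk_ad i hi) j hj
    have hc2 := beq_iff_eq.1 hc
    rw [hc2, ← czero (k := D.k) 10009 _ (men_lt _ hp _ _), men_ev 10009 hp]
    constructor
    · intro hh; have := D.h2 _ _ _ hh; rwa [hv i hi, hv j hj] at this
    · intro hh; exact D.ad (g i hi) (g j hj) hh (hv i hi) (hv j hj)
end Hsec

section Irr
theorem cop1 (u v a b : List Int) (h : alld 5 (ladd (ladd (lmul u a) (lmul v b)) [-1]) = true) :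
    IsCoprime (ev1 a (Polynomial.X : Polynomial (ZMod 5))) (ev1 b Polynomial.X) := by
  have := alld_ev (R := Polynomial (ZMod 5)) 5 _ h Polynomial.X
  refine ⟨ev1 u Polynomial.X, ev1 v Polynomial.X, ?_⟩
  rw [ev1_ladd, ev1_ladd, ev1_lmul, ev1_lmul] at this
  simp only [ev1, Int.cast_neg, Int.cast_one, mul_zero, add_zero] at this
  linear_combination this
theorem ne5 : (-136048896 : ZMod 5) ≠ 0 := by decide
theorem cop5 : IsCoprime (ev1 rL (Polynomial.X : Polynomial (ZMod 5))) (ev1 qL Polynomial.X) := by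
  have : Fact (Nat.Prime 5) := ⟨by norm_num⟩
  rw [rL_fac, qL_fac]
  refine IsCoprime.mul_left ?_ (IsCoprime.pow_left ?_)
  · have e : (-136048896 : Polynomial (ZMod 5)) = Polynomial.C (-136048896 : ZMod 5) := by
      rw [Polynomial.C_neg]
      exact congrArg Neg.neg (map_ofNat (Polynomial.C : ZMod 5 →+* Polynomial (ZMod 5)) 136048896).symm
    have : IsUnit (-136048896 : Polynomial (ZMod 5)) := by
      rw [e, Polynomial.isUnit_C, isUnit_iff_ne_zero]
      exact ne5
    obtain ⟨b, hb⟩ := this.exists_left_inv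
    exact ⟨b, 0, by rw [zero_mul, add_zero]; exact hb⟩
  · refine IsCoprime.mul_right ?_ (IsCoprime.mul_right (IsCoprime.pow_right ?_) (IsCoprime.pow_right ?_))
    · exact cop1 [3, 3, 2] [0, 0, 0, 4, 1, 2, 2, 3] _ _ (by decide +kernel)
    · exact cop1 [2, 3, 4, 4, 1, 3] [4, 1, 3, 2, 3, 0, 3, 2] _ _ (by decide +kernel)
    · exact cop1 [4, 3, 4, 3, 0, 2, 2, 2, 4, 0, 2, 3] [3, 1, 4, 0, 2, 4, 3, 2] _ _ (by decide +kernel)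
theorem relp : IsRelPrime (ev1 rL (Polynomial.X : Polynomial ℤ)) (ev1 qL Polynomial.X) := by
  have : Fact (Nat.Prime 5) := ⟨by norm_num⟩
  intro d h1 h2
  have hu : IsUnit d.leadingCoeff := by
    have := Polynomial.leadingCoeff_dvd_leadingCoeff h2
    rw [qL_monic.1] at this
    exact isUnit_of_dvd_one this
  let f := Polynomial.mapRingHom (Int.castRingHom (ZMod 5))
  have k1 := map_dvd f h1
  have k2 := map_dvd f h2
  rw [map_ev1] at k1 k2
  have fX : f Polynomial.X = Polynomial.X := by simp [f]
  rw [fX] at k1 k2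
  have hd := cop5.isUnit_of_dvd' k1 k2
  have hn := Polynomial.natDegree_eq_zero_of_isUnit hd
  have hl : (Int.castRingHom (ZMod 5)) d.leadingCoeff ≠ 0 := (hu.map _).ne_zero
  have : d.natDegree = 0 := by
    rw [← Polynomial.natDegree_map_of_leadingCoeff_ne_zero _ hl]; exact hn
  rw [Polynomial.eq_C_of_natDegree_eq_zero this, Polynomial.isUnit_C]
  rwa [Polynomial.leadingCoeff, this] at hu
theorem irrZ : Irreducible (fX (Polynomial.X : Polynomial ℤ)) := by
  have key : Polynomial.Bivariate.swap (fX (Polynomial.X : Polynomial ℤ)) =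
      Polynomial.C (ev1 rL (Polynomial.X : Polynomial ℤ)) * Polynomial.X + Polynomial.C (ev1 qL Polynomial.X) := by
    unfold fX
    have h1 : ∀ l, Polynomial.Bivariate.swap (ev1 l (Polynomial.X : Polynomial (Polynomial ℤ))) =
        Polynomial.C (ev1 l (Polynomial.X : Polynomial ℤ)) := fun l => by
      have e1 := map_ev1 (Polynomial.Bivariate.swap (R := ℤ) : Polynomial (Polynomial ℤ) →+* Polynomial (Polynomial ℤ)) l
        Polynomial.X
      have e2 := map_ev1 (Polynomial.C : Polynomial ℤ →+* Polynomial (Polynomial ℤ)) l Polynomial.X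
      rw [e2]
      refine Eq.trans e1 ?_
      congr 1
      exact Polynomial.Bivariate.swap_Y
    rw [map_add, map_mul, h1, h1, Polynomial.Bivariate.swap_X]
    ring
  rw [← MulEquiv.irreducible_iff (Polynomial.Bivariate.swap (R := ℤ)), key]
  refine Polynomial.irreducible_C_mul_X_add_C ?_ relp
  intro h0
  have := relp (d := ev1 qL Polynomial.X) (by rw [h0]; exact dvd_zero _) dvd_rfl
  have h2 := Polynomial.natDegree_eq_zero_of_isUnit this
  rw [qL_monic.2] at h2
  omega
theorem irrK : Irreducible (fX ww) := by
  have h : Irreducible (fX RX) := irrZ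
  rw [(fX_monic RX).1.irreducible_iff_irreducible_map_fraction_map (K := RatFunc ℚ), fX_map, RRmap_X] at h
  exact h
end Irr
section Fin
variable {L : Type} [Field L] [Algebra (RatFunc ℚ) L]
theorem vt_tr [FiniteDimensional (RatFunc ℚ) L] [IsGalois (RatFunc ℚ) L] (a b : Vt L) :
    ∃ g : L ≃ₐ[RatFunc ℚ] L, g • a = b := by
  have h : ∀ x : Vt L, minpoly (RatFunc ℚ) x.1 = fX ww := fun x => by
    refine (minpoly.eq_of_irreducible_of_monic irrK ?_ (fX_monic ww).1).symm
    have h1 : ((fX ww).map (algebraMap (RatFunc ℚ) L)).eval x.1 = 0 :=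
      (congrArg (Polynomial.eval x.1) (fX_map (algebraMap (RatFunc ℚ) L) ww)).trans x.2
    rwa [Polynomial.eval_map_algebraMap] at h1
  have hc : IsConjRoot (RatFunc ℚ) a.1 b.1 := by
    rw [IsConjRoot, h, h]
  obtain ⟨σ, hσ⟩ := hc.exists_algEquiv
  refine ⟨σ.symm, Subtype.ext ?_⟩
  rw [smul_val, ← hσ]
  simp
theorem final [FiniteDimensional (RatFunc ℚ) L] [IsGalois (RatFunc ℚ) L] [Fintype (Vt L)]
    (hp : fX (algebraMap (RatFunc ℚ) L ww) = ∏ v : Vt L, (Polynomial.X - Polynomial.C v.1))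
    (hF : ∀ u : L ≃ₐ[RatFunc ℚ] L, (∀ x : Vt L, u • x = x) → u = 1) :
    Nat.card (L ≃ₐ[RatFunc ℚ] L) = 12096 := by
  have : Fact (Nat.Prime 11) := ⟨by norm_num⟩
  have : Fact (Nat.Prime 37) := ⟨by norm_num⟩
  have : Fact (Nat.Prime 89) := ⟨by norm_num⟩
  have : Fact (Nat.Prime 10009) := ⟨by norm_num⟩
  obtain ⟨D1⟩ := exPl hp 11 5
  obtain ⟨D2⟩ := exPl hp 37 9
  obtain ⟨D3⟩ := exPl hp 89 33
  obtain ⟨D4⟩ := exPl hp 10009 4504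
  obtain ⟨v, hv⟩ := exLb D4
  exact count (ad : Vt L → Vt L → Prop) ad_symm hv.irr hv.c6 (by rw [Nat.card_eq_fintype_card, D1.card63])
    hv.li ad_smul vt_tr (wd3 D1) (wsw D2) (wln D3) (hv.rg ad_smul hF)
theorem galF (F : Polynomial (RatFunc ℚ)) (c : RatFunc ℚ) (hc : c ≠ 0) (hF : F = Polynomial.C c * fX ww) :
    F.natDegree = 63 ∧ Irreducible F ∧ Nat.card F.Gal = 12096 := by
  have hu : IsUnit (Polynomial.C c) := Polynomial.isUnit_C.2 hc.isUnit
  have hirr : Irreducible F := by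
    rw [hF, irreducible_isUnit_mul hu]; exact irrK
  have hsep : F.Separable := hirr.separable
  have hg : IsGalois (RatFunc ℚ) F.SplittingField := IsGalois.of_separable_splitting_field hsep
  have hmap : F.map (algebraMap (RatFunc ℚ) F.SplittingField) =
      Polynomial.C (algebraMap (RatFunc ℚ) F.SplittingField c) * fX (algebraMap (RatFunc ℚ) F.SplittingField ww) := by
    have e := congrArg (Polynomial.map (algebraMap (RatFunc ℚ) F.SplittingField)) hF
    rw [Polynomial.map_mul, Polynomial.map_C, fX_map] at e
    exact e
  have hc' : algebraMap (RatFunc ℚ) F.SplittingField c ≠ 0 := by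
    rw [Ne, map_eq_zero]; exact hc
  set f := fX (algebraMap (RatFunc ℚ) F.SplittingField ww) with hf
  have hm : f.Monic := (fX_monic _).1
  have hsp : f.Splits := by
    have := Polynomial.SplittingField.splits F
    rw [hmap] at this
    refine this.of_dvd ?_ (dvd_mul_left _ _)
    exact mul_ne_zero (by simpa using hc') hm.ne_zero
  have hsepf : f.Separable := by
    have := hsep.map (f := algebraMap (RatFunc ℚ) F.SplittingField)
    rw [hmap] at this
    exact this.of_mul_right
  classical
  have hnd : f.roots.Nodup := Polynomial.nodup_roots hsepf
  have hprod : f = ∏ x ∈ f.roots.toFinset, (Polynomial.X - Polynomial.C x) := by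
    conv_lhs => rw [hsp.eq_prod_roots_of_monic hm]
    rw [Finset.prod_eq_multiset_prod, Multiset.toFinset_val, Multiset.dedup_eq_self.2 hnd]
  have hmem : ∀ x, x ∈ f.roots.toFinset ↔ f.eval x = 0 := fun x => by
    rw [Multiset.mem_toFinset, Polynomial.mem_roots hm.ne_zero, Polynomial.IsRoot.def]
  let ft : Fintype (Vt F.SplittingField) := Fintype.subtype f.roots.toFinset hmem
  have hp : f = ∏ v : Vt F.SplittingField, (Polynomial.X - Polynomial.C v.1) := by
    conv_lhs => rw [hprod]
    exact (Finset.prod_subtype f.roots.toFinset hmem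
      (fun x => (Polynomial.X - Polynomial.C x : Polynomial F.SplittingField)))
  refine ⟨?_, hirr, final hp ?_⟩
  · rw [hF, Polynomial.natDegree_C_mul hc, (fX_monic ww).2]
  · intro u hu
    apply Polynomial.Gal.ext
    intro x hx
    have hx' : f.eval x = 0 := by
      have h1 : (F.map (algebraMap (RatFunc ℚ) F.SplittingField)).eval x = 0 := by
        rw [Polynomial.eval_map_algebraMap]
        exact Polynomial.aeval_eq_zero_of_mem_rootSet hx
      rw [hmap, Polynomial.eval_mul, Polynomial.eval_C] at h1
      exact (mul_eq_zero.1 h1).resolve_left hc'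
    have := congrArg Subtype.val (hu ⟨x, hx'⟩)
    exact this
end Fin

end Bel

theorem q_list {A : Type} [CommRing A] (x : A) : Bel.ev1 Bel.qL x =
    (x ^ 3 + 30 * x ^ 2 + 27 * x + 6) * (x ^ 6 + 18 * x ^ 5 + 93 * x ^ 4 + 169 * x ^ 3 + 144 *
    x ^ 2 - 75 * x - 62) ^ 2 * (x ^ 12 + 15 * x ^ 11 - 15 * x ^ 10 - 332 * x ^ 9 - 2766 * x ^
    8 + 4002 * x ^ 7 + 2002 * x ^ 6 - 2496 * x ^ 5 - 1215 * x ^ 4 + 1047 * x ^ 3 + 117 * x ^ 2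
    - 108 * x + 36) ^ 4 := by
  have h1 : Bel.ev1 Bel.q1L x = x ^ 3 + 30 * x ^ 2 + 27 * x + 6 := by
    simp only [Bel.q1L, Bel.ev1]; push_cast; ring
  have h2 : Bel.ev1 Bel.q2L x = x ^ 6 + 18 * x ^ 5 + 93 * x ^ 4 + 169 * x ^ 3 + 144 *
      x ^ 2 - 75 * x - 62 := by
    simp only [Bel.q2L, Bel.ev1]; push_cast; ring
  have h3 : Bel.ev1 Bel.q3L x = x ^ 12 + 15 * x ^ 11 - 15 * x ^ 10 - 332 * x ^ 9 - 2766 * x ^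
      8 + 4002 * x ^ 7 + 2002 * x ^ 6 - 2496 * x ^ 5 - 1215 * x ^ 4 + 1047 * x ^ 3 + 117 * x ^ 2
      - 108 * x + 36 := by
    simp only [Bel.q3L, Bel.ev1]; push_cast; ring
  rw [Bel.qL_fac, h1, h2, h3]
  simp only [mul_assoc]
theorem r_list {A : Type} [CommRing A] (x : A) : Bel.ev1 Bel.rL x =
    -136048896 * (x ^ 2 - x + 2) ^ 7 * (x ^ 3 + 2 * x ^ 2 - x - 1) ^ 7 * (x ^ 3 + 9 * x ^ 2 -
    x - 1) ^ 7 := by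
  have h : Bel.ev1 Bel.gL x = (x ^ 2 - x + 2) * ((x ^ 3 + 2 * x ^ 2 - x - 1) * (x ^ 3 + 9 * x ^ 2 -
      x - 1)) := by
    rw [Bel.gL, Bel.ev1_lmul, Bel.ev1_lmul]
    congr 1
    · simp only [Bel.ev1]; push_cast; ring
    · congr 1 <;> (simp only [Bel.ev1]; push_cast; ring)
  rw [Bel.rL_fac, h, mul_pow, mul_pow]
  simp only [mul_assoc]
theorem q_map : q.map (algebraMap ℚ (RatFunc ℚ)) = Bel.ev1 Bel.qL Polynomial.X := by
  have e : q = Bel.ev1 Bel.qL Polynomial.X := (q_list _).symm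
  rw [e]
  have := Bel.map_ev1 (Polynomial.mapRingHom (algebraMap ℚ (RatFunc ℚ))) Bel.qL Polynomial.X
  rw [Polynomial.coe_mapRingHom, Polynomial.map_X] at this
  exact this
theorem r_map : r.map (algebraMap ℚ (RatFunc ℚ)) = Bel.ev1 Bel.rL Polynomial.X := by
  have e : r = Bel.ev1 Bel.rL Polynomial.X := (r_list _).symm
  rw [e]
  have := Bel.map_ev1 (Polynomial.mapRingHom (algebraMap ℚ (RatFunc ℚ))) Bel.rL Polynomial.X
  rw [Polynomial.coe_mapRingHom, Polynomial.map_X] at this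
  exact this
theorem F_eq : F = Polynomial.C (1 - RatFunc.X) * Bel.fX Bel.ww := by
  have hw : (Polynomial.C (1 - RatFunc.X) : Polynomial (RatFunc ℚ)) * Polynomial.C Bel.ww = 1 := by
    rw [← Polynomial.C_mul, Bel.ww, mul_inv_cancel₀ Bel.one_sub_ne, Polynomial.C_1]
  unfold F p Bel.fX
  rw [Polynomial.map_add, q_map, r_map, mul_add, ← mul_assoc, hw, Polynomial.C_sub, Polynomial.C_1]
  ring

theorem belyi_deg63_stmt15 :
    F.natDegree = 63 ∧ Irreducible F ∧ Nat.card F.Gal = 12096 :=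
  Bel.galF F (1 - RatFunc.X) Bel.one_sub_ne F_eq
end
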